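/- There exists an infinite-dimensional Banach space X with a Schauder basis such that the algebra L(X) of bounded operators on X decomposes as a topological direct sum V ⊕ SS(X), where V is an infinite-dimensional reflexive Banach space with an unconditional basis (I_s)_{s=0}^∞ consisting of projections (I_0 the identity of X, and each I_s for s≥1 a norm-one projection onto an infinite-dimensional subspace of X spanned by a subsequence of the basis); moreover V, as a Banach algebra, is the unitisation of the closed linear span of {I_s : s≥1} endowed with pointwise multiplication (I_s I_t = δ_{st} I_s for s,t≥1). -/

import Mathlib

noncomputable section

/-- A bounded operator is strictly singular if its restriction to every
infinite-dimensional closed subspace fails to be an isomorphism onto its image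
(equivalently, is not bounded below there). -/
def StrictlySingular {E : Type*} [NormedAddCommGroup E] [NormedSpace ℝ E]
    (T : E →L[ℝ] E) : Prop :=
  ∀ U : Submodule ℝ E, IsClosed (U : Set E) → ¬ FiniteDimensional ℝ U →
    ¬ ∃ c : ℝ, 0 < c ∧ ∀ x ∈ U, c * ‖x‖ ≤ ‖T x‖

/-!
The space is of mixed Tsirelson type: its norm is the supremum over a set of functionals that
contains the averages of successive functionals with even weights, and those averages with odd
weights in which the weight of each term is coded by the preceding terms. The latter may be
multiplied by `β ∘ label` with `β` in the unit ball of `ℓ²`, and dually this gives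
`‖∑ a_s I_s‖ ≤ 2 ‖a‖₂`, where `I_s` projects onto the basis vectors of label `s`.

For an arbitrary operator `T`, consider the limits `(y, ν)` of `((f (I_s x))_s, f (T x))` for
norming functionals `f` and vectors `x` far out on which only functionals of large weight act
substantially, the first component converging weakly in `ℓ²`. Averages of such `x` along coded
sequences have norm governed by `‖y‖`, since `β ∘ label` sees each term as `⟪β, y⟫`, while the coded
average of the `f` takes on their images under `T` a value governed by `ν`. Hence `|ν| ≤ ‖T‖ ‖y‖`,
so that `ν = ⟪a, y⟫` for some `a` with `‖a‖ ≤ ‖T‖`, and `T - ∑ a_s I_s` is small on all such `x`.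
Since every infinite-dimensional subspace comes close to such vectors of norm at least one, this
difference is strictly singular. Conversely a strictly singular operator has `a = 0`, because
`∑ a_s I_s` acts on the span of the basis vectors of label `s` as the scalar `a_0 + a_s`. So
`a ↦ ∑ a_s I_s` is an isomorphism of `ℓ²` onto a complement of the strictly singular operators.
-/

namespace MixedTsirelson

open Filter Topology
open scoped ENNReal RealInnerProductSpace

/-! ### Norming functionals -/

/-- The weights `m_j` of the mixed Tsirelson norm. -/
def weight (j : ℕ) : ℕ := 2 ^ 2 ^ j

/-- The maximal numbers `n_j` of successive functionals averaged with weight `m_j`; they grow so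
fast that averaging `n_j` vectors swamps all functionals of index below `j`. -/
def arity : ℕ → ℕ
  | 0 => 16
  | j + 1 => weight (j + 1) ^ 4 * (2 * arity j) ^ 2 ^ (j + 3)

lemma weight_succ (j : ℕ) : weight (j + 1) = weight j ^ 2 := by
  rw [weight, weight, ← pow_mul, pow_succ]

lemma two_le_weight (j : ℕ) : 2 ≤ weight j :=
  Nat.le_self_pow (by positivity) 2

lemma weight_pos (j : ℕ) : 0 < weight j := by
  rw [weight]; positivity

lemma cast_weight_pos (j : ℕ) : (0 : ℝ) < weight j := Nat.cast_pos.2 (weight_pos j)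

lemma weight_mono : Monotone weight := fun _ _ h =>
  Nat.pow_le_pow_right two_pos (Nat.pow_le_pow_right two_pos h)

lemma le_weight (j : ℕ) : j ≤ weight j :=
  Nat.lt_two_pow_self.le.trans Nat.lt_two_pow_self.le

lemma inv_weight_anti {i j : ℕ} (h : i ≤ j) : (weight j : ℝ)⁻¹ ≤ (weight i : ℝ)⁻¹ :=
  inv_anti₀ (cast_weight_pos i) (Nat.cast_le.2 (weight_mono h))

lemma inv_weight_le_half (j : ℕ) : (weight j : ℝ)⁻¹ ≤ 1 / 2 := by
  rw [one_div]
  exact inv_anti₀ two_pos (by exact_mod_cast two_le_weight j)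

lemma half_pow_two_pow_succ (j : ℕ) : (1 / 2 : ℝ) ^ 2 ^ (j + 1) = (weight j : ℝ)⁻¹ ^ 2 := by
  rw [weight, Nat.cast_pow, Nat.cast_ofNat, ← inv_pow, ← pow_mul, ← pow_succ, one_div]

lemma arity_pos (j : ℕ) : 0 < arity j := by
  induction j with
  | zero => simp [arity]
  | succ j ih =>
    have := weight_pos (j + 1)
    rw [arity]; positivity

lemma cast_arity_pos (j : ℕ) : (0 : ℝ) < arity j := Nat.cast_pos.2 (arity_pos j)

lemma one_le_cast_arity (j : ℕ) : (1 : ℝ) ≤ arity j := Nat.one_le_cast.2 (arity_pos j)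

lemma arity_mono : Monotone arity := by
  refine monotone_nat_of_le_succ fun j => ?_
  have hj := arity_pos j
  calc arity j ≤ 2 * arity j := by omega
    _ ≤ (2 * arity j) ^ 2 ^ (j + 3) := Nat.le_self_pow (by positivity) _
    _ ≤ arity (j + 1) := Nat.le_mul_of_pos_left _ (pow_pos (weight_pos _) 4)

lemma weight_sq_le_arity (j : ℕ) : weight j ^ 2 ≤ arity j := by
  cases j with
  | zero => simp [weight, arity]
  | succ j =>
    have hj := arity_pos j
    calc weight (j + 1) ^ 2 ≤ weight (j + 1) ^ 4 :=
          Nat.pow_le_pow_right (weight_pos _) (by norm_num)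
      _ ≤ arity (j + 1) := Nat.le_mul_of_pos_right _ (by positivity)

lemma two_le_arity (j : ℕ) : 2 ≤ arity j :=
  (show 2 ≤ 16 by norm_num).trans (arity_mono (Nat.zero_le j))

lemma two_mul_arity_pow_le (j : ℕ) :
    (2 * (arity j : ℝ)) ^ 2 ^ (j + 2) ≤ arity (j + 1) * (weight (j + 1) : ℝ)⁻¹ ^ 4 / arity j := by
  have hn := one_le_cast_arity j
  have hm := cast_weight_pos (j + 1)
  rw [inv_pow, ← div_eq_mul_inv, le_div_iff₀ (by linarith), le_div_iff₀ (by positivity)]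
  calc (2 * (arity j : ℝ)) ^ 2 ^ (j + 2) * arity j * (weight (j + 1) : ℝ) ^ 4
      ≤ (2 * (arity j : ℝ)) ^ 2 ^ (j + 2) * (2 * (arity j : ℝ)) ^ 2 ^ (j + 2) *
          (weight (j + 1) : ℝ) ^ 4 := by
        gcongr
        calc (arity j : ℝ) ≤ 2 * arity j := by linarith
          _ ≤ (2 * (arity j : ℝ)) ^ 2 ^ (j + 2) := le_self_pow₀ (by linarith) (by positivity)
    _ = ((arity (j + 1) : ℕ) : ℝ) := by rw [arity]; push_cast; ring

lemma arity_le_arity_succ_mul (j : ℕ) :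
    (arity j : ℝ) ≤ arity (j + 1) * (weight (j + 1) : ℝ)⁻¹ ^ 4 := by
  have hpow : (1 : ℝ) ≤ (2 * (arity j : ℝ)) ^ 2 ^ (j + 2) :=
    one_le_pow₀ (by linarith [one_le_cast_arity j])
  have h := hpow.trans (two_mul_arity_pow_le j)
  rwa [le_div_iff₀ (cast_arity_pos j), one_mul] at h

section Sums

variable {ι : Type*} {s : Finset ι} {F : ι → ℝ} {b c : ℝ}

lemma abs_sum_le_card_mul (h : ∀ i ∈ s, |F i| ≤ c) : |∑ i ∈ s, F i| ≤ s.card * c :=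
  (Finset.abs_sum_le_sum_abs _ _).trans <|
    (Finset.sum_le_card_nsmul _ _ _ h).trans_eq (nsmul_eq_mul _ _)

lemma abs_sum_le_of_card_exceptional_le {m : ℕ} (hb : 0 ≤ b) (hc : 0 ≤ c)
    (hF : ∀ i ∈ s, |F i| ≤ c) (hm : (s.filter fun i => b < |F i|).card ≤ m) :
    |∑ i ∈ s, F i| ≤ s.card * b + m * c := by
  calc |∑ i ∈ s, F i| ≤ ∑ i ∈ s, |F i| := Finset.abs_sum_le_sum_abs _ _
    _ ≤ ∑ i ∈ s, (b + if b < |F i| then c else 0) := by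
        refine Finset.sum_le_sum fun i hi => ?_
        split_ifs with h
        · linarith [hF i hi]
        · simpa using h
    _ = s.card * b + (s.filter fun i => b < |F i|).card * c := by
        rw [Finset.sum_add_distrib, ← Finset.sum_filter]
        simp only [Finset.sum_const, nsmul_eq_mul]
    _ ≤ s.card * b + m * c := by gcongr

lemma card_le_one_of_forall_not_lt {α : Type*} [LinearOrder α] {t : Finset α}
    (h : ∀ a ∈ t, ∀ b ∈ t, ¬a < b) : t.card ≤ 1 :=
  Finset.card_le_one.2 fun a ha b hb =>
    le_antisymm (not_lt.1 (h b hb a ha)) (not_lt.1 (h a ha b hb))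

end Sums

/-- Functionals on finitely supported sequences. Their coefficients are rational so that there are
only countably many of them, which is what allows `coding` to be injective. -/
abbrev Functional := ℕ →₀ ℚ

/-- Finitely supported vectors, a dense subspace of the space `X`. -/
abbrev FinVec := ℕ →₀ ℝ

/-- The supports of `f r`, `r ∈ s`, follow one another on the line. -/
def IsSuccessiveOn {R : Type*} [Zero R] (s : Set ℕ) (f : ℕ → ℕ →₀ R) : Prop :=
  ∀ r ∈ s, ∀ r' ∈ s, r < r' → ∀ k l, f r k ≠ 0 → f r' l ≠ 0 → k < l

lemma IsSuccessiveOn.mono {R : Type*} [Zero R] {s t : Set ℕ} {f : ℕ → ℕ →₀ R}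
    (h : IsSuccessiveOn t f) (hst : s ⊆ t) : IsSuccessiveOn s f :=
  fun r hr r' hr' => h r (hst hr) r' (hst hr')

lemma IsSuccessiveOn.smul {R : Type*} [Semiring R] {s : Set ℕ} {f : ℕ → ℕ →₀ R}
    (h : IsSuccessiveOn s f) (μ : ℕ → R) : IsSuccessiveOn s fun r => μ • f r :=
  fun r hr r' hr' hlt k l hk hl =>
    h r hr r' hr' hlt k l (right_ne_zero_of_mul hk) (right_ne_zero_of_mul hl)

lemma IsSuccessiveOn.eq_of_ne_zero {R : Type*} [Zero R] {s : Set ℕ} {f : ℕ → ℕ →₀ R}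
    (h : IsSuccessiveOn s f) {r r' n : ℕ} (hr : r ∈ s) (hr' : r' ∈ s) (hn : f r n ≠ 0)
    (hn' : f r' n ≠ 0) : r = r' :=
  le_antisymm (not_lt.1 fun hlt => (h r' hr' r hr hlt n n hn' hn).false)
    (not_lt.1 fun hlt => (h r hr r' hr' hlt n n hn hn').false)

lemma IsSuccessiveOn.abs_sum_apply_le {s : Finset ℕ} {f : ℕ → Functional}
    (h : IsSuccessiveOn s f) {n : ℕ} {c : ℚ} (hc : 0 ≤ c) (hf : ∀ r ∈ s, |f r n| ≤ c) :
    |∑ r ∈ s, f r n| ≤ c := by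
  by_cases hex : ∃ r ∈ s, f r n ≠ 0
  · obtain ⟨r, hr, hrn⟩ := hex
    rw [Finset.sum_eq_single_of_mem r hr fun r' hr' hne =>
      not_not.1 fun hn' => hne (h.eq_of_ne_zero hr' hr hn' hrn)]
    exact hf r hr
  · push Not at hex
    rwa [Finset.sum_eq_zero hex, abs_zero]

/-- The label in `{1, 2, …}` of a basis vector; every label is taken infinitely often, and `I_s`
is the projection onto the span of the basis vectors labelled `s`. -/
def label (n : ℕ) : ℕ := (Nat.unpair n).1 + 1

lemma one_le_label (n : ℕ) : 1 ≤ label n := Nat.le_add_left _ _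

/-- The sequences `β` for which `β ∘ label` may multiply a dependent sum: constants, and the
unit ball of `ℓ²`. -/
def IsLabelMultiplier (β : ℕ → ℚ) : Prop :=
  (∃ c : ℚ, |c| ≤ 1 ∧ β = Function.const ℕ c) ∨ ∀ F : Finset ℕ, ∑ s ∈ F, β s ^ 2 ≤ 1

/-- Label multipliers restricted to an interval. -/
def IsMultiplier (μ : ℕ → ℚ) : Prop :=
  ∃ (a b : ℕ) (β : ℕ → ℚ), IsLabelMultiplier β ∧ μ = (Set.Ico a b).indicator (β ∘ label)

lemma isLabelMultiplier_one : IsLabelMultiplier 1 := Or.inl ⟨1, by simp, rfl⟩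

lemma IsLabelMultiplier.abs_le {β : ℕ → ℚ} (h : IsLabelMultiplier β) (s : ℕ) : |β s| ≤ 1 := by
  rcases h with ⟨c, hc, rfl⟩ | h
  · exact hc
  · simpa using h {s}

lemma IsLabelMultiplier.sum_mul_sq_le {β γ : ℕ → ℚ} (h : IsLabelMultiplier β)
    (hγ : ∀ F : Finset ℕ, ∑ s ∈ F, γ s ^ 2 ≤ 1) (F : Finset ℕ) :
    ∑ s ∈ F, (β s * γ s) ^ 2 ≤ 1 := by
  refine (Finset.sum_le_sum fun s _ => ?_).trans (hγ F)
  rw [mul_pow]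
  exact mul_le_of_le_one_left (sq_nonneg _) ((sq_le_one_iff_abs_le_one _).2 (h.abs_le s))

lemma IsLabelMultiplier.mul {β γ : ℕ → ℚ} (h : IsLabelMultiplier β) (h' : IsLabelMultiplier γ) :
    IsLabelMultiplier (β * γ) := by
  rcases h' with ⟨c', hc', rfl⟩ | hγ
  · rcases h with ⟨c, hc, rfl⟩ | hβ
    · exact Or.inl ⟨c * c', abs_mul c c' ▸ mul_le_one₀ hc (abs_nonneg _) hc', rfl⟩
    · rw [mul_comm]
      exact Or.inr (IsLabelMultiplier.sum_mul_sq_le (Or.inl ⟨c', hc', rfl⟩) hβ)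
  · exact Or.inr (h.sum_mul_sq_le hγ)

lemma IsMultiplier.abs_le {μ : ℕ → ℚ} (h : IsMultiplier μ) (n : ℕ) : |μ n| ≤ 1 := by
  obtain ⟨a, b, β, hβ, rfl⟩ := h
  rw [Set.indicator_apply]
  split_ifs
  · exact hβ.abs_le _
  · simp

lemma IsMultiplier.mul {μ ν : ℕ → ℚ} (h : IsMultiplier μ) (h' : IsMultiplier ν) :
    IsMultiplier (μ * ν) := by
  obtain ⟨a, b, β, hβ, rfl⟩ := h
  obtain ⟨a', b', β', hβ', rfl⟩ := h'
  refine ⟨max a a', min b b', _, hβ.mul hβ', ?_⟩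
  rw [← Set.Ico_inter_Ico]
  funext n
  exact (Set.inter_indicator_mul _ _ n).symm

lemma IsLabelMultiplier.isMultiplier {β : ℕ → ℚ} (h : IsLabelMultiplier β) (a b : ℕ) :
    IsMultiplier ((Set.Ico a b).indicator (β ∘ label)) :=
  ⟨a, b, β, h, rfl⟩

lemma isMultiplier_indicator_Ico (a b : ℕ) : IsMultiplier ((Set.Ico a b).indicator 1) :=
  isLabelMultiplier_one.isMultiplier a b

instance : Encodable (List (Functional × ℕ)) := Encodable.ofCountable _

/-- The coding function `σ`: it determines, from the part of a dependent sequence already built,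
the weight index of the next functional. Multiplying by `2` makes that index even. The second
component of an element of the list records how far out the next index has to be. -/
def coding (j : ℕ) (l : List (Functional × ℕ)) : ℕ :=
  2 * Nat.pair (Encodable.encode l) (arity j ^ 2 + (l.map Prod.snd).sum)

lemma coding_injective (j : ℕ) : Function.Injective (coding j) := fun _ _ h =>
  Encodable.encode_injective (Nat.pair_eq_pair.1 (Nat.eq_of_mul_eq_mul_left two_pos h)).1

lemma arity_sq_add_sum_le_coding (j : ℕ) (l : List (Functional × ℕ)) :
    arity j ^ 2 + (l.map Prod.snd).sum ≤ coding j l :=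
  (Nat.right_le_pair _ _).trans (Nat.le_mul_of_pos_left _ two_pos)

lemma arity_sq_le_weight_coding (j : ℕ) (l : List (Functional × ℕ)) :
    (arity j : ℝ) ^ 2 ≤ weight (coding j l) := by
  exact_mod_cast (Nat.le_add_right _ _).trans
    ((arity_sq_add_sum_le_coding j l).trans (le_weight _))

lemma lt_coding (j : ℕ) (l : List (Functional × ℕ)) : j < coding j l := by
  have hn := two_le_arity j
  calc j ≤ weight j := le_weight j
    _ ≤ weight j ^ 2 := Nat.le_self_pow two_ne_zero _
    _ ≤ arity j := weight_sq_le_arity j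
    _ < arity j ^ 2 := by nlinarith
    _ ≤ coding j l := (Nat.le_add_right _ _).trans (arity_sq_add_sum_le_coding j l)

/-- The first `r` entries of a sequence of functionals decorated with natural numbers. -/
def history (f : ℕ → Functional) (t : ℕ → ℕ) (r : ℕ) : List (Functional × ℕ) :=
  (List.range r).map fun i => (f i, t i)

lemma history_eq {f f' : ℕ → Functional} {t t' : ℕ → ℕ} {r r' : ℕ}
    (h : history f t r = history f' t' r') : r = r' ∧ ∀ i < r, f i = f' i := by
  obtain rfl : r = r' := by simpa [history] using congrArg List.length h
  exact ⟨rfl, fun i hi => congrArg Prod.fst (List.map_inj_left.1 h i (List.mem_range.2 hi))⟩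

lemma eq_of_coding_history_eq {j : ℕ} {f f' : ℕ → Functional} {t t' : ℕ → ℕ} {r r' : ℕ}
    (h : coding j (history f t r) = coding j (history f' t' r')) : r = r' :=
  (history_eq (coding_injective j h)).1

/-- The norming functionals, indexed by their weights: `HasWeight (some i) f` says that `f` is an
average with weight `m_i`, and `HasWeight none f` that `f` is a multiple of a coordinate. Averages
of odd index are only taken over sequences whose weights follow `coding`. -/
inductive HasWeight : Option ℕ → Functional → Prop
  | leaf (n : ℕ) (q : ℚ) (hq : |q| ≤ 1) : HasWeight none (Finsupp.single n q)
  | even (j d : ℕ) (f : ℕ → Functional) (w : ℕ → Option ℕ) (hd : d ≤ arity (2 * j))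
      (hf : ∀ i < d, HasWeight (w i) (f i)) (hs : IsSuccessiveOn (Finset.range d) f) :
      HasWeight (some (2 * j)) ((weight (2 * j) : ℚ)⁻¹ • ∑ i ∈ Finset.range d, f i)
  | odd (j d : ℕ) (f : ℕ → Functional) (t : ℕ → ℕ) (μ : ℕ → ℚ) (hμ : IsMultiplier μ)
      (hd : d ≤ arity (2 * j + 1))
      (hf : ∀ i < d, HasWeight (some (coding (2 * j + 1) (history f t i))) (f i))
      (hs : IsSuccessiveOn (Finset.range d) f) :
      HasWeight (some (2 * j + 1))
        ((weight (2 * j + 1) : ℚ)⁻¹ • μ • ∑ i ∈ Finset.range d, f i)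

/-- The norming set `W` of the space. -/
def IsNorming (f : Functional) : Prop := ∃ w, HasWeight w f

lemma HasWeight.isNorming {w : Option ℕ} {f : Functional} (h : HasWeight w f) : IsNorming f :=
  ⟨w, h⟩

lemma isNorming_single (n : ℕ) {q : ℚ} (hq : |q| ≤ 1) : IsNorming (Finsupp.single n q) :=
  (HasWeight.leaf n q hq).isNorming

lemma isNorming_zero : IsNorming 0 := by
  simpa using isNorming_single 0 (q := 0) (by simp)

lemma HasWeight.exists_eq_single {f : Functional} (h : HasWeight none f) :
    ∃ n q, f = Finsupp.single n q := by
  generalize hw : (none : Option ℕ) = w at h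
  cases h with
  | leaf n q => exact ⟨n, q, rfl⟩
  | even => cases hw
  | odd => cases hw

lemma HasWeight.exists_eq_sum_of_odd {p : ℕ} {f : Functional}
    (h : HasWeight (some (2 * p + 1)) f) :
    ∃ d ≤ arity (2 * p + 1), ∃ (g : ℕ → Functional) (t : ℕ → ℕ) (μ : ℕ → ℚ), IsMultiplier μ ∧
      (∀ i < d, HasWeight (some (coding (2 * p + 1) (history g t i))) (g i)) ∧
      f = (weight (2 * p + 1) : ℚ)⁻¹ • μ • ∑ i ∈ Finset.range d, g i := by
  generalize hw : some (2 * p + 1) = w at h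
  cases h with
  | leaf => cases hw
  | even => simp at hw; omega
  | odd j d g t μ hμ hd hg =>
    obtain rfl : p = j := by simpa using hw
    exact ⟨d, hd, g, t, μ, hμ, hg, rfl⟩

lemma pointwise_smul_single (μ : ℕ → ℚ) (n : ℕ) (q : ℚ) :
    μ • (Finsupp.single n q : Functional) = Finsupp.single n (μ n * q) := by
  ext k
  by_cases hk : n = k
  · subst hk; simp
  · simp [hk]

lemma pointwise_smul_rat_smul (μ : ℕ → ℚ) (c : ℚ) (f : Functional) : μ • c • f = c • μ • f := by
  ext n; simp [mul_left_comm]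

lemma HasWeight.smul {w : Option ℕ} {f : Functional} (h : HasWeight w f) {μ : ℕ → ℚ}
    (hμ : IsMultiplier μ) : HasWeight w (μ • f) := by
  induction h with
  | leaf n q hq =>
    rw [pointwise_smul_single]
    exact .leaf _ _ (abs_mul (μ n) q ▸ mul_le_one₀ (hμ.abs_le n) (abs_nonneg _) hq)
  | even j d f w hd hf hs ih =>
    rw [pointwise_smul_rat_smul, Finset.smul_sum]
    exact .even j d _ w hd ih (hs.smul μ)
  | odd j d f t ν hν hd hf hs _ =>
    rw [pointwise_smul_rat_smul, smul_smul]
    exact .odd j d f t _ (hμ.mul hν) hd hf hs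

lemma IsNorming.smul {f : Functional} (h : IsNorming f) {μ : ℕ → ℚ} (hμ : IsMultiplier μ) :
    IsNorming (μ • f) := by
  obtain ⟨w, h⟩ := h
  exact (h.smul hμ).isNorming

lemma HasWeight.exists_eq_sum {i : ℕ} {f : Functional} (h : HasWeight (some i) f) :
    ∃ d ≤ arity i, ∃ g : ℕ → Functional, (∀ r < d, IsNorming (g r)) ∧
      IsSuccessiveOn (Finset.range d) g ∧
      f = (weight i : ℚ)⁻¹ • ∑ r ∈ Finset.range d, g r := by
  cases h with
  | even j d f w hd hf hs => exact ⟨d, hd, f, fun r hr => (hf r hr).isNorming, hs, rfl⟩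
  | odd j d f t μ hμ hd hf hs =>
    exact ⟨d, hd, _, fun r hr => ((hf r hr).smul hμ).isNorming, hs.smul μ, by rw [Finset.smul_sum]⟩

lemma IsSuccessiveOn.abs_average_apply_le {d : ℕ} {g : ℕ → Functional}
    (hs : IsSuccessiveOn (Finset.range d) g) (i : ℕ) {n : ℕ} (hg : ∀ r < d, |g r n| ≤ 1) :
    |((weight i : ℚ)⁻¹ • ∑ r ∈ Finset.range d, g r) n| ≤ (weight i : ℚ)⁻¹ := by
  rw [Finsupp.smul_apply, Finsupp.finsetSum_apply, smul_eq_mul, abs_mul,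
    abs_of_nonneg (by positivity)]
  exact mul_le_of_le_one_right (by positivity)
    (hs.abs_sum_apply_le zero_le_one fun r hr => hg r (Finset.mem_range.1 hr))

lemma inv_weight_le_one (i : ℕ) : (weight i : ℚ)⁻¹ ≤ 1 :=
  inv_le_one_of_one_le₀ (Nat.one_le_cast.2 (weight_pos i))

lemma IsNorming.abs_apply_le {f : Functional} (h : IsNorming f) (n : ℕ) : |f n| ≤ 1 := by
  obtain ⟨w, h⟩ := h
  induction h with
  | leaf k q hq =>
    rw [Finsupp.single_apply]
    split_ifs
    · exact hq
    · simp
  | even j d f _ _ _ hs ih => exact (hs.abs_average_apply_le _ ih).trans (inv_weight_le_one _)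
  | odd j d f t ν hν hd hf hs ih =>
    rw [Finset.smul_sum]
    refine ((hs.smul ν).abs_average_apply_le _ fun r hr => ?_).trans (inv_weight_le_one _)
    rw [Finsupp.coe_pointwise_smul, Pi.smul_apply', smul_eq_mul, abs_mul]
    exact mul_le_one₀ (hν.abs_le n) (abs_nonneg _) (ih r hr)

lemma HasWeight.abs_apply_le {i : ℕ} {f : Functional} (h : HasWeight (some i) f) (n : ℕ) :
    |f n| ≤ (weight i : ℚ)⁻¹ := by
  obtain ⟨d, -, g, hg, hs, rfl⟩ := h.exists_eq_sum
  exact hs.abs_average_apply_le i fun r hr => (hg r hr).abs_apply_le n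

/-! ### Trees of functionals -/

/-- The duality between functionals and finitely supported vectors. -/
def pairing : Functional →ₗ[ℚ] FinVec →ₗ[ℝ] ℝ where
  toFun f := Finsupp.linearCombination ℝ fun n => (f n : ℝ)
  map_add' f g := by ext n; simp
  map_smul' c f := by ext n; simp [Rat.smul_def]

lemma pairing_apply (f : Functional) (v : FinVec) :
    pairing f v = ∑ n ∈ v.support, v n * f n := by
  simp [pairing, Finsupp.linearCombination_apply, Finsupp.sum]

lemma pairing_single (f : Functional) (n : ℕ) (c : ℝ) :
    pairing f (Finsupp.single n c) = c * f n := by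
  simp [pairing]

lemma pairing_smul_left (c : ℚ) (f : Functional) (v : FinVec) :
    pairing (c • f) v = c * pairing f v := by
  rw [map_smul, LinearMap.smul_apply, Rat.smul_def]

lemma pairing_sum_left {ι : Type*} (s : Finset ι) (f : ι → Functional) (v : FinVec) :
    pairing (∑ i ∈ s, f i) v = ∑ i ∈ s, pairing (f i) v := by
  rw [map_sum, LinearMap.sum_apply]

lemma pairing_eq_zero_of_disjoint {f : Functional} {v : FinVec}
    (h : Disjoint f.support v.support) : pairing f v = 0 := by
  rw [pairing_apply]
  refine Finset.sum_eq_zero fun n hn => ?_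
  rw [Finsupp.notMem_support_iff.1 (Finset.disjoint_right.1 h hn), Rat.cast_zero, mul_zero]

lemma pairing_congr_left {f g : Functional} {v : FinVec} (h : ∀ n, v n ≠ 0 → f n = g n) :
    pairing f v = pairing g v := by
  rw [pairing_apply, pairing_apply]
  exact Finset.sum_congr rfl fun n hn => by rw [h n (Finsupp.mem_support_iff.1 hn)]

section Splitting

variable {d : ℕ} {g : ℕ → Functional} {A : Finset ℕ} {x : ℕ → FinVec}

open Classical in
lemma card_filter_met_twice_le (hg : IsSuccessiveOn (Finset.range d) g)
    (hx : IsSuccessiveOn A x) :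
    (A.filter fun k => ∃ r r', r < r' ∧ r' < d ∧ ¬Disjoint (g r).support (x k).support ∧
      ¬Disjoint (g r').support (x k).support).card ≤ d := by
  set B := A.filter fun k => ∃ r r', r < r' ∧ r' < d ∧
    ¬Disjoint (g r).support (x k).support ∧ ¬Disjoint (g r').support (x k).support
  have hB : ∀ k ∈ B, ∃ r r', r < r' ∧ r' < d ∧ ¬Disjoint (g r).support (x k).support ∧
      ¬Disjoint (g r').support (x k).support := fun k hk => (Finset.mem_filter.1 hk).2
  choose! ρ ρ' hlt hd hρ hρ' using hB
  have hne : ∀ k ∈ B, ∀ l ∈ B, k < l → ρ k ≠ ρ l := fun k hk l hl hkl heq => by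
    obtain ⟨n, hgn, hxn⟩ := Finset.not_disjoint_iff.1 (hρ' k hk)
    obtain ⟨n', hgn', hxn'⟩ := Finset.not_disjoint_iff.1 (hρ l hl)
    rw [Finsupp.mem_support_iff] at hgn hxn hgn' hxn'
    rw [← heq] at hgn'
    have hlt' := hg _ (Finset.mem_coe.2 (Finset.mem_range.2 ((hlt k hk).trans (hd k hk)))) _
      (Finset.mem_coe.2 (Finset.mem_range.2 (hd k hk))) (hlt k hk) _ _ hgn' hgn
    exact hlt'.asymm
      (hx k (Finset.mem_filter.1 hk).1 l (Finset.mem_filter.1 hl).1 hkl _ _ hxn hxn')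
  rw [← Finset.card_range d]
  refine Finset.card_le_card_of_injOn ρ
    (fun k hk => Finset.mem_coe.2 (Finset.mem_range.2 ((hlt k hk).trans (hd k hk)))) ?_
  intro k hk l hl heq
  by_contra hkl
  rcases lt_or_gt_of_ne hkl with h | h
  · exact hne k hk l hl h heq
  · exact hne l hl k hk h heq.symm

/-- Up to at most `d` of the `x k`, each of which meets two of the functionals, a sum of successive
vectors splits into pieces seen by a single functional each. -/
lemma exists_split (hg : IsSuccessiveOn (Finset.range d) g) (hx : IsSuccessiveOn A x) :
    ∃ B ⊆ A, B.card ≤ d ∧ ∃ P : ℕ → Finset ℕ, (∀ r, P r ⊆ A) ∧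
      ∑ r ∈ Finset.range d, (P r).card ≤ A.card ∧
      ∑ k ∈ A \ B, pairing (∑ r ∈ Finset.range d, g r) (x k) =
        ∑ r ∈ Finset.range d, pairing (g r) (∑ k ∈ P r, x k) := by
  classical
  set B := A.filter fun k => ∃ r r', r < r' ∧ r' < d ∧
    ¬Disjoint (g r).support (x k).support ∧ ¬Disjoint (g r').support (x k).support
  let P : ℕ → Finset ℕ := fun r =>
    (A \ B).filter fun k => ¬Disjoint (g r).support (x k).support
  have hPA : ∀ r, P r ⊆ A := fun r => (Finset.filter_subset _ _).trans Finset.sdiff_subset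
  refine ⟨B, Finset.filter_subset _ _, card_filter_met_twice_le hg hx, P, hPA, ?_, ?_⟩
  · rw [← Finset.card_biUnion]
    · exact Finset.card_le_card (Finset.biUnion_subset.2 fun r _ => hPA r)
    · have hnot : ∀ r r' k, r < r' → r' < d → k ∈ P r → k ∉ P r' := by
        intro r r' k hlt hr' hk hk'
        rw [Finset.mem_filter, Finset.mem_sdiff] at hk hk'
        exact hk.1.2 (Finset.mem_filter.2 ⟨hk.1.1, r, r', hlt, hr', hk.2, hk'.2⟩)
      intro r hr r' hr' hne
      rw [Finset.mem_coe, Finset.mem_range] at hr hr'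
      refine Finset.disjoint_left.2 fun k hk hk' => ?_
      rcases lt_or_gt_of_ne hne with h | h
      · exact hnot r r' k h hr' hk hk'
      · exact hnot r' r k h hr hk' hk
  · simp only [pairing_sum_left]
    rw [Finset.sum_comm]
    refine Finset.sum_congr rfl fun r _ => ?_
    rw [map_sum, Finset.sum_filter]
    refine Finset.sum_congr rfl fun k _ => ?_
    split_ifs with h
    · exact pairing_eq_zero_of_disjoint h
    · rfl

end Splitting

section Tree

variable {A : Finset ℕ} {x : ℕ → FinVec} {f : Functional} {C : ℝ}

lemma HasWeight.abs_pairing_sum_le_of_none (hf : HasWeight none f) (hx : IsSuccessiveOn A x)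
    (hC : 0 ≤ C) (hterm : ∀ k ∈ A, |pairing f (x k)| ≤ C) : |pairing f (∑ k ∈ A, x k)| ≤ C := by
  obtain ⟨n, q, rfl⟩ := hf.exists_eq_single
  have hzero : ∀ k, x k n = 0 → pairing (Finsupp.single n q) (x k) = 0 := fun k hk =>
    pairing_eq_zero_of_disjoint (Finset.disjoint_of_subset_left Finsupp.support_single_subset
      (Finset.disjoint_singleton_left.2 (Finsupp.notMem_support_iff.2 hk)))
  rw [map_sum]
  by_cases hex : ∃ k ∈ A, x k n ≠ 0
  · obtain ⟨k, hk, hkn⟩ := hex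
    rw [Finset.sum_eq_single_of_mem k hk fun l hl hne =>
      hzero l (not_not.1 fun hln => hne (hx.eq_of_ne_zero hl hk hln hkn))]
    exact hterm k hk
  · push Not at hex
    rwa [Finset.sum_eq_zero fun k hk => hzero k (hex k hk), abs_zero]

lemma HasWeight.abs_pairing_sum_le {i ν : ℕ} {σ M : ℝ} (hf : HasWeight (some i) f)
    (hν : arity i ≤ ν) (hx : IsSuccessiveOn A x) (hC : 0 ≤ C) (hσ : 0 ≤ σ) (hM : 0 ≤ M)
    (hterm : ∀ k ∈ A, |pairing f (x k)| ≤ C)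
    (hsum : ∀ g, IsNorming g → ∀ B ⊆ A, |pairing g (∑ k ∈ B, x k)| ≤ C * (B.card * σ + M)) :
    |pairing f (∑ k ∈ A, x k)| ≤ C * ν + (weight i : ℝ)⁻¹ * (C * (A.card * σ + ν * M)) := by
  obtain ⟨d, hd, g, hg, hgs, rfl⟩ := hf.exists_eq_sum
  obtain ⟨B, hBA, hBd, P, hPA, hcard, hsplit⟩ := exists_split hgs hx
  have hdν : (d : ℝ) ≤ ν := by exact_mod_cast hd.trans hν
  have hBν : (B.card : ℝ) ≤ ν := by exact_mod_cast hBd.trans (hd.trans hν)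
  have hpieces : |∑ r ∈ Finset.range d, pairing (g r) (∑ k ∈ P r, x k)| ≤
      C * (A.card * σ + ν * M) := by
    calc |∑ r ∈ Finset.range d, pairing (g r) (∑ k ∈ P r, x k)|
        ≤ ∑ r ∈ Finset.range d, |pairing (g r) (∑ k ∈ P r, x k)| :=
          Finset.abs_sum_le_sum_abs _ _
      _ ≤ ∑ r ∈ Finset.range d, C * ((P r).card * σ + M) :=
          Finset.sum_le_sum fun r hr => hsum _ (hg r (Finset.mem_range.1 hr)) _ (hPA r)
      _ = C * ((∑ r ∈ Finset.range d, (P r).card : ℕ) * σ + d * M) := by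
          rw [← Finset.mul_sum, Finset.sum_add_distrib, ← Finset.sum_mul, Finset.sum_const,
            Finset.card_range, nsmul_eq_mul, Nat.cast_sum]
      _ ≤ C * (A.card * σ + ν * M) := by gcongr
  rw [map_sum, ← Finset.sum_sdiff hBA, add_comm]
  refine (abs_add_le _ _).trans (add_le_add ?_ ?_)
  · calc _ ≤ B.card * C := abs_sum_le_card_mul fun k hk => hterm k (hBA hk)
      _ ≤ C * ν := by rw [mul_comm]; gcongr
  · simp only [pairing_smul_left]
    rw [← Finset.mul_sum, hsplit, abs_mul, abs_of_nonneg (by positivity)]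
    push_cast
    gcongr

lemma IsNorming.abs_pairing_sum_le_tree {j ν : ℕ} {K : Finset ℕ} {τ L : ℝ} (hν0 : 1 ≤ ν)
    (hν : ∀ i < j, arity i ≤ ν) (hx : IsSuccessiveOn K x) (hC : 0 ≤ C) (hτ : 0 ≤ τ) (hL : 1 ≤ L)
    (hterm : ∀ f, IsNorming f → ∀ k ∈ K, |pairing f (x k)| ≤ C)
    (hsum : ∀ i, j ≤ i → ∀ f, HasWeight (some i) f → ∀ A ⊆ K,
      |pairing f (∑ k ∈ A, x k)| ≤ C * (A.card * τ + L))
    (t : ℕ) (hf : IsNorming f) (hA : A ⊆ K) :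
    |pairing f (∑ k ∈ A, x k)| ≤ C * (A.card * (τ + (1 / 2) ^ t) + L * (2 * ν) ^ t) := by
  have hν1 : (1 : ℝ) ≤ ν := Nat.one_le_cast.2 hν0
  have hpow (s : ℕ) : 1 ≤ L * (2 * (ν : ℝ)) ^ s :=
    one_le_mul_of_one_le_of_one_le hL (one_le_pow₀ (by linarith))
  induction t generalizing f A with
  | zero =>
    calc |pairing f (∑ k ∈ A, x k)| ≤ A.card * C := by
          rw [map_sum]
          exact abs_sum_le_card_mul fun k hk => hterm f hf k (hA hk)
      _ = C * (A.card * (0 + (1 / 2) ^ 0) + 0) := by ring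
      _ ≤ C * (A.card * (τ + (1 / 2) ^ 0) + L * (2 * ν) ^ 0) := by gcongr; positivity
  | succ t ih =>
    obtain ⟨_ | i, hf⟩ := hf
    · refine (hf.abs_pairing_sum_le_of_none (hx.mono (Finset.coe_subset.2 hA)) hC fun k hk =>
        hterm f hf.isNorming k (hA hk)).trans (le_mul_of_one_le_right hC ?_)
      exact (hpow _).trans (le_add_of_nonneg_left (by positivity))
    · rcases le_or_gt j i with hji | hij
      · refine (hsum i hji f hf A hA).trans ?_
        gcongr
        · exact le_add_of_nonneg_right (by positivity)
        · exact le_mul_of_one_le_right (by linarith) (one_le_pow₀ (by linarith))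
      · have hnode := hf.abs_pairing_sum_le (hν i hij) (hx.mono (Finset.coe_subset.2 hA)) hC
          (show 0 ≤ τ + (1 / 2) ^ t by positivity) (zero_le_one.trans (hpow t))
          (fun k hk => hterm f hf.isNorming k (hA hk))
          (fun g hg B hB => ih hg (hB.trans hA))
        have hνL : (ν : ℝ) ≤ ν * (L * (2 * ν) ^ t) :=
          le_mul_of_one_le_right (by linarith) (hpow t)
        calc |pairing f (∑ k ∈ A, x k)|
            ≤ C * (ν * (L * (2 * ν) ^ t)) +
              1 / 2 * (C * (A.card * (τ + (1 / 2) ^ t) + ν * (L * (2 * ν) ^ t))) := by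
              refine hnode.trans ?_
              gcongr
              exact inv_weight_le_half i
          _ = C * (A.card * (1 / 2 * τ + (1 / 2) ^ (t + 1)) +
              3 / 4 * (L * (2 * ν) ^ (t + 1))) := by ring
          _ ≤ C * (A.card * (τ + (1 / 2) ^ (t + 1)) + L * (2 * ν) ^ (t + 1)) := by
              have hpos := hpow (t + 1)
              refine mul_le_mul_of_nonneg_left (add_le_add ?_ (by linarith)) hC
              gcongr
              linarith

lemma IsNorming.abs_pairing_sum_le_of_arity {v : ℕ} {K : Finset ℕ} {τ L : ℝ}
    (hx : IsSuccessiveOn K x) (hC : 0 ≤ C) (hτ : 0 ≤ τ) (hL : 1 ≤ L)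
    (hterm : ∀ f, IsNorming f → ∀ k ∈ K, |pairing f (x k)| ≤ C)
    (hsum : ∀ i, v + 1 ≤ i → ∀ f, HasWeight (some i) f → ∀ A ⊆ K,
      |pairing f (∑ k ∈ A, x k)| ≤ C * (A.card * τ + L))
    (hf : IsNorming f) (hA : A ⊆ K) :
    |pairing f (∑ k ∈ A, x k)| ≤ C * (A.card * (τ + (weight (v + 1) : ℝ)⁻¹ ^ 2) +
      L * (arity (v + 1) * (weight (v + 1) : ℝ)⁻¹ ^ 4 / arity v)) := by
  refine (hf.abs_pairing_sum_le_tree (j := v + 1) (ν := arity v) (arity_pos v)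
    (fun i hi => arity_mono (Nat.le_of_lt_succ hi)) hx hC hτ hL hterm hsum (2 ^ (v + 2))
    hA).trans ?_
  rw [half_pow_two_pow_succ (v + 1)]
  gcongr
  exact two_mul_arity_pow_le v

end Tree

/-! ### Flat vectors and rapidly increasing sequences -/

/-- The `ℓ¹` norm of a finitely supported vector. -/
def l1Norm (x : FinVec) : ℝ := ∑ n ∈ x.support, |x n|

lemma l1Norm_single (n : ℕ) : l1Norm (Finsupp.single n 1) = 1 := by
  simp [l1Norm]

lemma abs_pairing_le_l1Norm_mul {f : Functional} {c : ℚ} (h : ∀ n, |f n| ≤ c) (x : FinVec) :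
    |pairing f x| ≤ l1Norm x * c := by
  rw [pairing_apply, l1Norm, Finset.sum_mul]
  refine (Finset.abs_sum_le_sum_abs _ _).trans (Finset.sum_le_sum fun n _ => ?_)
  rw [abs_mul]
  gcongr
  exact_mod_cast h n

lemma IsNorming.abs_pairing_le_l1Norm {f : Functional} (h : IsNorming f) (x : FinVec) :
    |pairing f x| ≤ l1Norm x := by
  simpa using abs_pairing_le_l1Norm_mul (c := 1) h.abs_apply_le x

lemma HasWeight.abs_pairing_le_l1Norm_div {i : ℕ} {f : Functional} (h : HasWeight (some i) f)
    (x : FinVec) : |pairing f x| ≤ l1Norm x / weight i := by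
  simpa [div_eq_mul_inv] using abs_pairing_le_l1Norm_mul h.abs_apply_le x

/-- Vectors on which all functionals of weight index below `N` are as small as on an
`ℓ¹`-average. -/
structure IsFlat (C : ℝ) (N : ℕ) (x : FinVec) : Prop where
  abs_pairing_le : ∀ f, IsNorming f → |pairing f x| ≤ C
  abs_pairing_le_of_lt : ∀ i < N, ∀ f, HasWeight (some i) f → |pairing f x| ≤ C / weight i

/-- Exact vectors of index `w`: only functionals of weight index `w` act on them substantially. -/
structure IsExact (C : ℝ) (w : ℕ) (z : FinVec) : Prop extends IsFlat C w z where
  abs_pairing_le_of_gt : ∀ i > w, ∀ f, HasWeight (some i) f → |pairing f z| ≤ C / weight w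

/-- Rapidly increasing sequences: each functional acts substantially on at most one of their
terms. -/
structure IsRapidlyIncreasing (C : ℝ) (L : Finset ℕ) (J : ℕ → ℕ) (x : ℕ → FinVec) : Prop where
  isFlat : ∀ l ∈ L, IsFlat C (J l) (x l)
  abs_pairing_le_of_ge : ∀ l ∈ L, ∀ l' ∈ L, l < l' → ∀ i ≥ J l', ∀ f, HasWeight (some i) f →
    |pairing f (x l)| ≤ C / weight (J l)

namespace IsFlat

variable {C D : ℝ} {N M : ℕ} {x y : FinVec}

lemma nonneg (h : IsFlat C N x) : 0 ≤ C :=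
  (abs_nonneg _).trans (h.abs_pairing_le 0 isNorming_zero)

lemma anti (h : IsFlat C N x) (hM : M ≤ N) : IsFlat C M x :=
  ⟨h.abs_pairing_le, fun i hi => h.abs_pairing_le_of_lt i (hi.trans_le hM)⟩

lemma mono (h : IsFlat C N x) (hD : C ≤ D) : IsFlat D N x :=
  ⟨fun f hf => (h.abs_pairing_le f hf).trans hD, fun i hi f hf =>
    (h.abs_pairing_le_of_lt i hi f hf).trans (by gcongr)⟩

lemma add (h : IsFlat C N x) (h' : IsFlat D N y) : IsFlat (C + D) N (x + y) where
  abs_pairing_le f hf := by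
    rw [map_add]
    exact (abs_add_le _ _).trans (add_le_add (h.abs_pairing_le f hf) (h'.abs_pairing_le f hf))
  abs_pairing_le_of_lt i hi f hf := by
    rw [map_add, add_div]
    exact (abs_add_le _ _).trans
      (add_le_add (h.abs_pairing_le_of_lt i hi f hf) (h'.abs_pairing_le_of_lt i hi f hf))

lemma smul (h : IsFlat C N x) (c : ℝ) : IsFlat (|c| * C) N (c • x) where
  abs_pairing_le f hf := by
    rw [map_smul, smul_eq_mul, abs_mul]
    exact mul_le_mul_of_nonneg_left (h.abs_pairing_le f hf) (abs_nonneg _)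
  abs_pairing_le_of_lt i hi f hf := by
    rw [map_smul, smul_eq_mul, abs_mul, mul_div_assoc]
    exact mul_le_mul_of_nonneg_left (h.abs_pairing_le_of_lt i hi f hf) (abs_nonneg _)

end IsFlat

lemma isFlat_l1Norm (x : FinVec) (N : ℕ) : IsFlat (l1Norm x) N x :=
  ⟨fun _ hf => hf.abs_pairing_le_l1Norm x, fun _ _ _ hf => hf.abs_pairing_le_l1Norm_div x⟩

lemma IsExact.abs_pairing_le_of_ne {C B : ℝ} {w i : ℕ} {z : FinVec} {f : Functional}
    (h : IsExact C w z) (hf : HasWeight (some i) f) (hne : i ≠ w) (hB : 0 < B)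
    (hBi : B ≤ weight i) (hBw : B ≤ weight w) : |pairing f z| ≤ C / B := by
  have hC := h.nonneg
  rcases lt_or_gt_of_ne hne with hlt | hgt
  · exact (h.abs_pairing_le_of_lt i hlt f hf).trans (by gcongr)
  · exact (h.abs_pairing_le_of_gt i hgt f hf).trans (by gcongr)

lemma abs_pairing_div_smul_le {f : Functional} {v : FinVec} {b M n : ℝ} (hM : 0 < M) (hn : 0 < n)
    (h : |pairing f v| ≤ b * (n * M⁻¹)) : |pairing f ((M / n) • v)| ≤ b := by
  rw [map_smul, smul_eq_mul, abs_mul, abs_of_pos (by positivity)]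
  calc M / n * |pairing f v| ≤ M / n * (b * (n * M⁻¹)) := by gcongr
    _ = b := by field_simp

namespace IsRapidlyIncreasing

variable {C : ℝ} {L : Finset ℕ} {J : ℕ → ℕ} {x : ℕ → FinVec}

lemma abs_pairing_sum_le (h : IsRapidlyIncreasing C L J x) (hC : 0 ≤ C) {w i : ℕ}
    (hw : ∀ l ∈ L, w ≤ J l) (hi : w ≤ i) {f : Functional} (hf : HasWeight (some i) f)
    {A : Finset ℕ} (hA : A ⊆ L) :
    |pairing f (∑ k ∈ A, x k)| ≤ C * (A.card * (weight w : ℝ)⁻¹ + 1) := by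
  have hone : (A.filter fun k => C * (weight w : ℝ)⁻¹ < |pairing f (x k)|).card ≤ 1 := by
    refine card_le_one_of_forall_not_lt fun k hk l hl hkl => ?_
    rw [Finset.mem_filter] at hk hl
    rcases lt_or_ge i (J l) with hil | hil
    · refine hl.2.not_ge (((h.isFlat l (hA hl.1)).abs_pairing_le_of_lt i hil f hf).trans ?_)
      exact mul_le_mul_of_nonneg_left (inv_weight_anti hi) hC
    · refine hk.2.not_ge
        ((h.abs_pairing_le_of_ge k (hA hk.1) l (hA hl.1) hkl i hil f hf).trans ?_)
      exact mul_le_mul_of_nonneg_left (inv_weight_anti (hw k (hA hk.1))) hC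
  rw [map_sum]
  refine (abs_sum_le_of_card_exceptional_le (by positivity) hC
    (fun k hk => (h.isFlat k (hA hk)).abs_pairing_le f hf.isNorming) hone).trans_eq ?_
  push_cast
  ring

lemma abs_pairing_sum_le_of_isNorming (h : IsRapidlyIncreasing C L J x)
    (hx : IsSuccessiveOn L x) (hC : 0 ≤ C) {v : ℕ} (hJ : ∀ l ∈ L, v + 1 ≤ J l) {f : Functional}
    (hf : IsNorming f) {A : Finset ℕ} (hA : A ⊆ L) :
    |pairing f (∑ k ∈ A, x k)| ≤
      C * (A.card * ((weight (v + 1) : ℝ)⁻¹ + (weight (v + 1) : ℝ)⁻¹ ^ 2) +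
        arity (v + 1) * (weight (v + 1) : ℝ)⁻¹ ^ 4 / arity v) := by
  rw [← one_mul ((arity (v + 1) : ℝ) * _ / _)]
  exact hf.abs_pairing_sum_le_of_arity hx hC (inv_nonneg.2 (cast_weight_pos _).le) le_rfl
    (fun f hf k hk => (h.isFlat k hk).abs_pairing_le f hf)
    (fun i hi f hf A hA => h.abs_pairing_sum_le hC hJ hi hf hA) hA

lemma abs_pairing_sum_le_of_lt (h : IsRapidlyIncreasing C L J x) (hx : IsSuccessiveOn L x)
    (hC : 0 ≤ C) {v i : ℕ} (hJ : ∀ l ∈ L, v + 1 ≤ J l) (hL : L.card = arity (v + 1))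
    (hi : i < v + 1) {f : Functional} (hf : HasWeight (some i) f) :
    |pairing f (∑ l ∈ L, x l)| ≤
      3 * C / weight i * (arity (v + 1) * (weight (v + 1) : ℝ)⁻¹) := by
  have hν := cast_arity_pos v
  have hu0 := inv_pos.2 (cast_weight_pos (v + 1))
  have hu_half := inv_weight_le_half (v + 1)
  have hnode := hf.abs_pairing_sum_le (arity_mono (Nat.le_of_lt_succ hi)) hx hC (by positivity)
    (by positivity) (fun k hk => (h.isFlat k hk).abs_pairing_le f hf.isNorming)
    fun g hg B hB => h.abs_pairing_sum_le_of_isNorming hx hC hJ hg hB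
  have hνn := arity_le_arity_succ_mul v
  have hui := inv_weight_anti hi.le
  rw [hL] at hnode
  set n : ℝ := ((arity (v + 1) : ℕ) : ℝ)
  set u : ℝ := (weight (v + 1) : ℝ)⁻¹
  have hu2 : u ^ 2 ≤ 1 / 2 * u := by nlinarith
  have hu4 : u ^ 4 ≤ 1 / 2 * u := by nlinarith [pow_le_one₀ (n := 2) hu0.le (by linarith)]
  have hνi : (arity v : ℝ) ≤ n * u * (weight i : ℝ)⁻¹ := by
    calc (arity v : ℝ) ≤ n * u * u ^ 3 := hνn.trans_eq (by ring)
      _ ≤ n * u * (weight i : ℝ)⁻¹ := by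
        gcongr
        exact (pow_le_of_le_one hu0.le (by linarith) (by norm_num)).trans hui
  calc |pairing f (∑ l ∈ L, x l)|
      ≤ C * arity v + (weight i : ℝ)⁻¹ * (C * (n * (u + u ^ 2) +
          arity v * (n * u ^ 4 / arity v))) := hnode
    _ = C * arity v + (weight i : ℝ)⁻¹ * (C * (n * (u + u ^ 2) + n * u ^ 4)) := by
        field_simp
    _ ≤ C * (n * u * (weight i : ℝ)⁻¹) +
          (weight i : ℝ)⁻¹ * (C * (n * (u + 1 / 2 * u) + n * (1 / 2 * u))) := by gcongr
    _ = 3 * C / weight i * (n * u) := by ring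

theorem isExact_average (h : IsRapidlyIncreasing C L J x) (hx : IsSuccessiveOn L x)
    (hC : 0 ≤ C) {w : ℕ} (hw : 1 ≤ w) (hL : L.card = arity w) (hJ : ∀ l ∈ L, w + 1 ≤ J l) :
    IsExact (3 * C) w (((weight w : ℝ) / arity w) • ∑ l ∈ L, x l) := by
  obtain ⟨v, rfl⟩ := Nat.exists_eq_add_of_le' hw
  have hJ' : ∀ l ∈ L, v + 1 ≤ J l := fun l hl => (Nat.le_succ _).trans (hJ l hl)
  have hMpos := cast_weight_pos (v + 1)
  have hnpos := cast_arity_pos (v + 1)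
  have hu0 := inv_pos.2 hMpos
  have hu_half := inv_weight_le_half (v + 1)
  refine ⟨⟨fun f hf => abs_pairing_div_smul_le hMpos hnpos ?_, fun i hi f hf =>
    abs_pairing_div_smul_le hMpos hnpos (h.abs_pairing_sum_le_of_lt hx hC hJ' hL hi hf)⟩,
    fun i hi f hf => abs_pairing_div_smul_le hMpos hnpos ?_⟩
  · have hnorming := h.abs_pairing_sum_le_of_isNorming hx hC hJ' hf subset_rfl
    rw [hL] at hnorming
    set n : ℝ := ((arity (v + 1) : ℕ) : ℝ)
    set u : ℝ := (weight (v + 1) : ℝ)⁻¹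
    have hu2 : u ^ 2 ≤ 1 / 2 * u := by nlinarith
    have hu4 : u ^ 4 ≤ 1 / 2 * u := by nlinarith [pow_le_one₀ (n := 2) hu0.le (by linarith)]
    calc |pairing f (∑ l ∈ L, x l)| ≤ C * (n * (u + u ^ 2) + n * u ^ 4 / arity v) := hnorming
      _ ≤ C * (n * (u + 1 / 2 * u) + n * (1 / 2 * u)) := by
          gcongr
          exact (div_le_self (by positivity) (one_le_cast_arity v)).trans (by gcongr)
      _ ≤ 3 * C * (n * u) := by nlinarith [mul_nonneg hC (mul_pos hnpos hu0).le]
  · have hbound := h.abs_pairing_sum_le hC hJ hi hf subset_rfl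
    rw [hL, weight_succ (v + 1), Nat.cast_pow, ← inv_pow] at hbound
    have hsq : 1 ≤ (arity (v + 1) : ℝ) * (weight (v + 1) : ℝ)⁻¹ ^ 2 := by
      rw [inv_pow, ← div_eq_mul_inv, le_div_iff₀ (by positivity), one_mul]
      exact_mod_cast weight_sq_le_arity (v + 1)
    calc |pairing f (∑ l ∈ L, x l)|
        ≤ C * (arity (v + 1) * (weight (v + 1) : ℝ)⁻¹ ^ 2 + 1) := hbound
      _ ≤ C * (3 * (arity (v + 1) * (weight (v + 1) : ℝ)⁻¹ ^ 2)) := by gcongr; linarith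
      _ = 3 * C / weight (v + 1) * (arity (v + 1) * (weight (v + 1) : ℝ)⁻¹) := by
          rw [div_eq_mul_inv]; ring

end IsRapidlyIncreasing

/-! ### Dependent sequences -/

/-- The point `c` of the line separates the support of `v`. -/
def Cuts (c : ℕ) (v : FinVec) : Prop := (∃ n < c, v n ≠ 0) ∧ ∃ n ≥ c, v n ≠ 0

open Classical in
lemma IsSuccessiveOn.card_filter_cuts_le_one {A : Finset ℕ} {z : ℕ → FinVec}
    (hz : IsSuccessiveOn A z) (c : ℕ) : (A.filter fun k => Cuts c (z k)).card ≤ 1 := by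
  refine card_le_one_of_forall_not_lt fun k hk l hl hkl => ?_
  rw [Finset.mem_filter] at hk hl
  obtain ⟨n, hcn, hn⟩ := hk.2.2
  obtain ⟨n', hn'c, hn'⟩ := hl.2.1
  exact (hz k hk.1 l hl.1 hkl n n' hn hn').not_gt (hn'c.trans_le hcn)

/-- A dependent sequence of vectors `z k`: they are exact of the indices that the special sequence
of functionals `φ` prescribes, and nearly annihilated by all label multiples of `φ k`. -/
structure IsDependentSequence (j : ℕ) (C θ : ℝ) (z : ℕ → FinVec) (φ : ℕ → Functional)
    (t : ℕ → ℕ) : Prop where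
  isSuccessiveOn : IsSuccessiveOn (Finset.range (arity j)) z
  isExact : ∀ k < arity j, IsExact C (coding j (history φ t k)) (z k)
  abs_pairing_le : ∀ β, IsLabelMultiplier β → ∀ k < arity j,
    |pairing ((β ∘ label) • φ k) (z k)| ≤ C * θ

namespace IsDependentSequence

variable {j d : ℕ} {C θ : ℝ} {z : ℕ → FinVec} {φ g : ℕ → Functional} {t s : ℕ → ℕ}

lemma nonneg (h : IsDependentSequence j C θ z φ t) : 0 ≤ C := (h.isExact 0 (arity_pos j)).nonneg

lemma const_mul_nonneg (h : IsDependentSequence j C θ z φ t) : 0 ≤ C * θ :=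
  (abs_nonneg _).trans (h.abs_pairing_le 1 isLabelMultiplier_one 0 (arity_pos j))

lemma abs_sum_pairing_le_of_coding_ne (h : IsDependentSequence j C θ z φ t) (hd : d ≤ arity j)
    (hg : ∀ r < d, HasWeight (some (coding j (history g s r))) (g r)) {μ : ℕ → ℚ}
    (hμ : IsMultiplier μ) {k : ℕ} (hk : k < arity j) {S : Finset ℕ} (hS : S ⊆ Finset.range d)
    (hne : ∀ r ∈ S, coding j (history g s r) ≠ coding j (history φ t k)) :
    |∑ r ∈ S, pairing (μ • g r) (z k)| ≤ C / arity j := by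
  have hC := h.nonneg
  have hn := cast_arity_pos j
  have hcard : (S.card : ℝ) ≤ arity j := by
    exact_mod_cast ((Finset.card_le_card hS).trans_eq (Finset.card_range d)).trans hd
  calc |∑ r ∈ S, pairing (μ • g r) (z k)| ≤ S.card * (C / (arity j : ℝ) ^ 2) :=
        abs_sum_le_card_mul fun r hr => (h.isExact k hk).abs_pairing_le_of_ne
          ((hg r (Finset.mem_range.1 (hS hr))).smul hμ) (hne r hr) (by positivity)
          (arity_sq_le_weight_coding _ _) (arity_sq_le_weight_coding _ _)
    _ ≤ arity j * (C / (arity j : ℝ) ^ 2) := by gcongr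
    _ = C / arity j := by field_simp

lemma abs_pairing_indicator_smul_le (h : IsDependentSequence j C θ z φ t) {β : ℕ → ℚ}
    (hβ : IsLabelMultiplier β) {a b k : ℕ} (hk : k < arity j) (ha : ¬Cuts a (z k))
    (hb : ¬Cuts b (z k)) :
    |pairing ((Set.Ico a b).indicator (β ∘ label) • φ k) (z k)| ≤ C * θ := by
  by_cases hin : ∀ n, z k n ≠ 0 → n ∈ Set.Ico a b
  · rw [pairing_congr_left (g := (β ∘ label) • φ k)]
    · exact h.abs_pairing_le β hβ k hk
    · intro n hn
      simp [Set.indicator_of_mem (hin n hn)]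
  · push Not at hin
    obtain ⟨n, hn, hnab⟩ := hin
    have hout : ∀ l, z k l ≠ 0 → l ∉ Set.Ico a b := by
      intro l hl hlab
      rw [Set.mem_Ico] at hlab hnab
      rcases lt_or_ge n a with hna | hna
      · exact ha ⟨⟨n, hna, hn⟩, l, hlab.1, hl⟩
      · exact hb ⟨⟨l, hlab.2, hl⟩, n, not_lt.1 fun hnb => hnab ⟨hna, hnb⟩, hn⟩
    rw [pairing_congr_left (g := 0)]
    · simpa using h.const_mul_nonneg
    · intro l hl
      simp [Set.indicator_of_notMem (hout l hl)]

lemma abs_sum_pairing_le (h : IsDependentSequence j C θ z φ t) (hd : d ≤ arity j)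
    (hg : ∀ r < d, HasWeight (some (coding j (history g s r))) (g r)) {β : ℕ → ℚ}
    (hβ : IsLabelMultiplier β) {a b k : ℕ} (hk : k < arity j) (ha : ¬Cuts a (z k))
    (hb : ¬Cuts b (z k))
    (heq : k < d → coding j (history g s k) = coding j (history φ t k) → g k = φ k) :
    |∑ r ∈ Finset.range d, pairing ((Set.Ico a b).indicator (β ∘ label) • g r) (z k)| ≤
      C / arity j + C * θ := by
  have hμ := hβ.isMultiplier a b
  by_cases hdiag : k < d ∧ coding j (history g s k) = coding j (history φ t k)
  · rw [← Finset.sum_erase_add _ _ (Finset.mem_range.2 hdiag.1)]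
    refine (abs_add_le _ _).trans (add_le_add ?_ ?_)
    · exact h.abs_sum_pairing_le_of_coding_ne hd hg hμ hk (Finset.erase_subset _ _)
        fun r hr hrk => (Finset.mem_erase.1 hr).1 (eq_of_coding_history_eq hrk)
    · rw [heq hdiag.1 hdiag.2]
      exact h.abs_pairing_indicator_smul_le hβ hk ha hb
  · refine (h.abs_sum_pairing_le_of_coding_ne hd hg hμ hk subset_rfl fun r hr hrk => ?_).trans
      (le_add_of_nonneg_right h.const_mul_nonneg)
    obtain rfl := eq_of_coding_history_eq hrk
    exact hdiag ⟨Finset.mem_range.1 hr, hrk⟩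

lemma card_filter_exceptional_le (h : IsDependentSequence j C θ z φ t) (hd : d ≤ arity j)
    (hg : ∀ r < d, HasWeight (some (coding j (history g s r))) (g r)) {β : ℕ → ℚ}
    (hβ : IsLabelMultiplier β) (a b : ℕ) {A : Finset ℕ} (hA : A ⊆ Finset.range (arity j)) :
    (A.filter fun k => C / arity j + C * θ <
      |∑ r ∈ Finset.range d,
        pairing ((Set.Ico a b).indicator (β ∘ label) • g r) (z k)|).card ≤ 3 := by
  classical
  set E := A.filter fun k => C / arity j + C * θ <
    |∑ r ∈ Finset.range d, pairing ((Set.Ico a b).indicator (β ∘ label) • g r) (z k)|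
  let E' := E.filter fun k => ¬Cuts a (z k) ∧ ¬Cuts b (z k)
  have hz : IsSuccessiveOn A z := h.isSuccessiveOn.mono (Finset.coe_subset.2 hA)
  -- The first index at which the two special sequences differ is the only one where the codings
  -- agree but the functionals do not.
  have hE' : E'.card ≤ 1 := by
    have hcoding : ∀ k ∈ E', coding j (history g s k) = coding j (history φ t k) ∧ g k ≠ φ k := by
      intro k hk
      simp only [E', E, Finset.mem_filter] at hk
      by_contra hcon
      exact hk.1.2.not_ge (h.abs_sum_pairing_le hd hg hβ (Finset.mem_range.1 (hA hk.1.1)) hk.2.1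
        hk.2.2 fun _ heq => not_not.1 fun hne => hcon ⟨heq, hne⟩)
    refine card_le_one_of_forall_not_lt fun k hk l hl hkl => (hcoding k hk).2 ?_
    exact (history_eq (coding_injective j (hcoding l hl).1)).2 k hkl
  have hsub : E ⊆ (A.filter fun k => Cuts a (z k)) ∪ (A.filter fun k => Cuts b (z k)) ∪ E' := by
    intro k hk
    have hkA := (Finset.mem_filter.1 hk).1
    simp only [E', Finset.mem_union, Finset.mem_filter]
    tauto
  calc E.card ≤ _ := Finset.card_le_card hsub
    _ ≤ 1 + 1 + 1 := (Finset.card_union_le _ _).trans (add_le_add ((Finset.card_union_le _ _).trans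
        (add_le_add (hz.card_filter_cuts_le_one a) (hz.card_filter_cuts_le_one b))) hE')

lemma abs_pairing_sum_le_of_odd {p : ℕ} (h : IsDependentSequence (2 * p + 1) C θ z φ t)
    {f : Functional} (hf : HasWeight (some (2 * p + 1)) f) {A : Finset ℕ}
    (hA : A ⊆ Finset.range (arity (2 * p + 1))) :
    |pairing f (∑ k ∈ A, z k)| ≤
      A.card * ((weight (2 * p + 1) : ℝ)⁻¹ * (C / arity (2 * p + 1) + C * θ)) + 3 * C := by
  obtain ⟨d, hd, g, s, _, ⟨a, b, β, hβ, rfl⟩, hg, rfl⟩ := hf.exists_eq_sum_of_odd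
  have hm := inv_pos.2 (cast_weight_pos (2 * p + 1))
  have hC := h.nonneg
  have hCθ := h.const_mul_nonneg
  rw [map_sum]
  refine abs_sum_le_of_card_exceptional_le (m := 3) (by positivity) hC
    (fun k hk => (h.isExact k (Finset.mem_range.1 (hA hk))).abs_pairing_le _ hf.isNorming) ?_
  simpa only [pairing_smul_left, Finset.smul_sum, pairing_sum_left, abs_mul, Rat.cast_inv,
    Rat.cast_natCast, ← Finset.mul_sum, abs_of_pos hm, mul_lt_mul_iff_right₀ hm] using
    h.card_filter_exceptional_le hd hg hβ a b hA

lemma abs_pairing_sum_le_of_lt (h : IsDependentSequence j C θ z φ t) {i : ℕ} (hi : j < i)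
    {f : Functional} (hf : HasWeight (some i) f) {A : Finset ℕ}
    (hA : A ⊆ Finset.range (arity j)) :
    |pairing f (∑ k ∈ A, z k)| ≤ A.card * (C / (weight j : ℝ) ^ 2) + C := by
  have hC := h.nonneg
  have hm := cast_weight_pos j
  have hmi : (weight j : ℝ) ^ 2 ≤ weight i := by
    exact_mod_cast (weight_succ j).symm.trans_le (weight_mono hi)
  have hmc (k : ℕ) : (weight j : ℝ) ^ 2 ≤ weight (coding j (history φ t k)) := by
    exact_mod_cast (weight_succ j).symm.trans_le (weight_mono (lt_coding j _))
  have hone : (A.filter fun k => C / (weight j : ℝ) ^ 2 < |pairing f (z k)|).card ≤ 1 := by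
    have hcoding : ∀ k ∈ A.filter fun k => C / (weight j : ℝ) ^ 2 < |pairing f (z k)|,
        i = coding j (history φ t k) := by
      intro k hk
      rw [Finset.mem_filter] at hk
      by_contra hne
      exact hk.2.not_ge ((h.isExact k (Finset.mem_range.1 (hA hk.1))).abs_pairing_le_of_ne hf hne
        (by positivity) hmi (hmc k))
    exact Finset.card_le_one.2 fun k hk l hl =>
      eq_of_coding_history_eq ((hcoding k hk).symm.trans (hcoding l hl))
  rw [map_sum]
  refine (abs_sum_le_of_card_exceptional_le (by positivity) hC (fun k hk =>
    (h.isExact k (Finset.mem_range.1 (hA hk))).abs_pairing_le f hf.isNorming) hone).trans_eq ?_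
  rw [Nat.cast_one, one_mul]

lemma abs_pairing_sum_le_of_ge {p i : ℕ} (h : IsDependentSequence (2 * p + 1) C θ z φ t)
    (hθ : 0 ≤ θ) (hi : 2 * p + 1 ≤ i) {f : Functional} (hf : HasWeight (some i) f) {A : Finset ℕ}
    (hA : A ⊆ Finset.range (arity (2 * p + 1))) :
    |pairing f (∑ k ∈ A, z k)| ≤ C * (A.card * (2 * (weight (2 * p + 1) : ℝ)⁻¹ ^ 2 +
      (weight (2 * p + 1) : ℝ)⁻¹ * θ) + 3) := by
  have hC := h.nonneg
  have hu0 := inv_pos.2 (cast_weight_pos (2 * p + 1))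
  have hu_half := inv_weight_le_half (2 * p + 1)
  have hnu : (arity (2 * p + 1) : ℝ)⁻¹ ≤ (weight (2 * p + 1) : ℝ)⁻¹ ^ 2 := by
    have hM := cast_weight_pos (2 * p + 1)
    rw [inv_pow]
    refine inv_anti₀ (by positivity) ?_
    exact_mod_cast weight_sq_le_arity (2 * p + 1)
  rcases eq_or_lt_of_le hi with rfl | hlt
  · have hodd := h.abs_pairing_sum_le_of_odd hf hA
    rw [div_eq_mul_inv] at hodd
    set u : ℝ := (weight (2 * p + 1) : ℝ)⁻¹
    calc |pairing f (∑ k ∈ A, z k)|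
        ≤ A.card * (u * (C * (arity (2 * p + 1) : ℝ)⁻¹ + C * θ)) + 3 * C := hodd
      _ ≤ A.card * (1 * (C * u ^ 2) + u * (C * θ)) + 3 * C := by
          rw [mul_add u]
          gcongr
          linarith
      _ ≤ C * (A.card * (2 * u ^ 2 + u * θ) + 3) := by
          nlinarith [mul_nonneg (Nat.cast_nonneg (α := ℝ) A.card) (mul_nonneg hC (sq_nonneg u))]
  · have hgt := h.abs_pairing_sum_le_of_lt hlt hf hA
    rw [div_eq_mul_inv, ← inv_pow] at hgt
    set u : ℝ := (weight (2 * p + 1) : ℝ)⁻¹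
    calc |pairing f (∑ k ∈ A, z k)| ≤ A.card * (C * u ^ 2) + C := hgt
      _ = C * (A.card * (u ^ 2 + 0) + 1) := by ring
      _ ≤ C * (A.card * (2 * u ^ 2 + u * θ) + 3) := by
          gcongr
          · linarith [sq_nonneg u]
          · positivity
          · norm_num

theorem abs_pairing_average_le {p : ℕ} (h : IsDependentSequence (2 * p + 1) C θ z φ t)
    (hθ : 0 ≤ θ) {f : Functional} (hf : IsNorming f) :
    |pairing f (((weight (2 * p + 1) : ℝ) / arity (2 * p + 1)) •
        ∑ k ∈ Finset.range (arity (2 * p + 1)), z k)| ≤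
      C * (6 * (weight (2 * p + 1) : ℝ)⁻¹ + θ) := by
  have hC := h.nonneg
  have hM := cast_weight_pos (2 * p + 1)
  have hn := cast_arity_pos (2 * p + 1)
  have hu0 := inv_pos.2 hM
  have hu_half := inv_weight_le_half (2 * p + 1)
  have htree := hf.abs_pairing_sum_le_of_arity h.isSuccessiveOn hC (by positivity) (by norm_num)
    (fun f hf k hk => (h.isExact k (Finset.mem_range.1 hk)).abs_pairing_le f hf)
    (fun i hi f hf A hA => h.abs_pairing_sum_le_of_ge hθ hi hf hA) subset_rfl
  rw [Finset.card_range] at htree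
  refine abs_pairing_div_smul_le hM hn (htree.trans ?_)
  set n : ℝ := ((arity (2 * p + 1) : ℕ) : ℝ)
  set u : ℝ := (weight (2 * p + 1) : ℝ)⁻¹
  have hu4 : u ^ 4 ≤ u ^ 2 := pow_le_pow_of_le_one hu0.le (by linarith) (by norm_num)
  calc C * (n * (2 * u ^ 2 + u * θ + u ^ 2) + 3 * (n * u ^ 4 / arity (2 * p)))
      ≤ C * (n * (2 * u ^ 2 + u * θ + u ^ 2) + 3 * (n * u ^ 2)) := by
        gcongr
        exact (div_le_self (by positivity) (one_le_cast_arity _)).trans (by gcongr)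
    _ = C * (6 * u + θ) * (n * u) := by ring

end IsDependentSequence

/-! ### The space -/

section Space

/-- The finitely supported vectors inside `ℓ_∞(W)`, where `W` is the norming set: a vector is sent
to the family of its pairings with the norming functionals. -/
def toBounded : FinVec →ₗ[ℝ] lp (fun _ : {f // IsNorming f} => ℝ) ∞ where
  toFun v := ⟨fun f => pairing f.1 v, memℓp_infty ⟨l1Norm v, by
    rintro _ ⟨f, rfl⟩
    exact f.2.abs_pairing_le_l1Norm v⟩⟩
  map_add' u v := by ext f; exact map_add (pairing f.1) u v
  map_smul' c v := by ext f; exact map_smul (pairing f.1) c v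

/-- The Banach space `X` of the theorem, the completion of the finitely supported vectors in the
norm `‖v‖ = sup {|f v| : f ∈ W}`, realised as a closed subspace of `ℓ_∞(W)`. -/
def Space : Type := (LinearMap.range toBounded).topologicalClosure

instance : NormedAddCommGroup Space :=
  inferInstanceAs (NormedAddCommGroup (LinearMap.range toBounded).topologicalClosure)

instance : NormedSpace ℝ Space :=
  inferInstanceAs (NormedSpace ℝ (LinearMap.range toBounded).topologicalClosure)

instance : CompleteSpace Space :=
  inferInstanceAs (CompleteSpace (LinearMap.range toBounded).topologicalClosure)

/-- The inclusion of the finitely supported vectors in the space. -/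
def embed : FinVec →ₗ[ℝ] Space :=
  toBounded.codRestrict _ fun v => Submodule.le_topologicalClosure _ ⟨v, rfl⟩

lemma denseRange_embed : DenseRange embed := by
  intro x
  refine closure_subtype.2 (closure_mono ?_ x.2)
  rintro _ ⟨v, rfl⟩
  exact ⟨_, ⟨v, rfl⟩, rfl⟩

lemma IsNorming.abs_pairing_le_norm_embed {f : Functional} (hf : IsNorming f) (v : FinVec) :
    |pairing f v| ≤ ‖embed v‖ :=
  lp.norm_apply_le_norm ENNReal.top_ne_zero (toBounded v) ⟨f, hf⟩

lemma norm_embed_le {c : ℝ} {v : FinVec} (h : ∀ f, IsNorming f → |pairing f v| ≤ c) :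
    ‖embed v‖ ≤ c :=
  lp.norm_le_of_forall_le ((abs_nonneg _).trans (h 0 isNorming_zero)) fun f => h f.1 f.2

lemma exists_norm_sub_embed_lt (x : Space) {ε : ℝ} (hε : 0 < ε) : ∃ v, ‖x - embed v‖ < ε := by
  simpa only [dist_eq_norm] using denseRange_embed.exists_dist_lt x hε

/-- The unit vector basis of the space. -/
def basis (n : ℕ) : Space := embed (Finsupp.single n 1)

lemma clm_ext_basis {Y : Type*} [NormedAddCommGroup Y] [NormedSpace ℝ Y] {S T : Space →L[ℝ] Y}
    (h : ∀ n, S (basis n) = T (basis n)) : S = T := by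
  have hembed : S.toLinearMap.comp embed = T.toLinearMap.comp embed := by
    ext n
    exact h n
  exact DFunLike.coe_injective
    (denseRange_embed.equalizer S.continuous T.continuous (congrArg DFunLike.coe hembed))

end Space

section Eval

/-- The coordinate functionals of `basis`. -/
def coord (n : ℕ) : Space →L[ℝ] ℝ :=
  (lp.evalCLM ℝ (fun _ : {f // IsNorming f} => ℝ) ∞ ⟨_, isNorming_single n (q := 1) (by simp)⟩).comp
    (Submodule.subtypeL (LinearMap.range toBounded).topologicalClosure)

lemma coord_basis (n k : ℕ) : coord n (basis k) = if k = n then 1 else 0 := by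
  change pairing (Finsupp.single n 1) (Finsupp.single k 1) = _
  simp [pairing_single, Finsupp.single_apply, eq_comm, apply_ite (Rat.cast : ℚ → ℝ)]

/-- A finitely supported functional as a continuous linear functional on the space. -/
def eval : Functional →ₗ[ℚ] Space →L[ℝ] ℝ := Finsupp.linearCombination ℚ coord

lemma eval_single (n : ℕ) : eval (Finsupp.single n 1) = coord n := by
  simp [eval]

lemma eval_smul (c : ℚ) (f : Functional) (x : Space) : eval (c • f) x = c * eval f x := by
  rw [map_smul, smul_apply, Rat.smul_def]

lemma eval_basis (f : Functional) (n : ℕ) : eval f (basis n) = f n := by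
  simp only [eval, Finsupp.linearCombination_apply, Finsupp.sum, sum_apply, smul_apply,
    coord_basis, Rat.smul_def, mul_ite, mul_one, mul_zero, Finset.sum_ite_eq,
    Finsupp.mem_support_iff]
  split_ifs with h
  · rfl
  · rw [not_not.1 h, Rat.cast_zero]

lemma eval_embed (f : Functional) (v : FinVec) : eval f (embed v) = pairing f v := by
  suffices h : (eval f).toLinearMap.comp embed = pairing f from LinearMap.congr_fun h v
  ext n
  exact (eval_basis f n).trans (by simp [pairing_single])

lemma eval_eq_apply {f : Functional} (hf : IsNorming f) (x : Space) : eval f x = x.1 ⟨f, hf⟩ := by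
  suffices h : eval f = (lp.evalCLM ℝ (fun _ : {f // IsNorming f} => ℝ) ∞ ⟨f, hf⟩).comp
      (Submodule.subtypeL (LinearMap.range toBounded).topologicalClosure) from
    DFunLike.congr_fun h x
  refine clm_ext_basis fun n => ?_
  exact eval_embed f _

lemma IsNorming.abs_eval_le {f : Functional} (hf : IsNorming f) (x : Space) :
    |eval f x| ≤ ‖x‖ := by
  rw [eval_eq_apply hf]
  exact lp.norm_apply_le_norm ENNReal.top_ne_zero x.1 _

lemma norm_le_of_forall_abs_eval_le {c : ℝ} {x : Space}
    (h : ∀ f, IsNorming f → |eval f x| ≤ c) : ‖x‖ ≤ c :=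
  lp.norm_le_of_forall_le ((abs_nonneg _).trans (h 0 isNorming_zero)) fun f =>
    (congrArg abs (eval_eq_apply f.2 x)).symm.trans_le (h f.1 f.2)

lemma exists_lt_abs_eval {x : Space} {c : ℝ} (h : c < ‖x‖) :
    ∃ f, IsNorming f ∧ c < |eval f x| := by
  contrapose! h
  exact norm_le_of_forall_abs_eval_le h

lemma abs_coord_le (n : ℕ) (x : Space) : |coord n x| ≤ ‖x‖ := by
  rw [← eval_single]
  exact (isNorming_single n (by simp)).abs_eval_le x

lemma norm_basis (n : ℕ) : ‖basis n‖ = 1 := by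
  refine le_antisymm (norm_embed_le fun f hf => ?_) ?_
  · simpa only [l1Norm_single, abs_one] using hf.abs_pairing_le_l1Norm (Finsupp.single n 1)
  · simpa [coord_basis] using abs_coord_le n (basis n)

end Eval

section MultiplierOp

/-- The functions whose multiplication operators preserve the norming set. -/
def PreservesNorming (μ : ℕ → ℚ) : Prop := ∀ f, IsNorming f → IsNorming (μ • f)

lemma IsMultiplier.preservesNorming {μ : ℕ → ℚ} (h : IsMultiplier μ) : PreservesNorming μ :=
  fun _ hf => hf.smul h

lemma exists_forall_ne_zero_lt {R : Type*} [Zero R] (v : ℕ →₀ R) : ∃ N, ∀ n, v n ≠ 0 → n < N := by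
  obtain ⟨N, hN⟩ := v.support.bddAbove
  exact ⟨N + 1, fun n hn => Nat.lt_succ_of_le (hN (Finsupp.mem_support_iff.2 hn))⟩

lemma IsLabelMultiplier.preservesNorming {β : ℕ → ℚ} (h : IsLabelMultiplier β) :
    PreservesNorming (β ∘ label) := by
  intro f hf
  obtain ⟨N, hN⟩ := exists_forall_ne_zero_lt f
  have hμ : (β ∘ label) • f = (Set.Ico 0 N).indicator (β ∘ label) • f := by
    ext n
    by_cases hn : f n = 0
    · simp [hn]
    · simp [hN n hn]
  rw [hμ]
  exact hf.smul (h.isMultiplier 0 N)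

/-- Pointwise multiplication by a function, as a linear map on finitely supported vectors. -/
def pointwiseMul (μ : ℕ → ℚ) : FinVec →ₗ[ℝ] FinVec where
  toFun v := (fun n => (μ n : ℝ)) • v
  map_add' u v := by ext n; simp [mul_add]
  map_smul' c v := by ext n; simp [mul_left_comm]

lemma pairing_pointwiseMul (μ : ℕ → ℚ) (f : Functional) (v : FinVec) :
    pairing f (pointwiseMul μ v) = pairing (μ • f) v := by
  suffices h : (pairing f).comp (pointwiseMul μ) = pairing (μ • f) from LinearMap.congr_fun h v
  ext n
  have hmul : pointwiseMul μ (Finsupp.single n 1) = Finsupp.single n (μ n : ℝ) := by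
    ext k
    by_cases hk : n = k
    · subst hk; simp [pointwiseMul]
    · simp [pointwiseMul, hk]
  simp [hmul, pairing_single]

/-- The diagonal operator on the space with a given multiplier; it is meaningful only for
multipliers that preserve the norming set. -/
def multiplierOp (μ : ℕ → ℚ) : Space →L[ℝ] Space := (embed.comp (pointwiseMul μ)).extendOfNorm embed

variable {μ : ℕ → ℚ}

lemma PreservesNorming.norm_embed_pointwiseMul_le (h : PreservesNorming μ) (v : FinVec) :
    ‖embed.comp (pointwiseMul μ) v‖ ≤ 1 * ‖embed v‖ := by
  rw [one_mul]
  exact norm_embed_le fun f hf =>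
    pairing_pointwiseMul μ f v ▸ (h f hf).abs_pairing_le_norm_embed v

lemma PreservesNorming.multiplierOp_embed (h : PreservesNorming μ) (v : FinVec) :
    multiplierOp μ (embed v) = embed (pointwiseMul μ v) :=
  LinearMap.extendOfNorm_eq denseRange_embed ⟨1, h.norm_embed_pointwiseMul_le⟩ v

lemma PreservesNorming.norm_multiplierOp_apply_le (h : PreservesNorming μ) (x : Space) :
    ‖multiplierOp μ x‖ ≤ ‖x‖ := by
  exact (LinearMap.norm_extendOfNorm_apply_le denseRange_embed 1
    h.norm_embed_pointwiseMul_le x).trans_eq (one_mul _)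

lemma PreservesNorming.eval_multiplierOp (h : PreservesNorming μ) (f : Functional) (x : Space) :
    eval f (multiplierOp μ x) = eval (μ • f) x := by
  suffices heq : (eval f).comp (multiplierOp μ) = eval (μ • f) from DFunLike.congr_fun heq x
  refine clm_ext_basis fun n => ?_
  rw [ContinuousLinearMap.comp_apply, basis, h.multiplierOp_embed, eval_embed, eval_embed,
    pairing_pointwiseMul]

lemma eq_of_forall_eval_eq {x y : Space} (h : ∀ f, IsNorming f → eval f x = eval f y) : x = y := by
  rw [← sub_eq_zero, ← norm_le_zero_iff]
  exact norm_le_of_forall_abs_eval_le fun f hf => by rw [map_sub, h f hf, sub_self, abs_zero]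

lemma PreservesNorming.multiplierOp_basis (h : PreservesNorming μ) (n : ℕ) :
    multiplierOp μ (basis n) = (μ n : ℝ) • basis n :=
  eq_of_forall_eval_eq fun f _ => by simp [h.eval_multiplierOp, eval_basis]

end MultiplierOp

section SchauderBasis

/-- The basis projection onto the first `N` coordinates. -/
def truncate (N : ℕ) : Space →L[ℝ] Space := multiplierOp ((Set.Ico 0 N).indicator 1)

lemma norm_truncate_apply_le (N : ℕ) (x : Space) : ‖truncate N x‖ ≤ ‖x‖ :=
  (isMultiplier_indicator_Ico 0 N).preservesNorming.norm_multiplierOp_apply_le x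

lemma eval_truncate (f : Functional) (N : ℕ) (x : Space) :
    eval f (truncate N x) = eval ((Set.Ico 0 N).indicator (1 : ℕ → ℚ) • f) x :=
  (isMultiplier_indicator_Ico 0 N).preservesNorming.eval_multiplierOp f x

lemma truncate_eq_sum (N : ℕ) (x : Space) :
    truncate N x = ∑ i ∈ Finset.range N, coord i x • basis i := by
  suffices h : truncate N = ∑ i ∈ Finset.range N, (coord i).smulRight (basis i) by
    rw [h, sum_apply]
    rfl
  refine clm_ext_basis fun n => ?_
  rw [truncate, (isMultiplier_indicator_Ico 0 N).preservesNorming.multiplierOp_basis]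
  simp [coord_basis, Set.indicator_apply, apply_ite (Rat.cast : ℚ → ℝ)]

lemma truncate_embed_eq_embed_filter (N : ℕ) (v : FinVec) :
    truncate N (embed v) = embed (v.filter (· < N)) := by
  rw [truncate, (isMultiplier_indicator_Ico 0 N).preservesNorming.multiplierOp_embed]
  congr 1
  ext n
  by_cases hn : n < N <;> simp [pointwiseMul, hn]

lemma truncate_embed {N : ℕ} {v : FinVec} (h : ∀ n, v n ≠ 0 → n < N) :
    truncate N (embed v) = embed v := by
  rw [truncate_embed_eq_embed_filter, (Finsupp.filter_eq_self_iff _ _).2 h]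

lemma tendsto_truncate (x : Space) : Tendsto (fun N => truncate N x) atTop (𝓝 x) := by
  refine Metric.tendsto_atTop.2 fun ε hε => ?_
  obtain ⟨v, hv⟩ := exists_norm_sub_embed_lt x (half_pos hε)
  obtain ⟨N, hN⟩ := exists_forall_ne_zero_lt v
  refine ⟨N, fun M hM => ?_⟩
  have hfix : truncate M (embed v) = embed v := truncate_embed fun n hn => (hN n hn).trans_le hM
  calc dist (truncate M x) x = ‖truncate M (x - embed v) - (x - embed v)‖ := by
        rw [dist_eq_norm, map_sub, hfix]
        abel_nf
    _ ≤ ‖truncate M (x - embed v)‖ + ‖x - embed v‖ := norm_sub_le _ _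
    _ ≤ ‖x - embed v‖ + ‖x - embed v‖ := by gcongr; exact norm_truncate_apply_le _ _
    _ < ε := by linarith

theorem existsUnique_tendsto_sum_smul_basis (x : Space) : ∃! a : ℕ → ℝ,
    Tendsto (fun N => ∑ i ∈ Finset.range N, a i • basis i) atTop (𝓝 x) := by
  refine ⟨fun i => coord i x, by simpa only [truncate_eq_sum] using tendsto_truncate x, ?_⟩
  intro a ha
  funext i
  refine tendsto_nhds_unique_of_eventuallyEq tendsto_const_nhds
    (((coord i).continuous.tendsto x).comp ha) ?_
  filter_upwards [eventually_gt_atTop i] with N hN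
  simp [coord_basis, hN]

lemma abs_eval_le_norm_sub_truncate {f : Functional} (hf : IsNorming f) {N : ℕ}
    (hN : ∀ n, f n ≠ 0 → N ≤ n) (x : Space) : |eval f x| ≤ ‖x - truncate N x‖ := by
  have hzero : (Set.Ico 0 N).indicator (1 : ℕ → ℚ) • f = 0 := by
    ext n
    by_cases hn : f n = 0
    · simp [hn]
    · simp [hN n hn]
  have heval : eval f x = eval f (x - truncate N x) := by
    rw [map_sub, eval_truncate, hzero, map_zero, zero_apply, sub_zero]
  exact heval ▸ hf.abs_eval_le _

lemma eventually_norm_sub_truncate_le (x : Space) {ε : ℝ} (hε : 0 < ε) :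
    ∀ᶠ N in atTop, ‖x - truncate N x‖ ≤ ε := by
  filter_upwards [Metric.tendsto_nhds.1 (tendsto_truncate x) ε hε] with N hN
  rw [← dist_eq_norm, dist_comm]
  exact hN.le

end SchauderBasis

/-! ### The diagonal operators -/

section Projections

/-- The label multiplier of the `s`-th projection: constantly one for `s = 0`, and the indicator
of the label `s` otherwise. -/
def projMultiplier : ℕ → ℕ → ℚ
  | 0 => 1
  | s + 1 => Pi.single (s + 1) 1

lemma projMultiplier_of_ne_zero {s : ℕ} (hs : s ≠ 0) : projMultiplier s = Pi.single s 1 := by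
  obtain ⟨s, rfl⟩ := Nat.exists_eq_succ_of_ne_zero hs
  rfl

lemma isLabelMultiplier_projMultiplier (s : ℕ) : IsLabelMultiplier (projMultiplier s) := by
  rcases eq_or_ne s 0 with rfl | hs
  · exact isLabelMultiplier_one
  · refine Or.inr fun F => ?_
    simp only [projMultiplier_of_ne_zero hs, Pi.single_apply, ite_pow, one_pow, ne_eq,
      OfNat.ofNat_ne_zero, not_false_eq_true, zero_pow, Finset.sum_ite_eq']
    split_ifs <;> norm_num

/-- The operators `I_s`: the identity for `s = 0`, and for `s ≥ 1` the basis projection onto the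
coordinates labelled `s`. -/
def proj (s : ℕ) : Space →L[ℝ] Space := multiplierOp (projMultiplier s ∘ label)

lemma eval_proj (f : Functional) (s : ℕ) (x : Space) :
    eval f (proj s x) = eval ((projMultiplier s ∘ label) • f) x :=
  (isLabelMultiplier_projMultiplier s).preservesNorming.eval_multiplierOp f x

lemma proj_basis (s n : ℕ) : proj s (basis n) = (projMultiplier s (label n) : ℝ) • basis n :=
  (isLabelMultiplier_projMultiplier s).preservesNorming.multiplierOp_basis n

lemma norm_proj_apply_le (s : ℕ) (x : Space) : ‖proj s x‖ ≤ ‖x‖ :=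
  (isLabelMultiplier_projMultiplier s).preservesNorming.norm_multiplierOp_apply_le x

lemma proj_zero : proj 0 = ContinuousLinearMap.id ℝ Space :=
  clm_ext_basis fun n => by simp [proj_basis, projMultiplier]

lemma label_smul_eq_sum {F : Finset ℕ} (h0 : 0 ∉ F) {β : ℕ → ℚ} {f : Functional}
    (h : ∀ n, f n ≠ 0 → label n ∉ F → β (label n) = 0) :
    (β ∘ label) • f = ∑ s ∈ F, β s • (projMultiplier s ∘ label) • f := by
  ext n
  have hsum : ∑ s ∈ F, β s * (projMultiplier s (label n) * f n) =
      if label n ∈ F then β (label n) * f n else 0 := by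
    rw [← Finset.sum_ite_eq F (label n) fun s => β s * f n]
    refine Finset.sum_congr rfl fun s hs => ?_
    rw [projMultiplier_of_ne_zero (ne_of_mem_of_not_mem hs h0), Pi.single_apply]
    split_ifs <;> ring
  simp only [Finsupp.coe_pointwise_smul, Pi.smul_apply', Function.comp_apply, smul_eq_mul,
    Finsupp.finsetSum_apply, Finsupp.smul_apply, hsum]
  split_ifs with hn
  · rfl
  · by_cases hfn : f n = 0
    · rw [hfn, mul_zero]
    · rw [h n hfn hn, zero_mul]

lemma eval_label_smul_eq_sum {F : Finset ℕ} (h0 : 0 ∉ F) {β : ℕ → ℚ} {f : Functional}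
    (h : ∀ n, f n ≠ 0 → label n ∉ F → β (label n) = 0) (x : Space) :
    eval ((β ∘ label) • f) x = ∑ s ∈ F, β s * eval f (proj s x) := by
  simp only [label_smul_eq_sum h0 h, map_sum, sum_apply, eval_smul, eval_proj]

end Projections

section Bessel

lemma sum_sq_le_of_forall_rat {ι : Type*} {t : ι → ℝ} {F : Finset ι} {M : ℝ}
    (h : ∀ β : ι → ℚ, ∑ i ∈ F, β i ^ 2 ≤ 1 → ∑ i ∈ F, β i * t i ≤ M) :
    ∑ i ∈ F, t i ^ 2 ≤ M ^ 2 := by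
  have hM : 0 ≤ M := by simpa using h 0
  by_contra! hlt
  set T := ∑ i ∈ F, t i ^ 2
  have hT : 0 < T := (sq_nonneg M).trans_lt hlt
  obtain ⟨c, hMc, hc⟩ : ∃ c, M / T < c ∧ c < (√T)⁻¹ := by
    refine exists_between ?_
    rw [div_lt_iff₀ hT, inv_mul_eq_div, Real.div_sqrt]
    exact Real.lt_sqrt_of_sq_lt hlt
  have hc0 : 0 ≤ c := (by positivity : 0 ≤ M / T).trans hMc.le
  let U : Set (ι → ℝ) := {β | ∑ i ∈ F, β i ^ 2 < 1} ∩ {β | M < ∑ i ∈ F, β i * t i}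
  have hUo : IsOpen U :=
    (isOpen_lt (f := fun β : ι → ℝ => ∑ i ∈ F, β i ^ 2) (by fun_prop) continuous_const).inter
      (isOpen_lt (g := fun β : ι → ℝ => ∑ i ∈ F, β i * t i) continuous_const (by fun_prop))
  have hcU : (fun i => c * t i) ∈ U := by
    constructor
    · calc ∑ i ∈ F, (c * t i) ^ 2 = c ^ 2 * T := by simp only [mul_pow, T, Finset.mul_sum]
        _ < (√T)⁻¹ ^ 2 * T := by gcongr
        _ = 1 := by rw [inv_pow, Real.sq_sqrt hT.le, inv_mul_cancel₀ hT.ne']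
    · calc M < c * T := (div_lt_iff₀ hT).1 hMc
        _ = ∑ i ∈ F, c * t i * t i := by simp only [T, Finset.mul_sum, sq, mul_assoc]
  obtain ⟨β, hβ, hMβ⟩ :=
    (DenseRange.piMap fun _ : ι => Rat.denseRange_cast (𝕜 := ℝ)).exists_mem_open hUo ⟨_, hcU⟩
  have hβ' : ((∑ i ∈ F, β i ^ 2 : ℚ) : ℝ) ≤ 1 := by push_cast; exact hβ.le
  exact hMβ.not_ge (h β (by exact_mod_cast hβ'))

lemma IsNorming.sum_eval_proj_sq_le_of_notMem {f : Functional} (hf : IsNorming f) {F : Finset ℕ}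
    (h0 : 0 ∉ F) (x : Space) : ∑ s ∈ F, eval f (proj s x) ^ 2 ≤ ‖x‖ ^ 2 := by
  refine sum_sq_le_of_forall_rat fun β hβ => ?_
  have hmult : IsLabelMultiplier ((F : Set ℕ).indicator β) := by
    refine Or.inr fun F' => ?_
    calc ∑ s ∈ F', (F : Set ℕ).indicator β s ^ 2 = ∑ s ∈ F' with s ∈ F, β s ^ 2 := by
          simp [Finset.sum_filter, Set.indicator_apply, ite_pow]
      _ ≤ ∑ s ∈ F, β s ^ 2 := Finset.sum_le_sum_of_subset_of_nonneg
          (fun s hs => (Finset.mem_filter.1 hs).2) fun _ _ _ => sq_nonneg _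
      _ ≤ 1 := hβ
  calc ∑ s ∈ F, β s * eval f (proj s x)
      = ∑ s ∈ F, (F : Set ℕ).indicator β s * eval f (proj s x) :=
        Finset.sum_congr rfl fun s hs => by rw [Set.indicator_of_mem (Finset.mem_coe.2 hs)]
    _ = eval (((F : Set ℕ).indicator β ∘ label) • f) x :=
        (eval_label_smul_eq_sum h0 (fun n _ hn => Set.indicator_of_notMem hn β) x).symm
    _ ≤ ‖x‖ := (le_abs_self _).trans ((hmult.preservesNorming f hf).abs_eval_le x)

lemma IsNorming.sum_eval_proj_sq_le {f : Functional} (hf : IsNorming f) (F : Finset ℕ)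
    (x : Space) : ∑ s ∈ F, eval f (proj s x) ^ 2 ≤ (2 * ‖x‖) ^ 2 := by
  have herase := hf.sum_eval_proj_sq_le_of_notMem (F.notMem_erase 0) x
  have hzero : eval f (proj 0 x) ^ 2 ≤ ‖x‖ ^ 2 := by
    rw [proj_zero]
    exact sq_le_sq' (abs_le.1 (hf.abs_eval_le x)).1 (abs_le.1 (hf.abs_eval_le x)).2
  calc ∑ s ∈ F, eval f (proj s x) ^ 2 ≤ ∑ s ∈ insert 0 (F.erase 0), eval f (proj s x) ^ 2 :=
        Finset.sum_le_sum_of_subset_of_nonneg (Finset.insert_erase_subset 0 F)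
          fun _ _ _ => sq_nonneg _
    _ = eval f (proj 0 x) ^ 2 + ∑ s ∈ F.erase 0, eval f (proj s x) ^ 2 :=
        Finset.sum_insert (F.notMem_erase 0)
    _ ≤ (2 * ‖x‖) ^ 2 := by nlinarith [sq_nonneg ‖x‖]

end Bessel

section DiagonalOperators

/-- The Hilbert space `ℓ₂`. -/
abbrev EllTwo : Type := lp (fun _ : ℕ => ℝ) 2

/-- The sequence `(f (I_s x))_s` of a functional `f` and a vector `x`. It vanishes at every `s ≥ 1`
that is not a label of the support of `f`, so it is defined by a finite sum. -/
def projCoeff (f : Functional) : Space →L[ℝ] EllTwo :=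
  ∑ s ∈ insert 0 (f.support.image label),
    ((eval f).comp (proj s)).smulRight (lp.single 2 s (1 : ℝ))

lemma eval_proj_eq_zero {f : Functional} {s : ℕ} (hs : s ∉ insert 0 (f.support.image label))
    (x : Space) : eval f (proj s x) = 0 := by
  obtain ⟨hs0, hs⟩ := not_or.1 (mt Finset.mem_insert.2 hs)
  have hzero : (projMultiplier s ∘ label) • f = 0 := by
    ext n
    by_cases hn : f n = 0
    · simp [hn]
    · have hne : label n ≠ s := fun h =>
        hs (Finset.mem_image.2 ⟨n, Finsupp.mem_support_iff.2 hn, h⟩)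
      simp [projMultiplier_of_ne_zero hs0, hne]
  rw [eval_proj, hzero, map_zero, zero_apply]

lemma inner_projCoeff (f : Functional) (b : EllTwo) (x : Space) :
    ⟪b, projCoeff f x⟫ = ∑ s ∈ insert 0 (f.support.image label), b s * eval f (proj s x) := by
  simp [projCoeff, sum_apply, inner_sum, inner_smul_right, lp.inner_single_right, mul_comm]

lemma projCoeff_apply (f : Functional) (x : Space) (s : ℕ) :
    projCoeff f x s = eval f (proj s x) := by
  have hsingle : projCoeff f x s = ⟪lp.single 2 s (1 : ℝ), projCoeff f x⟫ := by
    simp [lp.inner_single_left]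
  rw [hsingle, inner_projCoeff]
  simp only [lp.single_apply, Pi.single_apply, ite_mul, one_mul, zero_mul, Finset.sum_ite_eq']
  exact ite_eq_left_iff.2 fun hs => (eval_proj_eq_zero hs x).symm

lemma IsNorming.norm_projCoeff_le {f : Functional} (hf : IsNorming f) (x : Space) :
    ‖projCoeff f x‖ ≤ 2 * ‖x‖ := by
  refine lp.norm_le_of_forall_sum_le (by norm_num) (by positivity) fun F => ?_
  simpa [projCoeff_apply] using hf.sum_eval_proj_sq_le F x

/-- A finitely supported sequence as an element of `ℓ₂`. -/
def finsuppToEllTwo : (ℕ →₀ ℝ) →ₗ[ℝ] EllTwo :=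
  Finsupp.linearCombination ℝ fun s => lp.single 2 s (1 : ℝ)

lemma finsuppToEllTwo_single (s : ℕ) (c : ℝ) :
    finsuppToEllTwo (Finsupp.single s c) = lp.single 2 s c := by
  simp [finsuppToEllTwo, ← lp.single_smul]

lemma denseRange_finsuppToEllTwo : DenseRange finsuppToEllTwo := by
  intro a
  refine mem_closure_of_tendsto (lp.hasSum_single (by norm_num) a) (Eventually.of_forall fun F =>
    (LinearMap.mem_range (f := finsuppToEllTwo)).1 (Submodule.sum_mem _ fun s _ => ?_))
  exact ⟨Finsupp.single s (a s), finsuppToEllTwo_single s (a s)⟩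

lemma eval_linearCombination_proj (f : Functional) (c : ℕ →₀ ℝ) (x : Space) :
    eval f (Finsupp.linearCombination ℝ proj c x) = ⟪finsuppToEllTwo c, projCoeff f x⟫ := by
  simp [finsuppToEllTwo, Finsupp.linearCombination_apply, Finsupp.sum, sum_inner,
    inner_smul_left, lp.inner_single_left, projCoeff_apply]

lemma norm_linearCombination_proj_le (c : ℕ →₀ ℝ) :
    ‖Finsupp.linearCombination ℝ proj c‖ ≤ 2 * ‖finsuppToEllTwo c‖ := by
  refine ContinuousLinearMap.opNorm_le_bound _ (by positivity) fun x => ?_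
  refine norm_le_of_forall_abs_eval_le fun f hf => ?_
  calc |eval f (Finsupp.linearCombination ℝ proj c x)|
      = |⟪finsuppToEllTwo c, projCoeff f x⟫| := by rw [eval_linearCombination_proj]
    _ ≤ ‖finsuppToEllTwo c‖ * ‖projCoeff f x‖ := abs_real_inner_le_norm _ _
    _ ≤ ‖finsuppToEllTwo c‖ * (2 * ‖x‖) := by gcongr; exact hf.norm_projCoeff_le x
    _ = 2 * ‖finsuppToEllTwo c‖ * ‖x‖ := by ring

/-- The operator `∑ a_s I_s` with square summable coefficients. -/
def diagOp : EllTwo →L[ℝ] Space →L[ℝ] Space :=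
  (Finsupp.linearCombination ℝ proj).extendOfNorm finsuppToEllTwo

lemma diagOp_finsuppToEllTwo (c : ℕ →₀ ℝ) :
    diagOp (finsuppToEllTwo c) = Finsupp.linearCombination ℝ proj c :=
  LinearMap.extendOfNorm_eq denseRange_finsuppToEllTwo ⟨2, norm_linearCombination_proj_le⟩ c

lemma diagOp_single (s : ℕ) (c : ℝ) : diagOp (lp.single 2 s c) = c • proj s := by
  rw [← finsuppToEllTwo_single, diagOp_finsuppToEllTwo, Finsupp.linearCombination_single]

lemma norm_diagOp_le (a : EllTwo) : ‖diagOp a‖ ≤ 2 * ‖a‖ :=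
  LinearMap.norm_extendOfNorm_apply_le denseRange_finsuppToEllTwo 2
    norm_linearCombination_proj_le a

lemma hasSum_diagOp (a : EllTwo) : HasSum (fun s => a s • proj s) (diagOp a) := by
  simpa only [Function.comp_def, diagOp_single] using
    (lp.hasSum_single (by norm_num) a).mapL diagOp

lemma eval_diagOp (f : Functional) (a : EllTwo) (x : Space) :
    eval f (diagOp a x) = ⟪a, projCoeff f x⟫ := by
  induction a using denseRange_finsuppToEllTwo.induction_on with
  | hp => exact isClosed_eq (by fun_prop) (by fun_prop)
  | ih c => ?_
  rw [diagOp_finsuppToEllTwo, eval_linearCombination_proj]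

lemma IsLabelMultiplier.exists_eval_smul_eq_inner {β : ℕ → ℚ} (hβ : IsLabelMultiplier β) :
    ∃ b : EllTwo, ‖b‖ ≤ 1 ∧
      ∀ (f : Functional) (x : Space), eval ((β ∘ label) • f) x = ⟪b, projCoeff f x⟫ := by
  rcases hβ with ⟨c, hc, rfl⟩ | hβ
  · refine ⟨lp.single 2 0 (c : ℝ), ?_, fun f x => ?_⟩
    · rw [lp.norm_single (by norm_num), Real.norm_eq_abs]
      exact_mod_cast hc
    · have hconst : (Function.const ℕ c ∘ label) • f = c • f := by
        ext n
        simp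
      rw [hconst, eval_smul, lp.inner_single_left, projCoeff_apply, proj_zero]
      simp [mul_comm]
  · let b : ℕ → ℝ := fun s => if s = 0 then 0 else β s
    have hbound (F : Finset ℕ) :
        ∑ s ∈ F, ‖b s‖ ^ (2 : ℝ≥0∞).toReal ≤ (1 : ℝ) ^ (2 : ℝ≥0∞).toReal := by
      calc ∑ s ∈ F, ‖b s‖ ^ (2 : ℝ≥0∞).toReal ≤ ∑ s ∈ F, (β s : ℝ) ^ 2 := by
            refine Finset.sum_le_sum fun s _ => ?_
            rw [ENNReal.toReal_ofNat, Real.rpow_ofNat, Real.norm_eq_abs, sq_abs]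
            by_cases hs : s = 0 <;> simp [b, hs, sq_nonneg]
        _ ≤ 1 := by exact_mod_cast hβ F
        _ = _ := (Real.one_rpow _).symm
    refine ⟨⟨b, memℓp_gen' hbound⟩, lp.norm_le_of_forall_sum_le (by norm_num) zero_le_one hbound,
      fun f x => ?_⟩
    have h0 : 0 ∉ f.support.image label := fun h => by
      obtain ⟨n, -, hn⟩ := Finset.mem_image.1 h
      exact Nat.one_le_iff_ne_zero.1 (one_le_label n) hn
    rw [inner_projCoeff, Finset.sum_insert h0, eval_label_smul_eq_sum h0 fun n hn hnF =>
      absurd (Finset.mem_image_of_mem label (Finsupp.mem_support_iff.2 hn)) hnF]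
    simp only [b, if_pos, zero_mul, zero_add]
    refine Finset.sum_congr rfl fun s hs => ?_
    rw [if_neg (ne_of_mem_of_not_mem hs h0)]

end DiagonalOperators

/-! ### Rapid block sequences -/

section RapidBlocks

/-- Flat vectors supported on `[N, ∞)`. -/
structure IsFlatBlock (C : ℝ) (N : ℕ) (x : FinVec) : Prop extends IsFlat C N x where
  le_of_ne_zero : ∀ n, x n ≠ 0 → N ≤ n

/-- Averages of `x` over windows of `n_w` consecutive indices, normalized so that averages of weight
`m_w` can act on them by a constant. -/
def windowVector (x : ℕ → FinVec) (w s : ℕ) : FinVec :=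
  ((weight w : ℝ) / arity w) • ∑ l ∈ Finset.Ico s (s + arity w), x l

namespace IsFlatBlock

variable {C D : ℝ} {N M : ℕ} {x y : FinVec}

lemma mono (h : IsFlatBlock C N x) (hD : C ≤ D) : IsFlatBlock D N x :=
  ⟨h.toIsFlat.mono hD, h.le_of_ne_zero⟩

lemma anti (h : IsFlatBlock C N x) (hM : M ≤ N) : IsFlatBlock C M x :=
  ⟨h.toIsFlat.anti hM, fun n hn => hM.trans (h.le_of_ne_zero n hn)⟩

lemma add (h : IsFlatBlock C N x) (h' : IsFlatBlock D N y) : IsFlatBlock (C + D) N (x + y) where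
  toIsFlat := h.toIsFlat.add h'.toIsFlat
  le_of_ne_zero n hn := by
    by_cases hx : x n = 0
    · exact h'.le_of_ne_zero n fun hy => hn (by simp [hx, hy])
    · exact h.le_of_ne_zero n hx

lemma smul (h : IsFlatBlock C N x) (c : ℝ) : IsFlatBlock (|c| * C) N (c • x) :=
  ⟨h.toIsFlat.smul c, fun n hn => h.le_of_ne_zero n (right_ne_zero_of_mul hn)⟩

lemma neg (h : IsFlatBlock C N x) : IsFlatBlock C N (-x) := by
  simpa using h.smul (-1)

end IsFlatBlock

/-- The threshold `N` lies beyond the vector `x`, whose own threshold is `N'`: beyond its support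
and beyond the weights of the functionals that act on it substantially. -/
structure RapidlyPrecedes (C : ℝ) (N' : ℕ) (x : FinVec) (N : ℕ) : Prop where
  lt : N' < N
  lt_of_ne_zero : ∀ n, x n ≠ 0 → n < N
  abs_pairing_le : ∀ i ≥ N, ∀ f, HasWeight (some i) f → |pairing f x| ≤ C / weight N'

lemma eventually_forall_ne_zero_lt {R : Type*} [Zero R] (v : ℕ →₀ R) :
    ∀ᶠ N in atTop, ∀ n, v n ≠ 0 → n < N := by
  obtain ⟨N, hN⟩ := exists_forall_ne_zero_lt v
  filter_upwards [eventually_ge_atTop N] with M hM n hn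
  exact (hN n hn).trans_le hM

lemma eventually_rapidlyPrecedes {C : ℝ} (hC : 0 < C) (N' : ℕ) (x : FinVec) :
    ∀ᶠ N in atTop, RapidlyPrecedes C N' x N := by
  have hc : 0 < C / weight N' := div_pos hC (cast_weight_pos N')
  obtain ⟨N₀, hN₀⟩ := exists_nat_ge (l1Norm x / (C / weight N'))
  filter_upwards [eventually_gt_atTop N', eventually_forall_ne_zero_lt x,
    eventually_ge_atTop N₀] with N hN hx hN'
  refine ⟨hN, hx, fun i hi f hf => (hf.abs_pairing_le_l1Norm_div x).trans ?_⟩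
  have hi' : (N₀ : ℝ) ≤ weight i := by exact_mod_cast (hN'.trans hi).trans (le_weight i)
  exact (div_le_comm₀ (cast_weight_pos i) hc).2 (hN₀.trans hi')

/-- Flat blocks, each rapidly preceding the later ones. -/
structure IsRapidBlockSequence (C : ℝ) (N : ℕ → ℕ) (x : ℕ → FinVec) : Prop where
  isFlatBlock : ∀ k, IsFlatBlock C (N k) (x k)
  rapidlyPrecedes : ∀ k l, k < l → RapidlyPrecedes C (N k) (x k) (N l)

namespace IsRapidBlockSequence

variable {C : ℝ} {N : ℕ → ℕ} {x : ℕ → FinVec}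

lemma strictMono (h : IsRapidBlockSequence C N x) : StrictMono N :=
  fun k l hkl => (h.rapidlyPrecedes k l hkl).lt

lemma nonneg (h : IsRapidBlockSequence C N x) : 0 ≤ C := (h.isFlatBlock 0).nonneg

lemma isSuccessiveOn (h : IsRapidBlockSequence C N x) (s : Set ℕ) : IsSuccessiveOn s x :=
  fun k _ l _ hkl a b ha hb =>
    ((h.rapidlyPrecedes k l hkl).lt_of_ne_zero a ha).trans_le ((h.isFlatBlock l).le_of_ne_zero b hb)

lemma isExact_windowVector (h : IsRapidBlockSequence C N x) {w s : ℕ} (hw : 1 ≤ w) (hs : w < s) :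
    IsExact (3 * C) w (windowVector x w s) := by
  have hrapid : IsRapidlyIncreasing C (Finset.Ico s (s + arity w)) N x :=
    ⟨fun l _ => (h.isFlatBlock l).toIsFlat,
      fun l _ l' _ hll' => (h.rapidlyPrecedes l l' hll').abs_pairing_le⟩
  refine hrapid.isExact_average (h.isSuccessiveOn _) h.nonneg hw (by simp) fun l hl => ?_
  exact (hs.trans_le (Finset.mem_Ico.1 hl).1).trans_le h.strictMono.le_apply

end IsRapidBlockSequence

lemma exists_isRapidBlockSequence_of_frequently {C : ℝ} (hC : 0 < C) {q : FinVec → Prop}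
    (h : ∃ᶠ N in atTop, ∃ x, IsFlatBlock C N x ∧ q x) :
    ∃ N x, IsRapidBlockSequence C N x ∧ ∀ k, q (x k) := by
  obtain ⟨u, hu, hr⟩ := exists_seq_of_forall_finset_exists
    (fun a : ℕ × FinVec => IsFlatBlock C a.1 a.2 ∧ q a.2)
    (fun b a => RapidlyPrecedes C b.1 b.2 a.1) fun s _ => by
      have hs : ∀ᶠ N in atTop, ∀ b ∈ s, RapidlyPrecedes C b.1 b.2 N :=
        s.eventually_all.2 fun b _ => eventually_rapidlyPrecedes hC b.1 b.2
      obtain ⟨N, ⟨x, hx⟩, hN⟩ := (h.and_eventually hs).exists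
      exact ⟨(N, x), hx, hN⟩
  exact ⟨fun k => (u k).1, fun k => (u k).2, ⟨fun k => (hu k).1, hr⟩, fun k => (hu k).2⟩

/-- A functional that is bounded below on flat blocks far out would be large on their averages,
which are bounded in norm. -/
theorem eventually_abs_apply_embed_le (L : Space →L[ℝ] ℝ) (C : ℝ) {ε : ℝ} (hε : 0 < ε) :
    ∀ᶠ N in atTop, ∀ x, IsFlatBlock C N x → |L (embed x)| ≤ ε := by
  by_contra hcon
  set D := max C 1
  have hfreq : ∃ᶠ N in atTop, ∃ x, IsFlatBlock D N x ∧ ε < L (embed x) := by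
    refine (not_eventually.1 hcon).mono fun N hN => ?_
    push Not at hN
    obtain ⟨x, hC, hεx⟩ := hN
    have hx : IsFlatBlock D N x := hC.mono (le_max_left C 1)
    rcases lt_abs.1 hεx with hpos | hneg
    · exact ⟨x, hx, hpos⟩
    · exact ⟨-x, hx.neg, by simpa using hneg⟩
  obtain ⟨N, x, hx, hLx⟩ := exists_isRapidBlockSequence_of_frequently
    (lt_max_of_lt_right one_pos) hfreq
  have hbound (w : ℕ) (hw : 1 ≤ w) : weight w * ε ≤ ‖L‖ * (3 * D) := by
    have hexact := hx.isExact_windowVector hw w.lt_succ_self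
    have hM := cast_weight_pos w
    have hn := cast_arity_pos w
    calc weight w * ε = weight w / arity w * ∑ _ ∈ Finset.Ico (w + 1) (w + 1 + arity w), ε := by
          simp; field_simp
      _ ≤ weight w / arity w * ∑ l ∈ Finset.Ico (w + 1) (w + 1 + arity w), L (embed (x l)) := by
          gcongr with l; exact (hLx l).le
      _ = L (embed (windowVector x w (w + 1))) := by
          simp only [windowVector, map_smul, map_sum, smul_eq_mul]
      _ ≤ ‖L‖ * (3 * D) := (le_abs_self _).trans
          (L.le_opNorm_of_le (norm_embed_le hexact.abs_pairing_le))
  obtain ⟨w, hw⟩ := exists_nat_gt (‖L‖ * (3 * D) / ε)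
  have hw' : (w : ℝ) ≤ weight (w + 1) := by exact_mod_cast (w.le_succ).trans (le_weight _)
  rw [div_lt_iff₀ hε] at hw
  nlinarith [hbound (w + 1) (by omega)]

end RapidBlocks

/-! ### Nested averages -/

section Windows

/-- The supports of the `f l` lie in the consecutive intervals `[N l, N (l + 1))`. -/
def IsSupportedIn {R : Type*} [Zero R] (N : ℕ → ℕ) (f : ℕ → ℕ →₀ R) : Prop :=
  ∀ l n, f l n ≠ 0 → N l ≤ n ∧ n < N (l + 1)

lemma IsSupportedIn.lt {R S : Type*} [Zero R] [Zero S] {N : ℕ → ℕ} {f : ℕ → ℕ →₀ R}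
    {g : ℕ → ℕ →₀ S} (hf : IsSupportedIn N f) (hg : IsSupportedIn N g) (hN : Monotone N)
    {l l' : ℕ} (hl : l < l') {a b : ℕ} (ha : f l a ≠ 0) (hb : g l' b ≠ 0) : a < b :=
  (hf l a ha).2.trans_le ((hN hl).trans (hg l' b hb).1)

lemma IsSupportedIn.isSuccessiveOn {R : Type*} [Zero R] {N : ℕ → ℕ} {f : ℕ → ℕ →₀ R}
    (hf : IsSupportedIn N f) (hN : Monotone N) (s : Set ℕ) : IsSuccessiveOn s f :=
  fun _ _ _ _ hll' _ _ ha hb => hf.lt hf hN hll' ha hb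

lemma IsSupportedIn.smul {N : ℕ → ℕ} {f : ℕ → Functional} (hf : IsSupportedIn N f) (μ : ℕ → ℚ) :
    IsSupportedIn N fun l => μ • f l := fun l n hn =>
  hf l n (right_ne_zero_of_mul (a := μ n) (by simpa using hn))

lemma IsRapidBlockSequence.isSupportedIn {C : ℝ} {N : ℕ → ℕ} {x : ℕ → FinVec}
    (h : IsRapidBlockSequence C N x) : IsSupportedIn N x := fun l n hn =>
  ⟨(h.isFlatBlock l).le_of_ne_zero n hn,
    (h.rapidlyPrecedes l (l + 1) l.lt_succ_self).lt_of_ne_zero n hn⟩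

lemma IsSupportedIn.pairing_sum_sum {N : ℕ → ℕ} {f : ℕ → Functional} {x : ℕ → FinVec}
    (hf : IsSupportedIn N f) (hx : IsSupportedIn N x) (hN : Monotone N) (L : Finset ℕ) :
    pairing (∑ l ∈ L, f l) (∑ l ∈ L, x l) = ∑ l ∈ L, pairing (f l) (x l) := by
  rw [pairing_sum_left]
  simp only [map_sum]
  refine Finset.sum_congr rfl fun l hl => Finset.sum_eq_single_of_mem l hl fun l' _ hne => ?_
  refine pairing_eq_zero_of_disjoint (Finset.disjoint_left.2 fun n hfn hxn => ?_)
  rw [Finsupp.mem_support_iff] at hfn hxn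
  rcases lt_or_gt_of_ne hne with hlt | hlt
  · exact lt_irrefl _ (hx.lt hf hN hlt hxn hfn)
  · exact lt_irrefl _ (hf.lt hx hN hlt hfn hxn)

/-- Averages of weight `m_w` of `f` over windows of `n_w` consecutive indices. -/
def windowFunctional (f : ℕ → Functional) (w s : ℕ) : Functional :=
  (weight w : ℚ)⁻¹ • ∑ l ∈ Finset.Ico s (s + arity w), f l

lemma hasWeight_windowFunctional {f : ℕ → Functional} {w : ℕ} (hw : Even w)
    (hf : ∀ l, IsNorming (f l)) (hs : IsSuccessiveOn Set.univ f) (s : ℕ) :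
    HasWeight (some w) (windowFunctional f w s) := by
  obtain ⟨m, rfl⟩ := hw.exists_two_nsmul
  choose o ho using hf
  rw [windowFunctional, Finset.sum_Ico_eq_sum_range, Nat.add_sub_cancel_left, smul_eq_mul]
  exact .even m _ (fun i => f (s + i)) _ le_rfl (fun i _ => ho (s + i))
    fun r _ r' _ hrr' => hs _ trivial _ trivial (by omega)

lemma pairing_smul_windowFunctional {N : ℕ → ℕ} {f : ℕ → Functional} {x : ℕ → FinVec}
    (hf : IsSupportedIn N f) (hx : IsSupportedIn N x) (hN : Monotone N) (μ : ℕ → ℚ) (w s : ℕ) :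
    pairing (μ • windowFunctional f w s) (windowVector x w s) =
      (arity w : ℝ)⁻¹ * ∑ l ∈ Finset.Ico s (s + arity w), pairing (μ • f l) (x l) := by
  have hμ : μ • windowFunctional f w s =
      (weight w : ℚ)⁻¹ • ∑ l ∈ Finset.Ico s (s + arity w), μ • f l := by
    ext n
    simp [windowFunctional, Finset.mul_sum, mul_left_comm]
  have hM := (cast_weight_pos w).ne'
  rw [hμ, windowVector, pairing_smul_left, map_smul, (hf.smul μ).pairing_sum_sum hx hN, smul_eq_mul,
    ← mul_assoc]
  congr 1
  push_cast
  field_simp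

lemma exists_mem_of_windowFunctional_ne_zero {f : ℕ → Functional} {w s n : ℕ}
    (h : windowFunctional f w s n ≠ 0) : ∃ l ∈ Finset.Ico s (s + arity w), f l n ≠ 0 := by
  refine Finset.exists_ne_zero_of_sum_ne_zero (right_ne_zero_of_mul (a := (weight w : ℚ)⁻¹) ?_)
  simpa [windowFunctional, Finsupp.finsetSum_apply] using h

lemma exists_mem_of_windowVector_ne_zero {x : ℕ → FinVec} {w s n : ℕ}
    (h : windowVector x w s n ≠ 0) : ∃ l ∈ Finset.Ico s (s + arity w), x l n ≠ 0 := by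
  refine Finset.exists_ne_zero_of_sum_ne_zero
    (right_ne_zero_of_mul (a := (weight w : ℝ) / arity w) ?_)
  simpa [windowVector, Finsupp.finsetSum_apply] using h

/-- Windows starting at `s k`, one after the other, whose lengths `n_(w k)` are such that the
averages of `f` over them have the weights prescribed by `coding`. -/
structure IsCodedWindows (j : ℕ) (f : ℕ → Functional) (w s : ℕ → ℕ) : Prop where
  eq_coding : ∀ k, w k = coding j (history (fun i => windowFunctional f (w i) (s i)) 0 k)
  lt_start : ∀ k, w k < s k
  add_arity_le : ∀ k, s k + arity (w k) ≤ s (k + 1)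

lemma exists_isCodedWindows (j : ℕ) (f : ℕ → Functional) : ∃ w s, IsCodedWindows j f w s := by
  let next (st : List (Functional × ℕ) × ℕ) : List (Functional × ℕ) × ℕ :=
    let w := coding j st.1
    let s := max st.2 (w + 1)
    (st.1 ++ [(windowFunctional f w s, 0)], s + arity w)
  let state (k : ℕ) := next^[k] ([], 0)
  have hstate (k : ℕ) : state (k + 1) = next (state k) := Function.iterate_succ_apply' ..
  let w (k : ℕ) := coding j (state k).1
  let s (k : ℕ) := max (state k).2 (w k + 1)
  refine ⟨w, s, fun k => ?_, fun k => Nat.lt_of_succ_le (le_max_right _ _),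
    fun k => ?_⟩
  · have hhistory : (state k).1 = history (fun i => windowFunctional f (w i) (s i)) 0 k := by
      induction k with
      | zero => rfl
      | succ k ih =>
        rw [hstate, history, List.range_succ, List.map_append, ← history, ← ih]
        rfl
    rw [← hhistory]
  · exact (congrArg Prod.snd (hstate k)).ge.trans (le_max_left _ _)

/-- Averages of weight `m_j` of the averages of `f` over `n_j` windows. -/
def nestedFunctional (f : ℕ → Functional) (j : ℕ) (w s : ℕ → ℕ) : Functional :=
  (weight j : ℚ)⁻¹ • ∑ k ∈ Finset.range (arity j), windowFunctional f (w k) (s k)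

/-- Averages of the averages of `x` over `n_j` windows, normalized so that averages of weight `m_j`
can act on them by a constant. -/
def nestedVector (x : ℕ → FinVec) (j : ℕ) (w s : ℕ → ℕ) : FinVec :=
  ((weight j : ℝ) / arity j) • ∑ k ∈ Finset.range (arity j), windowVector x (w k) (s k)

/-- The index set of the double averages: pairs `⟨k, l⟩` with `l` in the `k`-th window. -/
def windowIndices (j : ℕ) (w s : ℕ → ℕ) : Finset (Σ _ : ℕ, ℕ) :=
  (Finset.range (arity j)).sigma fun k => Finset.Ico (s k) (s k + arity (w k))

lemma eval_nestedFunctional (f : ℕ → Functional) (j : ℕ) (w s : ℕ → ℕ) (z : Space) :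
    eval (nestedFunctional f j w s) z = ∑ i ∈ windowIndices j w s,
      (weight j : ℝ)⁻¹ * (weight (w i.1) : ℝ)⁻¹ * eval (f i.2) z := by
  rw [windowIndices, Finset.sum_sigma]
  simp [nestedFunctional, windowFunctional, Rat.smul_def, Finset.mul_sum, mul_assoc]

lemma embed_nestedVector (x : ℕ → FinVec) (j : ℕ) (w s : ℕ → ℕ) :
    embed (nestedVector x j w s) = ∑ i ∈ windowIndices j w s,
      ((weight j : ℝ) / arity j * (weight (w i.1) / arity (w i.1))) • embed (x i.2) := by
  rw [windowIndices, Finset.sum_sigma]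
  simp [nestedVector, windowVector, Finset.smul_sum, smul_smul]

lemma sum_windowIndices_coeff (j : ℕ) (w s : ℕ → ℕ) :
    ∑ i ∈ windowIndices j w s, (weight j : ℝ)⁻¹ * (weight (w i.1) : ℝ)⁻¹ *
      ((weight j : ℝ) / arity j * (weight (w i.1) / arity (w i.1))) = 1 := by
  have hwindow (k : ℕ) : (arity (w k) : ℝ) * ((weight j : ℝ)⁻¹ * (weight (w k) : ℝ)⁻¹ *
      ((weight j : ℝ) / arity j * (weight (w k) / arity (w k)))) = (arity j : ℝ)⁻¹ := by
    have := cast_weight_pos j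
    have := cast_weight_pos (w k)
    have := cast_arity_pos (w k)
    field_simp
  have := cast_arity_pos j
  simp [windowIndices, Finset.sum_sigma, hwindow, this.ne']

namespace IsCodedWindows

variable {j : ℕ} {f : ℕ → Functional} {w s : ℕ → ℕ}

lemma even (h : IsCodedWindows j f w s) (k : ℕ) : Even (w k) := by
  rw [h.eq_coding]
  exact even_two_mul _

lemma lt (h : IsCodedWindows j f w s) (k : ℕ) : j < w k := by
  rw [h.eq_coding]
  exact lt_coding _ _

lemma lt_of_mem (h : IsCodedWindows j f w s) {k k' l l' : ℕ} (hk : k < k')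
    (hl : l ∈ Finset.Ico (s k) (s k + arity (w k)))
    (hl' : l' ∈ Finset.Ico (s k') (s k' + arity (w k'))) : l < l' := by
  have hs : Monotone s := monotone_nat_of_le_succ fun i =>
    (Nat.le_add_right _ _).trans (h.add_arity_le i)
  have hkk' : s k + arity (w k) ≤ s k' := (h.add_arity_le k).trans (hs hk)
  rw [Finset.mem_Ico] at hl hl'
  omega

lemma isSuccessiveOn_windowFunctional (h : IsCodedWindows j f w s)
    (hf : IsSuccessiveOn Set.univ f) (t : Set ℕ) :
    IsSuccessiveOn t fun k => windowFunctional f (w k) (s k) := by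
  intro k _ k' _ hk a b ha hb
  obtain ⟨l, hl, ha⟩ := exists_mem_of_windowFunctional_ne_zero ha
  obtain ⟨l', hl', hb⟩ := exists_mem_of_windowFunctional_ne_zero hb
  exact hf l trivial l' trivial (h.lt_of_mem hk hl hl') a b ha hb

lemma isSuccessiveOn_windowVector (h : IsCodedWindows j f w s) {x : ℕ → FinVec}
    (hx : IsSuccessiveOn Set.univ x) (t : Set ℕ) :
    IsSuccessiveOn t fun k => windowVector x (w k) (s k) := by
  intro k _ k' _ hk a b ha hb
  obtain ⟨l, hl, ha⟩ := exists_mem_of_windowVector_ne_zero ha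
  obtain ⟨l', hl', hb⟩ := exists_mem_of_windowVector_ne_zero hb
  exact hx l trivial l' trivial (h.lt_of_mem hk hl hl') a b ha hb

lemma isNorming_nestedFunctional {p : ℕ} (h : IsCodedWindows (2 * p + 1) f w s)
    (hf : ∀ l, IsNorming (f l)) (hs : IsSuccessiveOn Set.univ f) :
    IsNorming (nestedFunctional f (2 * p + 1) w s) := by
  rw [nestedFunctional]
  set g := ∑ k ∈ Finset.range (arity (2 * p + 1)), windowFunctional f (w k) (s k)
  obtain ⟨N, hN⟩ := exists_forall_ne_zero_lt g
  have hcut : (Set.Ico 0 N).indicator (1 : ℕ → ℚ) • g = g := by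
    ext n
    by_cases hn : g n = 0
    · simp [hn]
    · simp [hN n hn]
  rw [← hcut]
  exact (HasWeight.odd p _ _ 0 _ (isMultiplier_indicator_Ico 0 N) le_rfl
    (fun k _ => h.eq_coding k ▸ hasWeight_windowFunctional (h.even k) hf hs _)
    (h.isSuccessiveOn_windowFunctional hs _)).isNorming

variable {C η : ℝ} {N : ℕ → ℕ} {x : ℕ → FinVec}

lemma isDependentSequence (h : IsCodedWindows j f w s) (hC : 0 < C)
    (hx : IsRapidBlockSequence C N x) (hf : IsSupportedIn N f)
    (hη : ∀ β, IsLabelMultiplier β → ∀ w > j, ∀ s, |(arity w : ℝ)⁻¹ *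
      ∑ l ∈ Finset.Ico s (s + arity w), pairing ((β ∘ label) • f l) (x l)| ≤ η) :
    IsDependentSequence j (3 * C) (η / (3 * C)) (fun k => windowVector x (w k) (s k))
      (fun k => windowFunctional f (w k) (s k)) 0 where
  isSuccessiveOn := h.isSuccessiveOn_windowVector (hx.isSuccessiveOn _) _
  isExact k _ := by
    rw [← h.eq_coding]
    exact hx.isExact_windowVector (Nat.one_le_of_lt (h.lt k)) (h.lt_start k)
  abs_pairing_le β hβ k _ := by
    rw [pairing_smul_windowFunctional hf hx.isSupportedIn hx.strictMono.monotone,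
      mul_div_cancel₀ _ (by positivity)]
    exact hη β hβ (w k) (h.lt k) (s k)

lemma norm_embed_nestedVector_le {p : ℕ} (h : IsCodedWindows (2 * p + 1) f w s) (hC : 0 < C)
    (hx : IsRapidBlockSequence C N x) (hf : IsSupportedIn N f) (h0 : 0 ≤ η)
    (hη : ∀ β, IsLabelMultiplier β → ∀ w > 2 * p + 1, ∀ s, |(arity w : ℝ)⁻¹ *
      ∑ l ∈ Finset.Ico s (s + arity w), pairing ((β ∘ label) • f l) (x l)| ≤ η) :
    ‖embed (nestedVector x (2 * p + 1) w s)‖ ≤ 18 * C * (weight (2 * p + 1) : ℝ)⁻¹ + η := by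
  refine norm_embed_le fun g hg => ?_
  refine ((h.isDependentSequence hC hx hf hη).abs_pairing_average_le (by positivity) hg).trans_eq ?_
  field_simp
  ring

lemma snd_injOn (h : IsCodedWindows j f w s) :
    Set.InjOn Sigma.snd (windowIndices j w s : Set (Σ _ : ℕ, ℕ)) := by
  rintro ⟨k, l⟩ hk ⟨k', l'⟩ hk' (rfl : l = l')
  simp only [windowIndices, Finset.coe_sigma, Set.mem_sigma_iff, Finset.mem_coe] at hk hk'
  rcases lt_trichotomy k k' with hlt | rfl | hlt
  · exact (lt_irrefl _ (h.lt_of_mem hlt hk.2 hk'.2)).elim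
  · rfl
  · exact (lt_irrefl _ (h.lt_of_mem hlt hk'.2 hk.2)).elim

lemma sum_windowIndices_le (h : IsCodedWindows j f w s) {e : ℕ → ℝ} (he : ∀ n, 0 ≤ e n)
    (hsum : Summable e) : ∑ i ∈ windowIndices j w s, e i.2 ≤ ∑' n, e n := by
  classical
  rw [← Finset.sum_image (f := e) h.snd_injOn]
  exact hsum.sum_le_tsum _ fun n _ => he n

end IsCodedWindows

end Windows

/-! ### Limit pairs -/

section AlmostDiagonal

lemma abs_sum_sum_sub_le {ι : Type*} {F : Finset ι} {a b e : ι → ℝ} {c : ι → ι → ℝ} {ν ε : ℝ}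
    (hε : 0 ≤ ε) (ha : ∀ i ∈ F, 0 ≤ a i ∧ a i ≤ 1) (hb : ∀ i ∈ F, 0 ≤ b i ∧ b i ≤ 1)
    (hab : ∑ i ∈ F, a i * b i = 1) (he : ∀ i ∈ F, 0 ≤ e i) (hsum : ∑ i ∈ F, e i ≤ 2)
    (hdiag : ∀ i ∈ F, |c i i - ν| ≤ ε)
    (hoff : ∀ i ∈ F, ∀ i' ∈ F, i ≠ i' → |c i i'| ≤ ε * (e i * e i')) :
    |∑ i ∈ F, ∑ i' ∈ F, a i * b i' * c i i' - ν| ≤ 5 * ε := by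
  classical
  have hν : ν = ∑ i ∈ F, ∑ i' ∈ F, a i * b i' * if i = i' then ν else 0 := by
    simp only [mul_ite, mul_zero, Finset.sum_ite_eq, Finset.sum_ite_mem, Finset.inter_self]
    rw [← Finset.sum_mul, hab, one_mul]
  have hterm (i) (hi : i ∈ F) (i') (hi' : i' ∈ F) :
      |a i * b i' * (c i i' - if i = i' then ν else 0)| ≤
        (if i = i' then a i * b i' * ε else 0) + ε * (e i * e i') := by
    have h0 : 0 ≤ ε * (e i * e i') := mul_nonneg hε (mul_nonneg (he i hi) (he i' hi'))
    have hab0 : 0 ≤ a i * b i' := mul_nonneg (ha i hi).1 (hb i' hi').1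
    rw [abs_mul, abs_of_nonneg hab0]
    split_ifs with heq
    · subst heq
      exact (mul_le_mul_of_nonneg_left (hdiag i hi) hab0).trans (le_add_of_nonneg_right h0)
    · rw [sub_zero, zero_add]
      exact (mul_le_of_le_one_left (abs_nonneg _) (mul_le_one₀ (ha i hi).2 (hb i' hi').1
        (hb i' hi').2)).trans (hoff i hi i' hi' heq)
  calc |∑ i ∈ F, ∑ i' ∈ F, a i * b i' * c i i' - ν|
      = |∑ i ∈ F, ∑ i' ∈ F, a i * b i' * (c i i' - if i = i' then ν else 0)| := by
        conv_lhs => rw [hν]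
        simp only [mul_sub, Finset.sum_sub_distrib]
    _ ≤ ∑ i ∈ F, ∑ i' ∈ F, ((if i = i' then a i * b i' * ε else 0) + ε * (e i * e i')) :=
        (Finset.abs_sum_le_sum_abs _ _).trans (Finset.sum_le_sum fun i hi =>
          (Finset.abs_sum_le_sum_abs _ _).trans (Finset.sum_le_sum (hterm i hi)))
    _ = (∑ i ∈ F, a i * b i) * ε + ε * (∑ i ∈ F, e i) ^ 2 := by
        simp only [Finset.sum_add_distrib, Finset.sum_ite_eq, Finset.sum_ite_mem,
          Finset.inter_self, ← Finset.mul_sum, ← Finset.sum_mul, sq]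
    _ ≤ 5 * ε := by
        rw [hab]
        nlinarith [pow_le_pow_left₀ (Finset.sum_nonneg he) hsum 2]

variable {E : Type*} [NormedAddCommGroup E] [InnerProductSpace ℝ E] {v : ℕ → E} {B : ℝ}

lemma norm_sum_sq_le_of_abs_inner_le (hB : ∀ n, ‖v n‖ ≤ B)
    (hv : ∀ m n, m < n → |⟪v n, v m⟫| ≤ 1 / ((n : ℝ) + 1)) (F : Finset ℕ) :
    ‖∑ l ∈ F, v l‖ ^ 2 ≤ F.card * (B ^ 2 + 2) := by
  induction F using Finset.induction_on_max with
  | empty => simp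
  | insert m F hm ih =>
    have hmF : m ∉ F := fun h => lt_irrefl _ (hm m h)
    have hcard : (F.card : ℝ) ≤ m := by
      exact_mod_cast (Finset.card_le_card fun l hl => Finset.mem_range.2 (hm l hl)).trans_eq
        (Finset.card_range m)
    have hinner : ⟪v m, ∑ l ∈ F, v l⟫ ≤ 1 := by
      rw [inner_sum]
      refine (Finset.sum_le_card_nsmul F _ _
        fun l hl => (le_abs_self _).trans (hv l m (hm l hl))).trans ?_
      rw [nsmul_eq_mul, mul_one_div]
      exact div_le_one_of_le₀ (by linarith) (by positivity)
    have hsq : ‖v m‖ ^ 2 ≤ B ^ 2 := pow_le_pow_left₀ (norm_nonneg _) (hB m) 2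
    rw [Finset.sum_insert hmF, Finset.card_insert_of_notMem hmF, norm_add_sq_real]
    push_cast
    linarith

lemma inv_arity_mul_norm_sum_le (h0 : 0 ≤ B) (hB : ∀ n, ‖v n‖ ≤ B)
    (hv : ∀ m n, m < n → |⟪v n, v m⟫| ≤ 1 / ((n : ℝ) + 1)) {w : ℕ} {F : Finset ℕ}
    (hF : F.card = arity w) :
    (arity w : ℝ)⁻¹ * ‖∑ l ∈ F, v l‖ ≤ (B + 2) * (weight w : ℝ)⁻¹ := by
  have hn := cast_arity_pos w
  have hM := cast_weight_pos w
  have hMn : (weight w : ℝ) ^ 2 ≤ arity w := by exact_mod_cast weight_sq_le_arity w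
  have hsq : ‖∑ l ∈ F, v l‖ ^ 2 ≤ arity w * (B + 2) ^ 2 := by
    refine (hF ▸ norm_sum_sq_le_of_abs_inner_le hB hv F).trans ?_
    gcongr
    nlinarith
  refine abs_le_of_sq_le_sq' ?_ (by positivity) |>.2
  calc ((arity w : ℝ)⁻¹ * ‖∑ l ∈ F, v l‖) ^ 2
      ≤ ((arity w : ℝ)⁻¹) ^ 2 * (arity w * (B + 2) ^ 2) := by rw [mul_pow]; gcongr
    _ = (B + 2) ^ 2 * (arity w : ℝ)⁻¹ := by field_simp
    _ ≤ (B + 2) ^ 2 * ((weight w : ℝ) ^ 2)⁻¹ := by gcongr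
    _ = ((B + 2) * (weight w : ℝ)⁻¹) ^ 2 := by rw [mul_pow, inv_pow]

end AlmostDiagonal

section LimitPairs

variable {T : Space →L[ℝ] Space} {C D ν ε : ℝ} {y : EllTwo}

/-- There are flat blocks `x` and norming functionals `f` arbitrarily far out such that `f (T x)` is
close to `ν`, while the values of `f` on the projections of `x` are weakly close to `y`. -/
def IsLimitPair (C : ℝ) (T : Space →L[ℝ] Space) (y : EllTwo) (ν : ℝ) : Prop :=
  ∀ (N : ℕ) (S : Finset EllTwo) (ε : ℝ), 0 < ε → ∃ x f, IsFlatBlock C N x ∧ IsNorming f ∧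
    (∀ n, f n ≠ 0 → N ≤ n) ∧ (∀ u ∈ S, |⟪projCoeff f (embed x) - y, u⟫| ≤ ε) ∧
    |eval f (T (embed x)) - ν| ≤ ε

lemma IsLimitPair.mono (h : IsLimitPair C T y ν) (hD : C ≤ D) : IsLimitPair D T y ν :=
  fun N S ε hε => by
    obtain ⟨x, f, hx, hf⟩ := h N S ε hε
    exact ⟨x, f, hx.mono hD, hf⟩

/-- Sequences realizing a limit pair with small interaction between different terms. -/
structure IsLimitSequence (C : ℝ) (T : Space →L[ℝ] Space) (y : EllTwo) (ν ε : ℝ) (N : ℕ → ℕ)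
    (x : ℕ → FinVec) (f : ℕ → Functional) : Prop where
  isRapidBlockSequence : IsRapidBlockSequence C N x
  isNorming : ∀ l, IsNorming (f l)
  isSupportedIn : IsSupportedIn N f
  abs_inner_le : ∀ m n, m < n →
    |⟪projCoeff (f n) (embed (x n)) - y, projCoeff (f m) (embed (x m)) - y⟫| ≤ 1 / ((n : ℝ) + 1)
  abs_eval_sub_le : ∀ l, |eval (f l) (T (embed (x l))) - ν| ≤ ε
  abs_eval_le : ∀ l l', l ≠ l' →
    |eval (f l) (T (embed (x l')))| ≤ ε * ((1 / 2) ^ l * (1 / 2) ^ l')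

/-- The terms of a limit sequence under construction; `rank` bounds the position in the sequence. -/
structure LimitTerm where
  rank : ℕ
  start : ℕ
  vec : FinVec
  functional : Functional

namespace LimitTerm

/-- The deviation of the projection coefficients from their weak limit. -/
def defect (y : EllTwo) (a : LimitTerm) : EllTwo := projCoeff a.functional (embed a.vec) - y

/-- The conditions on single terms of a limit sequence. -/
structure IsAdmissible (C : ℝ) (T : Space →L[ℝ] Space) (ν ε : ℝ) (a : LimitTerm) : Prop where
  isFlatBlock : IsFlatBlock C a.start a.vec
  isNorming : IsNorming a.functional
  le_of_ne_zero : ∀ n, a.functional n ≠ 0 → a.start ≤ n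
  abs_eval_sub_le : |eval a.functional (T (embed a.vec)) - ν| ≤ ε

/-- The conditions on pairs of terms of a limit sequence, `b` being the earlier one. -/
structure Precedes (C : ℝ) (T : Space →L[ℝ] Space) (y : EllTwo) (ε : ℝ) (b a : LimitTerm) :
    Prop where
  rank_lt : b.rank < a.rank
  rapidlyPrecedes : RapidlyPrecedes C b.start b.vec a.start
  lt_of_ne_zero : ∀ n, b.functional n ≠ 0 → n < a.start
  abs_inner_le : |⟪a.defect y, b.defect y⟫| ≤ 1 / ((a.start : ℝ) + 1)
  abs_eval_vec_le : |eval b.functional (T (embed a.vec))| ≤ ε * (1 / 4) ^ a.rank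
  abs_eval_functional_le : |eval a.functional (T (embed b.vec))| ≤ ε * (1 / 4) ^ a.rank

lemma exists_forall_precedes (hC : 0 < C) (hε : 0 < ε) (h : IsLimitPair C T y ν)
    (s : Finset LimitTerm) : ∃ a, IsAdmissible C T ν ε a ∧ ∀ b ∈ s, Precedes C T y ε b a := by
  classical
  set n := s.sup rank + 1
  have hδ : 0 < ε * (1 / 4) ^ n := by positivity
  have hfar : ∀ᶠ N in atTop, ∀ b ∈ s, RapidlyPrecedes C b.start b.vec N ∧
      (∀ n, b.functional n ≠ 0 → n < N) ∧
      (∀ x, IsFlatBlock C N x → |eval b.functional (T (embed x))| ≤ ε * (1 / 4) ^ n) ∧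
      ‖T (embed b.vec) - truncate N (T (embed b.vec))‖ ≤ ε * (1 / 4) ^ n :=
    s.eventually_all.2 fun b _ => (eventually_rapidlyPrecedes hC b.start b.vec).and <|
      (eventually_forall_ne_zero_lt b.functional).and <|
      (eventually_abs_apply_embed_le ((eval b.functional).comp T) C hδ).and <|
      eventually_norm_sub_truncate_le _ hδ
  obtain ⟨N, hN⟩ := hfar.exists
  obtain ⟨x, f, hx, hf, hfN, hS, hν⟩ := h N (s.image (defect y)) (min ε (1 / ((N : ℝ) + 1)))
    (lt_min hε (by positivity))
  refine ⟨⟨n, N, x, f⟩, ⟨hx, hf, hfN, hν.trans (min_le_left _ _)⟩, fun b hb => ?_⟩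
  obtain ⟨hrapid, hsupp, hweak, htail⟩ := hN b hb
  exact ⟨Nat.lt_succ_of_le (Finset.le_sup (f := rank) hb), hrapid, hsupp,
    (hS _ (Finset.mem_image_of_mem _ hb)).trans (min_le_right _ _), hweak x hx,
    (abs_eval_le_norm_sub_truncate hf hfN _).trans htail⟩

end LimitTerm

lemma quarter_pow_le {m n k : ℕ} (hm : m ≤ k) (hn : n ≤ k) :
    ((1 : ℝ) / 4) ^ k ≤ (1 / 2) ^ m * (1 / 2) ^ n := by
  calc ((1 : ℝ) / 4) ^ k = (1 / 2) ^ k * (1 / 2) ^ k := by rw [← mul_pow]; norm_num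
    _ ≤ (1 / 2) ^ m * (1 / 2) ^ n := mul_le_mul
        (pow_le_pow_of_le_one (by norm_num) (by norm_num) hm)
        (pow_le_pow_of_le_one (by norm_num) (by norm_num) hn) (by positivity) (by positivity)

lemma IsLimitPair.exists_isLimitSequence (h : IsLimitPair C T y ν) (hC : 0 < C) (hε : 0 < ε) :
    ∃ N x f, IsLimitSequence C T y ν ε N x f := by
  obtain ⟨u, hu, hr⟩ := exists_seq_of_forall_finset_exists
    (LimitTerm.IsAdmissible C T ν ε) (LimitTerm.Precedes C T y ε)
    fun s _ => LimitTerm.exists_forall_precedes hC hε h s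
  have hrapid : IsRapidBlockSequence C (fun k => (u k).start) (fun k => (u k).vec) :=
    ⟨fun k => (hu k).isFlatBlock, fun k l hkl => (hr k l hkl).rapidlyPrecedes⟩
  have hrank : StrictMono fun k => (u k).rank := fun k l hkl => (hr k l hkl).rank_lt
  have hquarter {m n : ℕ} (hmn : m < n) :
      ε * (1 / 4) ^ (u n).rank ≤ ε * ((1 / 2) ^ m * (1 / 2) ^ n) :=
    mul_le_mul_of_nonneg_left
      (quarter_pow_le (hmn.le.trans hrank.le_apply) hrank.le_apply) hε.le
  refine ⟨_, _, fun k => (u k).functional, hrapid, fun k => (hu k).isNorming, fun k n hn =>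
    ⟨(hu k).le_of_ne_zero n hn, (hr k (k + 1) k.lt_succ_self).lt_of_ne_zero n hn⟩,
    fun m n hmn => (hr m n hmn).abs_inner_le.trans ?_, fun k => (hu k).abs_eval_sub_le,
    fun l l' hne => ?_⟩
  · have hstart : (n : ℝ) ≤ (u n).start := by exact_mod_cast hrapid.strictMono.le_apply
    gcongr
  · rcases lt_or_gt_of_ne hne with hlt | hlt
    · exact (hr l l' hlt).abs_eval_vec_le.trans (hquarter hlt)
    · rw [mul_comm ((1 / 2 : ℝ) ^ l)]
      exact (hr l' l hlt).abs_eval_functional_le.trans (hquarter hlt)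

namespace IsLimitSequence

variable {N : ℕ → ℕ} {x : ℕ → FinVec} {f : ℕ → Functional}

/-- A multiplier acts on the pairs `(f l, x l)` as an element `b` of the unit ball of `ℓ²`, and the
average of the coefficients of these pairs converges to `y` in norm. -/
lemma abs_average_le (h : IsLimitSequence C T y ν ε N x f) {j : ℕ} (β : ℕ → ℚ)
    (hβ : IsLabelMultiplier β) (w : ℕ) (hw : j < w) (s : ℕ) :
    |(arity w : ℝ)⁻¹ * ∑ l ∈ Finset.Ico s (s + arity w), pairing ((β ∘ label) • f l) (x l)| ≤
      ‖y‖ + (2 * C + ‖y‖ + 2) * (weight j : ℝ)⁻¹ := by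
  have hC := h.isRapidBlockSequence.nonneg
  set v : ℕ → EllTwo := fun l => projCoeff (f l) (embed (x l)) - y with hv
  have hnorm (l : ℕ) : ‖v l‖ ≤ 2 * C + ‖y‖ := by
    refine (norm_sub_le _ _).trans (add_le_add_left ?_ _)
    refine ((h.isNorming l).norm_projCoeff_le _).trans ?_
    gcongr
    exact norm_embed_le (h.isRapidBlockSequence.isFlatBlock l).abs_pairing_le
  obtain ⟨b, hb, heval⟩ := hβ.exists_eval_smul_eq_inner
  have hinner : (arity w : ℝ)⁻¹ * ∑ l ∈ Finset.Ico s (s + arity w),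
      pairing ((β ∘ label) • f l) (x l) =
      ⟪b, y + (arity w : ℝ)⁻¹ • ∑ l ∈ Finset.Ico s (s + arity w), v l⟫ := by
    have hn := (cast_arity_pos w).ne'
    simp only [hv, ← eval_embed, heval, inner_add_right, inner_smul_right, Finset.sum_sub_distrib,
      inner_sub_right, inner_sum, Finset.sum_const, Nat.card_Ico, Nat.add_sub_cancel_left,
      ← Nat.cast_smul_eq_nsmul ℝ]
    field_simp
    ring
  rw [hinner]
  refine (abs_real_inner_le_norm _ _).trans ((mul_le_of_le_one_left (norm_nonneg _) hb).trans ?_)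
  refine (norm_add_le _ _).trans (add_le_add_right ?_ _)
  rw [norm_smul, Real.norm_of_nonneg (by positivity)]
  refine (inv_arity_mul_norm_sum_le (by positivity) hnorm h.abs_inner_le (by simp)).trans ?_
  exact mul_le_mul_of_nonneg_left (inv_weight_anti hw.le) (by positivity)

lemma abs_eval_nestedFunctional_sub_le (h : IsLimitSequence C T y ν ε N x f) (hε : 0 ≤ ε) {j : ℕ}
    {w s : ℕ → ℕ} (hw : IsCodedWindows j f w s) :
    |eval (nestedFunctional f j w s) (T (embed (nestedVector x j w s))) - ν| ≤ 5 * ε := by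
  have hratio (k : ℕ) : (0 : ℝ) ≤ weight k / arity k ∧ (weight k : ℝ) / arity k ≤ 1 :=
    ⟨by positivity, div_le_one_of_le₀ (by
      exact_mod_cast (Nat.le_self_pow two_ne_zero _).trans (weight_sq_le_arity k)) (by positivity)⟩
  have hinv (k : ℕ) : (weight k : ℝ)⁻¹ ≤ 1 :=
    inv_le_one_of_one_le₀ (by exact_mod_cast (two_le_weight k).trans' one_le_two)
  have hsum : eval (nestedFunctional f j w s) (T (embed (nestedVector x j w s))) =
      ∑ i ∈ windowIndices j w s, ∑ i' ∈ windowIndices j w s,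
        ((weight j : ℝ)⁻¹ * (weight (w i.1) : ℝ)⁻¹) *
          ((weight j : ℝ) / arity j * (weight (w i'.1) / arity (w i'.1))) *
          eval (f i.2) (T (embed (x i'.2))) := by
    rw [eval_nestedFunctional]
    refine Finset.sum_congr rfl fun i _ => ?_
    simp only [embed_nestedVector, map_sum, map_smul, smul_eq_mul, Finset.mul_sum, mul_assoc]
  rw [hsum]
  refine abs_sum_sum_sub_le (e := fun i => (1 / 2) ^ i.2) hε
    (fun i _ => ⟨by positivity, mul_le_one₀ (hinv _) (by positivity) (hinv _)⟩)
    (fun i _ => ⟨mul_nonneg (hratio _).1 (hratio _).1,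
      mul_le_one₀ (hratio _).2 (hratio _).1 (hratio _).2⟩)
    (sum_windowIndices_coeff j w s) (fun i _ => by positivity)
    ((hw.sum_windowIndices_le (fun n => by positivity) summable_geometric_two).trans_eq
      tsum_geometric_two)
    (fun i _ => h.abs_eval_sub_le i.2) fun i hi i' hi' hne => ?_
  exact h.abs_eval_le _ _ fun heq => hne (hw.snd_injOn hi hi' heq)

lemma abs_le (h : IsLimitSequence C T y ν ε N x f) (hC : 0 < C) (hε : 0 ≤ ε) (p : ℕ) :
    |ν| ≤ ‖T‖ * (18 * C * (weight (2 * p + 1) : ℝ)⁻¹ +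
      (‖y‖ + (2 * C + ‖y‖ + 2) * (weight (2 * p + 1) : ℝ)⁻¹)) + 5 * ε := by
  obtain ⟨w, s, hw⟩ := exists_isCodedWindows (2 * p + 1) f
  have hsucc := h.isSupportedIn.isSuccessiveOn h.isRapidBlockSequence.strictMono.monotone Set.univ
  have hg := hw.isNorming_nestedFunctional h.isNorming hsucc
  have hX := hw.norm_embed_nestedVector_le hC h.isRapidBlockSequence h.isSupportedIn
    (by positivity) h.abs_average_le
  have hν := h.abs_eval_nestedFunctional_sub_le hε hw
  have heval := (hg.abs_eval_le _).trans (T.le_opNorm_of_le hX)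
  rw [abs_sub_comm] at hν
  linarith [abs_sub_abs_le_abs_sub ν
    (eval (nestedFunctional f (2 * p + 1) w s) (T (embed (nestedVector x (2 * p + 1) w s))))]

end IsLimitSequence

lemma tendsto_inv_weight_odd :
    Tendsto (fun p : ℕ => (weight (2 * p + 1) : ℝ)⁻¹) atTop (𝓝 0) := by
  refine tendsto_inv_atTop_zero.comp (tendsto_natCast_atTop_atTop.comp ?_)
  exact tendsto_atTop_mono (fun p => (by omega : p ≤ 2 * p + 1).trans (le_weight _)) tendsto_id

theorem IsLimitPair.abs_le (h : IsLimitPair C T y ν) : |ν| ≤ ‖T‖ * ‖y‖ := by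
  set D := max C 1
  have hD : 0 < D := lt_max_of_lt_right one_pos
  refine le_of_forall_pos_le_add fun ε hε => ?_
  obtain ⟨N, x, f, hseq⟩ := (h.mono (le_max_left C 1)).exists_isLimitSequence hD
    (ε := ε / 5) (by positivity)
  have hlim : Tendsto (fun p : ℕ => ‖T‖ * (18 * D * (weight (2 * p + 1) : ℝ)⁻¹ +
      (‖y‖ + (2 * D + ‖y‖ + 2) * (weight (2 * p + 1) : ℝ)⁻¹)) + 5 * (ε / 5)) atTop
      (𝓝 (‖T‖ * (18 * D * 0 + (‖y‖ + (2 * D + ‖y‖ + 2) * 0)) + 5 * (ε / 5))) :=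
    (((tendsto_inv_weight_odd.const_mul _).add
      ((tendsto_inv_weight_odd.const_mul _).const_add _)).const_mul _).add_const _
  refine (ge_of_tendsto' hlim fun p => hseq.abs_le hD (by positivity) p).trans_eq ?_
  ring

end LimitPairs

/-! ### Decomposition of operators -/

section HilbertSpace

variable {E : Type*} [NormedAddCommGroup E] [InnerProductSpace ℝ E] [CompleteSpace E]

lemma exists_eq_inner_of_abs_snd_le {K : ℝ} (hK : 0 ≤ K) (G : Submodule ℝ (E × ℝ))
    (hG : ∀ z ∈ G, |z.2| ≤ K * ‖z.1‖) : ∃ a : E, ‖a‖ ≤ K ∧ ∀ z ∈ G, z.2 = ⟪a, z.1⟫ := by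
  have hG0 : ∀ z ∈ G, z.1 = 0 → z.2 = 0 := fun z hz hz0 =>
    abs_nonpos_iff.1 ((hG z hz).trans_eq (by rw [hz0, norm_zero, mul_zero]))
  let q := G.toLinearPMap
  let L : q.domain →L[ℝ] ℝ := q.toFun.mkContinuous K fun z =>
    hG _ (Submodule.mem_graph_toLinearPMap hG0 z)
  obtain ⟨g, hgL, hg⟩ := exists_extension_norm_eq q.domain L
  refine ⟨(InnerProductSpace.toDual ℝ E).symm g, ?_, fun z hz => ?_⟩
  · rw [LinearIsometryEquiv.norm_map, hg]
    exact LinearMap.mkContinuous_norm_le _ hK _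
  · rw [← Submodule.toLinearPMap_graph_eq G hG0] at hz
    obtain ⟨d, hd, hqd⟩ := q.mem_graph_iff.1 hz
    rw [InnerProductSpace.toDual_symm_apply, ← hd, hgL, ← hqd]
    rfl

lemma exists_tendsto_inner_of_norm_le {ι : Type*} (U : Ultrafilter ι) {v : ι → E} {B : ℝ}
    (hv : ∀ i, ‖v i‖ ≤ B) : ∃ y, ∀ u, Tendsto (fun i => ⟪v i, u⟫) U (𝓝 ⟪y, u⟫) := by
  let g (i : ι) : WeakDual ℝ E := StrongDual.toWeakDual (InnerProductSpace.toDual ℝ E (v i))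
  have hg (i : ι) : g i ∈ WeakDual.toStrongDual ⁻¹' Metric.closedBall 0 B := by
    simpa [g] using hv i
  obtain ⟨φ, -, hφ⟩ := (WeakDual.isCompact_closedBall (𝕜 := ℝ) (E := E) 0 B).ultrafilter_le_nhds'
    (U.map g) (Ultrafilter.mem_map.2 (univ_mem' hg))
  refine ⟨(InnerProductSpace.toDual ℝ E).symm (WeakDual.toStrongDual φ), fun u => ?_⟩
  rw [InnerProductSpace.toDual_symm_apply]
  exact ((WeakDual.eval_continuous u).tendsto φ).comp hφ

end HilbertSpace

section LimitPairs

variable {T : Space →L[ℝ] Space} {C D ν ω : ℝ} {y z : EllTwo}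

lemma disjoint_support_of_lt_of_le {R S : Type*} [Zero R] [Zero S] {f : ℕ →₀ R} {g : ℕ →₀ S} {N : ℕ}
    (hf : ∀ n, f n ≠ 0 → n < N) (hg : ∀ n, g n ≠ 0 → N ≤ n) : Disjoint f.support g.support :=
  Finset.disjoint_left.2 fun n hfn hgn =>
    (hf n (Finsupp.mem_support_iff.1 hfn)).not_ge (hg n (Finsupp.mem_support_iff.1 hgn))

lemma projCoeff_embed_eq_zero {f : Functional} {x : FinVec} (h : Disjoint f.support x.support) :
    projCoeff f (embed x) = 0 := by
  ext s
  rw [projCoeff_apply, eval_proj, eval_embed]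
  refine pairing_eq_zero_of_disjoint (h.mono_left fun n hn => ?_)
  rw [Finsupp.mem_support_iff] at hn ⊢
  exact right_ne_zero_of_mul hn

lemma projCoeff_rat_smul_add (q : ℚ) (f g : Functional) (x : Space) :
    projCoeff (q • (f + g)) x = (q : ℝ) • (projCoeff f x + projCoeff g x) := by
  ext s
  change _ = (q : ℝ) * (projCoeff f x s + projCoeff g x s)
  rw [projCoeff_apply, eval_smul, map_add, add_apply, projCoeff_apply, projCoeff_apply]

lemma isNorming_smul_add {f g : Functional} (hf : IsNorming f) (hg : IsNorming g)
    (hfg : ∀ a b, f a ≠ 0 → g b ≠ 0 → a < b) : IsNorming ((weight 0 : ℚ)⁻¹ • (f + g)) := by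
  obtain ⟨o, ho⟩ := hf
  obtain ⟨o', ho'⟩ := hg
  have h := HasWeight.even 0 2 (fun i => if i = 0 then f else g) (fun i => if i = 0 then o else o')
    (two_le_arity _) (fun i _ => by split_ifs <;> assumption) (by
      intro r hr r' hr' hrr'
      simp only [Finset.coe_range, Set.mem_Iio] at hr hr'
      obtain ⟨rfl, rfl⟩ : r = 0 ∧ r' = 1 := by omega
      simpa using hfg)
  simpa [Finset.sum_range_succ] using h.isNorming

lemma isLimitPair_zero (T : Space →L[ℝ] Space) : IsLimitPair 0 T 0 0 := fun N S ε hε =>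
  ⟨0, 0, ⟨⟨fun f _ => by simp, fun i _ f _ => by simp⟩, by simp⟩, isNorming_zero, by simp,
    fun u _ => by simp [hε.le], by simp [hε.le]⟩

namespace IsLimitPair

lemma smul (h : IsLimitPair C T y ν) (c : ℝ) : IsLimitPair (|c| * C) T (c • y) (c * ν) := by
  intro N S ε hε
  obtain ⟨x, f, hx, hf, hfN, hy, hν⟩ := h N S (ε / (|c| + 1)) (by positivity)
  have hc : |c| * (ε / (|c| + 1)) ≤ ε := by
    rw [mul_div_assoc', div_le_iff₀ (by positivity)]
    nlinarith [abs_nonneg c]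
  refine ⟨c • x, f, hx.smul c, hf, hfN, fun u hu => ?_, ?_⟩
  · rw [map_smul, map_smul, ← smul_sub, real_inner_smul_left, abs_mul]
    exact (mul_le_mul_of_nonneg_left (hy u hu) (abs_nonneg _)).trans hc
  · rw [map_smul, map_smul, map_smul, smul_eq_mul, ← mul_sub, abs_mul]
    exact (mul_le_mul_of_nonneg_left hν (abs_nonneg _)).trans hc

lemma add (h : IsLimitPair C T y ν) (h' : IsLimitPair D T z ω) :
    IsLimitPair (|(weight 0 : ℝ)| * (C + D)) T (y + z) (ν + ω) := by
  intro N S ε hε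
  have hε4 : 0 < ε / 4 := by positivity
  have hm := (cast_weight_pos 0).ne'
  obtain ⟨x, f, hx, hf, hfN, hy, hν⟩ := h N S (ε / 4) hε4
  obtain ⟨M, ⟨⟨hxM, hfM⟩, hweak, htail⟩, hNM⟩ := (((eventually_forall_ne_zero_lt x).and
    (eventually_forall_ne_zero_lt f)).and ((eventually_abs_apply_embed_le ((eval f).comp T) D
      hε4).and (eventually_norm_sub_truncate_le (T (embed x)) hε4))).and
    (eventually_ge_atTop N) |>.exists
  obtain ⟨x', f', hx', hf', hfM', hz, hω⟩ := h' M S (ε / 4) hε4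
  have hcross : |eval f (T (embed x'))| ≤ ε / 4 := hweak x' hx'
  have hcross' := (abs_eval_le_norm_sub_truncate hf' hfM' (T (embed x))).trans htail
  refine ⟨(weight 0 : ℝ) • (x + x'), (weight 0 : ℚ)⁻¹ • (f + f'), (hx.add (hx'.anti hNM)).smul _,
    isNorming_smul_add hf hf' fun a b ha hb => (hfM a ha).trans_le (hfM' b hb), fun n hn => ?_,
    fun u hu => ?_, ?_⟩
  · by_cases hfn : f n = 0
    · exact hNM.trans (hfM' n fun hfn' => hn (by simp [hfn, hfn']))
    · exact hfN n hfn
  · have hsum : projCoeff ((weight 0 : ℚ)⁻¹ • (f + f')) (embed ((weight 0 : ℝ) • (x + x'))) -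
        (y + z) = (projCoeff f (embed x) - y) + (projCoeff f' (embed x') - z) := by
      simp only [projCoeff_rat_smul_add, map_smul, map_add,
        projCoeff_embed_eq_zero (disjoint_support_of_lt_of_le hfM hx'.le_of_ne_zero),
        projCoeff_embed_eq_zero (disjoint_support_of_lt_of_le hxM hfM').symm]
      push_cast
      rw [← smul_add, smul_smul, mul_inv_cancel₀ hm, one_smul]
      abel
    rw [hsum, inner_add_left]
    linarith [abs_add_le ⟪projCoeff f (embed x) - y, u⟫ ⟪projCoeff f' (embed x') - z, u⟫,
      hy u hu, hz u hu]
  · have hsum : eval ((weight 0 : ℚ)⁻¹ • (f + f')) (T (embed ((weight 0 : ℝ) • (x + x')))) -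
        (ν + ω) = (eval f (T (embed x)) - ν) + (eval f' (T (embed x')) - ω) +
          (eval f (T (embed x')) + eval f' (T (embed x))) := by
      rw [eval_smul]
      simp only [map_smul, map_add, add_apply, smul_eq_mul]
      push_cast
      field_simp
      ring
    rw [hsum, _root_.abs_le]
    rw [_root_.abs_le] at hcross hcross' hν hω
    constructor <;> linarith

lemma of_sub_diagOp {a : EllTwo} (h : IsLimitPair C (T - diagOp a) y ν) :
    IsLimitPair C T y (ν + ⟪a, y⟫) := by
  classical
  intro N S ε hε
  obtain ⟨x, f, hx, hf, hfN, hy, hν⟩ := h N (insert a S) (ε / 2) (by positivity)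
  refine ⟨x, f, hx, hf, hfN, fun u hu =>
    (hy u (Finset.mem_insert_of_mem hu)).trans (by linarith), ?_⟩
  have hsum : eval f (T (embed x)) - (ν + ⟪a, y⟫) =
      (eval f ((T - diagOp a) (embed x)) - ν) + ⟪projCoeff f (embed x) - y, a⟫ := by
    rw [inner_sub_left, real_inner_comm a, real_inner_comm a, ← eval_diagOp, sub_apply, map_sub]
    ring
  rw [hsum]
  linarith [abs_add_le (eval f ((T - diagOp a) (embed x)) - ν) ⟪projCoeff f (embed x) - y, a⟫,
    hy a (Finset.mem_insert_self a S)]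

end IsLimitPair

/-- The limit pairs of `T`, as the graph of a functional on a subspace of `ℓ²`. -/
def limitGraph (T : Space →L[ℝ] Space) : Submodule ℝ (EllTwo × ℝ) where
  carrier := {z | ∃ C, IsLimitPair C T z.1 z.2}
  add_mem' := by rintro _ _ ⟨C, h⟩ ⟨D, h'⟩; exact ⟨_, h.add h'⟩
  zero_mem' := ⟨0, isLimitPair_zero T⟩
  smul_mem' := by rintro c _ ⟨C, h⟩; exact ⟨_, h.smul c⟩

lemma exists_forall_isLimitPair_eq_inner (T : Space →L[ℝ] Space) :
    ∃ a : EllTwo, ‖a‖ ≤ ‖T‖ ∧ ∀ C y ν, IsLimitPair C T y ν → ν = ⟪a, y⟫ := by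
  obtain ⟨a, ha, h⟩ := exists_eq_inner_of_abs_snd_le (norm_nonneg T) (limitGraph T)
    (by rintro z ⟨C, hz⟩; exact hz.abs_le)
  exact ⟨a, ha, fun C y ν hyν => h (y, ν) ⟨C, hyν⟩⟩

/-- Operators that are small on flat blocks far out; they are strictly singular. -/
def VanishesOnFlatBlocks (T : Space →L[ℝ] Space) : Prop :=
  ∀ C δ : ℝ, 0 < δ → ∀ᶠ N in atTop, ∀ x, IsFlatBlock C N x → ‖T (embed x)‖ ≤ δ

lemma eventually_norm_truncate_apply_le (T : Space →L[ℝ] Space) (C : ℝ) {δ : ℝ} (hδ : 0 < δ)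
    (M : ℕ) : ∀ᶠ N in atTop, ∀ x, IsFlatBlock C N x → ‖truncate M (T (embed x))‖ ≤ δ := by
  have hcoord : ∀ᶠ N in atTop, ∀ i ∈ Finset.range M, ∀ x, IsFlatBlock C N x →
      |((coord i).comp T) (embed x)| ≤ δ / (M + 1) :=
    (Finset.range M).eventually_all.2 fun i _ =>
      eventually_abs_apply_embed_le ((coord i).comp T) C (by positivity)
  filter_upwards [hcoord] with N hN x hx
  rw [truncate_eq_sum]
  refine (norm_sum_le_of_le (f := fun i => coord i (T (embed x)) • basis i) _
    (n := fun _ => δ / (M + 1)) fun i hi => ?_).trans ?_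
  · rw [norm_smul, norm_basis, mul_one]
    exact hN i hi x hx
  · rw [Finset.sum_const, Finset.card_range, nsmul_eq_mul, mul_div_assoc',
      div_le_iff₀ (by positivity)]
    nlinarith

lemma IsNorming.exists_eval_eq_eval_sub_truncate {f : Functional} (hf : IsNorming f) (M : ℕ)
    (x : Space) : ∃ g, IsNorming g ∧ (∀ n, g n ≠ 0 → M ≤ n) ∧
      eval g x = eval f (x - truncate M x) := by
  obtain ⟨b, hb⟩ := exists_forall_ne_zero_lt f
  refine ⟨(Set.Ico M b).indicator (1 : ℕ → ℚ) • f, hf.smul (isMultiplier_indicator_Ico M b),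
    fun n hn => ?_, ?_⟩
  · by_contra hnM
    exact hn (by simp [hnM])
  · have hsplit : (Set.Ico M b).indicator (1 : ℕ → ℚ) • f =
        f - (Set.Ico 0 M).indicator (1 : ℕ → ℚ) • f := by
      ext n
      by_cases hn : f n = 0
      · simp [hn]
      · by_cases hM : M ≤ n
        · simp [hM, hM.not_gt, hb n hn]
        · simp [hM, not_le.1 hM]
    rw [map_sub, eval_truncate, hsplit, map_sub, sub_apply]

lemma exists_le_eval_of_not_vanishesOnFlatBlocks (hT : ¬VanishesOnFlatBlocks T) :
    ∃ C δ, 0 < δ ∧ ∀ M, ∃ x f, IsFlatBlock C M x ∧ IsNorming f ∧ (∀ n, f n ≠ 0 → M ≤ n) ∧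
      δ ≤ eval f (T (embed x)) := by
  simp only [VanishesOnFlatBlocks, not_forall] at hT
  obtain ⟨C, δ, hδ, hT⟩ := hT
  refine ⟨C, δ / 4, by positivity, fun M => ?_⟩
  obtain ⟨N, hN, hhead, hNM⟩ := ((not_eventually.1 hT).and_eventually
    ((eventually_norm_truncate_apply_le T C (half_pos hδ) M).and
      (eventually_ge_atTop M))).exists
  push Not at hN
  obtain ⟨x, hx, hδx⟩ := hN
  have htail : δ / 4 < ‖T (embed x) - truncate M (T (embed x))‖ := by
    linarith [norm_sub_norm_le (T (embed x)) (truncate M (T (embed x))), hhead x hx]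
  obtain ⟨f, hf, hδf⟩ := exists_lt_abs_eval htail
  obtain ⟨g, hg, hgM, hgf⟩ := hf.exists_eval_eq_eval_sub_truncate M (T (embed x))
  rw [← hgf] at hδf
  rcases lt_abs.1 hδf with hpos | hneg
  · exact ⟨x, g, hx.anti hNM, hg, hgM, hpos.le⟩
  · exact ⟨-x, g, (hx.anti hNM).neg, hg, hgM, by simpa using hneg.le⟩

lemma isLimitPair_of_tendsto {U : Filter ℕ} [U.NeBot] (hU : U ≤ atTop) {x : ℕ → FinVec}
    {f : ℕ → Functional} (hx : ∀ M, IsFlatBlock C M (x M)) (hf : ∀ M, IsNorming (f M))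
    (hfM : ∀ M n, f M n ≠ 0 → M ≤ n)
    (hy : ∀ u, Tendsto (fun M => ⟪projCoeff (f M) (embed (x M)), u⟫) U (𝓝 ⟪y, u⟫))
    (hν : Tendsto (fun M => eval (f M) (T (embed (x M)))) U (𝓝 ν)) : IsLimitPair C T y ν := by
  intro N S ε hε
  have hinner : ∀ᶠ M in U, ∀ u ∈ S, |⟪projCoeff (f M) (embed (x M)) - y, u⟫| ≤ ε :=
    S.eventually_all.2 fun u _ => (Metric.tendsto_nhds.1 (hy u) ε hε).mono fun M hM => by
      rw [inner_sub_left]; exact hM.le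
  obtain ⟨M, hNM, hM, hMν⟩ := (((eventually_ge_atTop N).filter_mono hU).and
    (hinner.and (Metric.tendsto_nhds.1 hν ε hε))).exists
  exact ⟨x M, f M, (hx M).anti hNM, hf M, fun n hn => hNM.trans (hfM M n hn), hM, hMν.le⟩

theorem vanishesOnFlatBlocks_of_forall_isLimitPair
    (hT : ∀ C y ν, IsLimitPair C T y ν → ν = 0) : VanishesOnFlatBlocks T := by
  by_contra hcon
  obtain ⟨C, δ, hδ, hlarge⟩ := exists_le_eval_of_not_vanishesOnFlatBlocks hcon
  choose x f hx hf hfM hδf using hlarge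
  have hnorm (M : ℕ) : ‖embed (x M)‖ ≤ C := norm_embed_le (hx M).abs_pairing_le
  set U : Ultrafilter ℕ := hyperfilter ℕ
  obtain ⟨y, hy⟩ := exists_tendsto_inner_of_norm_le U (v := fun M => projCoeff (f M) (embed (x M)))
    (B := 2 * C) fun M => ((hf M).norm_projCoeff_le _).trans (by gcongr; exact hnorm M)
  have hbdd (M : ℕ) : eval (f M) (T (embed (x M))) ∈ Set.Icc (-(‖T‖ * C)) (‖T‖ * C) :=
    Set.mem_Icc.2 (abs_le.1 (((hf M).abs_eval_le _).trans (T.le_opNorm_of_le (hnorm M))))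
  obtain ⟨ν, -, hν⟩ := isCompact_Icc.ultrafilter_le_nhds'
    (U.map fun M => eval (f M) (T (embed (x M)))) (Ultrafilter.mem_map.2 (univ_mem' hbdd))
  have hpair : IsLimitPair C T y ν :=
    isLimitPair_of_tendsto Nat.hyperfilter_le_atTop hx hf hfM hy hν
  linarith [ge_of_tendsto' hν hδf, hT C y ν hpair]

theorem exists_vanishesOnFlatBlocks_sub_diagOp (T : Space →L[ℝ] Space) :
    ∃ a : EllTwo, ‖a‖ ≤ ‖T‖ ∧ VanishesOnFlatBlocks (T - diagOp a) := by
  obtain ⟨a, ha, h⟩ := exists_forall_isLimitPair_eq_inner T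
  refine ⟨a, ha, vanishesOnFlatBlocks_of_forall_isLimitPair fun C y ν hpair => ?_⟩
  linarith [h _ _ _ hpair.of_sub_diagOp]

end LimitPairs

/-! ### Strict singularity -/

section BlockAverages

variable {E : Type*} [AddCommGroup E] [Module ℝ E]

/-- The averages of a sequence over the successive windows `[i * n, (i + 1) * n)`. -/
def blockAverage (v : ℕ → E) (n i : ℕ) : E := (n : ℝ)⁻¹ • ∑ l ∈ Finset.range n, v (i * n + l)

lemma blockAverage_one (v : ℕ → E) : blockAverage v 1 = v := by
  ext i
  simp [blockAverage]

lemma sum_range_mul {M : Type*} [AddCommMonoid M] (f : ℕ → M) (k n : ℕ) :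
    ∑ l ∈ Finset.range (k * n), f l =
      ∑ r ∈ Finset.range k, ∑ l ∈ Finset.range n, f (r * n + l) := by
  induction k with
  | zero => simp
  | succ k ih => rw [Nat.succ_mul, Finset.sum_range_add, ih, Finset.sum_range_succ]

lemma blockAverage_blockAverage (v : ℕ → E) (n k : ℕ) :
    blockAverage (blockAverage v n) k = blockAverage v (k * n) := by
  ext i
  simp only [blockAverage, sum_range_mul, ← Finset.smul_sum, smul_smul, Nat.cast_mul, mul_inv,
    add_mul, mul_assoc, add_assoc]

lemma map_blockAverage {F : Type*} [AddCommGroup F] [Module ℝ F] (φ : E →ₗ[ℝ] F) (v : ℕ → E)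
    (n i : ℕ) : φ (blockAverage v n i) = blockAverage (fun l => φ (v l)) n i := by
  simp [blockAverage]

lemma norm_blockAverage_le {E : Type*} [NormedAddCommGroup E] [NormedSpace ℝ E] {v : ℕ → E} {c : ℝ}
    (hv : ∀ l, ‖v l‖ ≤ c) (n i : ℕ) : ‖blockAverage v n i‖ ≤ c := by
  have hc := (norm_nonneg _).trans (hv 0)
  rw [blockAverage, norm_smul, norm_inv, Real.norm_natCast]
  refine inv_mul_le_of_le_mul₀ n.cast_nonneg hc ?_
  simpa using norm_sum_le_of_le (Finset.range n) fun l _ => hv (i * n + l)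

lemma exists_mem_norm_blockAverage_sub_le {E : Type*} [NormedAddCommGroup E] [NormedSpace ℝ E]
    {U : Submodule ℝ E} {v : ℕ → E} {δ : ℝ} (hv : ∀ l, ∃ u ∈ U, ‖v l - u‖ ≤ δ) (n i : ℕ) :
    ∃ u ∈ U, ‖blockAverage v n i - u‖ ≤ δ := by
  choose u huU hu using hv
  refine ⟨blockAverage u n i, U.smul_mem _ (U.sum_mem fun l _ => huU _), ?_⟩
  have hsub : blockAverage v n i - blockAverage u n i = blockAverage (fun l => v l - u l) n i := by
    simp only [blockAverage, Finset.sum_sub_distrib, smul_sub]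
  exact hsub ▸ norm_blockAverage_le hu n i

variable {v : ℕ → FinVec} {F : ℕ → Functional} {n i m : ℕ} {c : ℝ}

lemma exists_ne_zero_of_blockAverage_ne_zero (h : blockAverage v n i m ≠ 0) :
    ∃ l < n, v (i * n + l) m ≠ 0 := by
  contrapose! h
  rw [blockAverage, Finsupp.smul_apply, Finsupp.finsetSum_apply,
    Finset.sum_eq_zero fun l hl => h l (Finset.mem_range.1 hl), smul_zero]

lemma IsSuccessiveOn.blockAverage (hv : IsSuccessiveOn Set.univ v) (n : ℕ) :
    IsSuccessiveOn Set.univ (blockAverage v n) := by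
  intro r _ r' _ hrr' a b ha hb
  obtain ⟨l, hl, hla⟩ := exists_ne_zero_of_blockAverage_ne_zero ha
  obtain ⟨l', -, hlb⟩ := exists_ne_zero_of_blockAverage_ne_zero hb
  refine hv _ trivial _ trivial ?_ a b hla hlb
  calc r * n + l < (r + 1) * n := by rw [add_mul, one_mul]; omega
    _ ≤ r' * n + l' := (Nat.mul_le_mul_right n hrr').trans (Nat.le_add_right _ _)

lemma isFlat_blockAverage {N : ℕ} (hn : arity N * weight N ≤ n) (hv : IsSuccessiveOn Set.univ v)
    (hc : ∀ l, ‖embed (v l)‖ ≤ c) (i : ℕ) : IsFlat (2 * c) N (blockAverage v n i) := by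
  have hn0 : (0 : ℝ) < n := by exact_mod_cast (Nat.mul_pos (arity_pos N) (weight_pos N)).trans_le hn
  have hc0 := (norm_nonneg _).trans (hc 0)
  have hterm (f : Functional) (hf : IsNorming f) (l : ℕ) : |pairing f (v l)| ≤ c :=
    (hf.abs_pairing_le_norm_embed _).trans (hc l)
  have hsum (f : Functional) (hf : IsNorming f) (A : Finset ℕ) :
      |pairing f (∑ l ∈ A, v (i * n + l))| ≤ c * (A.card * 1 + 0) := by
    rw [map_sum, mul_one, add_zero, mul_comm c]
    exact abs_sum_le_card_mul fun l _ => hterm f hf _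
  have hdiv (f : Functional) {b : ℝ}
      (hb : |pairing f (∑ l ∈ Finset.range n, v (i * n + l))| ≤ n * b) :
      |pairing f (blockAverage v n i)| ≤ b := by
    rwa [blockAverage, map_smul, smul_eq_mul, abs_mul, abs_of_pos (inv_pos.2 hn0),
      inv_mul_le_iff₀ hn0]
  refine ⟨fun f hf => hdiv f ((hsum f hf _).trans ?_), fun j hj f hf => hdiv f ?_⟩
  · rw [Finset.card_range]
    nlinarith
  · have harity : (arity j : ℝ) ≤ n * (weight j : ℝ)⁻¹ := by
      rw [← div_eq_mul_inv, le_div_iff₀ (cast_weight_pos j)]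
      exact_mod_cast (Nat.mul_le_mul (arity_mono hj.le) (weight_mono hj.le)).trans hn
    have hsucc : IsSuccessiveOn (Finset.range n) fun l => v (i * n + l) :=
      fun r _ r' _ hlt => hv _ trivial _ trivial (Nat.add_lt_add_left hlt _)
    calc |pairing f (∑ l ∈ Finset.range n, v (i * n + l))|
        ≤ c * arity j + (weight j : ℝ)⁻¹ * (c * ((Finset.range n).card * 1 + arity j * 0)) :=
          hf.abs_pairing_sum_le le_rfl hsucc hc0 zero_le_one le_rfl
            (fun l _ => hterm f hf.isNorming _) fun g hg B _ => hsum g hg B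
      _ ≤ c * (n * (weight j : ℝ)⁻¹) + (weight j : ℝ)⁻¹ * (c * n) := by
          rw [Finset.card_range, mul_one, mul_zero, add_zero]
          gcongr
      _ = n * (2 * c / weight j) := by ring

lemma div_weight_le_norm_embed_blockAverage {j : ℕ} (hn : 0 < n) (hnj : n ≤ arity (2 * j))
    (hF : ∀ l, IsNorming (F l)) (hs : IsSuccessiveOn Set.univ F) (hc : ∀ l, c ≤ pairing (F l) (v l))
    (hFv : ∀ l l', l ≠ l' → pairing (F l) (v l') = 0) (i : ℕ) :
    c / weight (2 * j) ≤ ‖embed (blockAverage v n i)‖ := by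
  choose o ho using hF
  have hW := HasWeight.even j n (fun l => F (i * n + l)) (fun l => o (i * n + l)) hnj
    (fun l _ => ho _) fun r _ r' _ hlt => hs _ trivial _ trivial (Nat.add_lt_add_left hlt _)
  have hn' : (0 : ℝ) < n := Nat.cast_pos.2 hn
  have hdiag (l : ℕ) (hl : l ∈ Finset.range n) :
      pairing (∑ r ∈ Finset.range n, F (i * n + r)) (v (i * n + l)) =
        pairing (F (i * n + l)) (v (i * n + l)) := by
    rw [pairing_sum_left]
    exact Finset.sum_eq_single_of_mem l hl fun r _ hr => hFv _ _ (by omega)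
  have hsum : n * c ≤ ∑ l ∈ Finset.range n, pairing (F (i * n + l)) (v (i * n + l)) := by
    simpa using Finset.card_nsmul_le_sum (Finset.range n) _ c fun l _ => hc (i * n + l)
  refine le_trans ?_ ((le_abs_self _).trans (hW.isNorming.abs_pairing_le_norm_embed _))
  rw [pairing_smul_left, blockAverage, map_smul, map_sum, Finset.sum_congr rfl hdiag, smul_eq_mul,
    div_eq_inv_mul]
  push_cast
  gcongr
  rwa [le_inv_mul_iff₀ hn']

end BlockAverages

section NormedBlocks

/-- A pair consisting of a vector of norm at most `1` at distance at most `δ` from `U` and of a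
functional norming it up to the factor `1/4`, both supported on `[M, ∞)`. -/
structure IsNormedBlock (U : Submodule ℝ Space) (δ : ℝ) (M : ℕ) (p : FinVec × Functional) :
    Prop where
  isNorming : IsNorming p.2
  le_of_ne_zero : ∀ n, p.1 n ≠ 0 ∨ p.2 n ≠ 0 → M ≤ n
  norm_le : ‖embed p.1‖ ≤ 1
  quarter_le : 1 / 4 ≤ pairing p.2 p.1
  exists_mem : ∃ u ∈ U, ‖embed p.1 - u‖ ≤ δ

variable {U : Submodule ℝ Space} {δ ε : ℝ}

lemma exists_mem_ker_ne_zero {V W : Type*} [AddCommGroup V] [Module ℝ V] [AddCommGroup W]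
    [Module ℝ W] [FiniteDimensional ℝ W] {U : Submodule ℝ V} (hU : ¬FiniteDimensional ℝ U)
    (φ : V →ₗ[ℝ] W) : ∃ u ∈ U, u ≠ 0 ∧ φ u = 0 := by
  contrapose! hU
  refine FiniteDimensional.of_injective (φ.comp U.subtype) ?_
  rw [← LinearMap.ker_eq_bot, LinearMap.ker_eq_bot']
  intro u hu
  by_contra hne
  exact hU u u.2 (fun h => hne (Subtype.ext h)) hu

lemma exists_mem_norm_eq_truncate_eq_zero (hU : ¬FiniteDimensional ℝ U) (M : ℕ) {r : ℝ}
    (hr : 0 ≤ r) : ∃ u ∈ U, ‖u‖ = r ∧ truncate M u = 0 := by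
  obtain ⟨u, huU, hu0, hu⟩ := exists_mem_ker_ne_zero hU
    (LinearMap.pi fun i : Fin M => (coord i).toLinearMap)
  refine ⟨(r / ‖u‖) • u, U.smul_mem _ huU, ?_, ?_⟩
  · rw [norm_smul, Real.norm_of_nonneg (by positivity), div_mul_cancel₀ _ (norm_ne_zero_iff.2 hu0)]
  · rw [map_smul, truncate_eq_sum, Finset.sum_eq_zero fun i hi => ?_, smul_zero]
    rw [show coord i u = 0 from congrFun hu ⟨i, Finset.mem_range.1 hi⟩, zero_smul]

lemma exists_norm_embed_sub_le_of_truncate_eq_zero {M : ℕ} {u : Space} (hu : truncate M u = 0)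
    (hε : 0 < ε) : ∃ v, (∀ n, v n ≠ 0 → M ≤ n) ∧ ‖embed v - u‖ ≤ ε := by
  obtain ⟨v, hv⟩ := exists_norm_sub_embed_lt u (half_pos hε)
  refine ⟨v.filter (M ≤ ·), fun n hn => ?_, ?_⟩
  · by_contra hM
    exact hn (Finsupp.filter_apply_neg _ _ hM)
  have hsplit : embed (v.filter (M ≤ ·)) = embed v - truncate M (embed v) := by
    rw [eq_sub_iff_add_eq', truncate_embed_eq_embed_filter, ← map_add]
    simpa only [not_lt] using congrArg embed (v.filter_add_filter_not (· < M))
  calc ‖embed (v.filter (M ≤ ·)) - u‖ = ‖truncate M (u - embed v) - (u - embed v)‖ := by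
        rw [hsplit, map_sub, hu]
        abel_nf
    _ ≤ ‖u - embed v‖ + ‖u - embed v‖ :=
        (norm_sub_le _ _).trans (add_le_add_left (norm_truncate_apply_le _ _) _)
    _ ≤ ε := by linarith

lemma exists_isNormedBlock (hU : ¬FiniteDimensional ℝ U) (hδ : 0 < δ) (M : ℕ) :
    ∃ p, IsNormedBlock U δ M p := by
  obtain ⟨u, huU, hu, huM⟩ := exists_mem_norm_eq_truncate_eq_zero hU M (r := 3 / 4) (by norm_num)
  obtain ⟨v, hvM, hvu⟩ := exists_norm_embed_sub_le_of_truncate_eq_zero huM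
    (lt_min hδ (show (0 : ℝ) < 1 / 8 by norm_num))
  have hv8 : ‖embed v - u‖ ≤ 1 / 8 := hvu.trans (min_le_right _ _)
  have hupper : ‖embed v‖ ≤ 1 := by linarith [norm_sub_norm_le (embed v) u]
  have hlower : 1 / 4 < ‖embed v - truncate M (embed v)‖ := by
    rw [truncate_embed_eq_embed_filter, (Finsupp.filter_eq_zero_iff _ _).2 fun n hnM => ?_,
      map_zero, sub_zero]
    · linarith [norm_sub_norm_le u (embed v), norm_sub_rev u (embed v)]
    · exact not_not.1 fun hn => (hvM n hn).not_gt hnM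
  obtain ⟨f, hf, hfv⟩ := exists_lt_abs_eval hlower
  obtain ⟨g, hg, hgM, hgf⟩ := hf.exists_eval_eq_eval_sub_truncate M (embed v)
  rw [← hgf, eval_embed] at hfv
  have hvδ : ‖embed v - u‖ ≤ δ := hvu.trans (min_le_left _ _)
  rcases lt_abs.1 hfv with hpos | hneg
  · exact ⟨(v, g), hg, fun n hn => hn.elim (hvM n) (hgM n), hupper, hpos.le, u, huU, hvδ⟩
  · refine ⟨(-v, g), hg, fun n hn => hn.elim (fun h => hvM n (by simpa using h)) (hgM n),
      by simpa using hupper, by simpa using hneg.le, -u, U.neg_mem huU, ?_⟩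
    rwa [map_neg, neg_sub_neg, norm_sub_rev]

lemma exists_seq_isNormedBlock (hU : ¬FiniteDimensional ℝ U) (hδ : 0 < δ) (N : ℕ) :
    ∃ (v : ℕ → FinVec) (F : ℕ → Functional), (∀ l, IsNormedBlock U δ N (v l, F l)) ∧
      IsSuccessiveOn Set.univ v ∧ IsSuccessiveOn Set.univ F ∧
      ∀ l l', l ≠ l' → pairing (F l) (v l') = 0 := by
  let r (p q : FinVec × Functional) : Prop :=
    ∀ a b, p.1 a ≠ 0 ∨ p.2 a ≠ 0 → q.1 b ≠ 0 ∨ q.2 b ≠ 0 → a < b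
  obtain ⟨p, hp, hr⟩ := exists_seq_of_forall_finset_exists (IsNormedBlock U δ N) r fun s _ => by
    obtain ⟨M, hM, hNM⟩ := ((s.eventually_all.2 fun p _ => (eventually_forall_ne_zero_lt p.1).and
      (eventually_forall_ne_zero_lt p.2)).and (eventually_ge_atTop N)).exists
    obtain ⟨q, hq⟩ := exists_isNormedBlock hU hδ M
    exact ⟨q, ⟨hq.isNorming, fun n hn => hNM.trans (hq.le_of_ne_zero n hn), hq.norm_le,
      hq.quarter_le, hq.exists_mem⟩, fun p hps a b ha hb =>
        (ha.elim ((hM p hps).1 a) ((hM p hps).2 a)).trans_le (hq.le_of_ne_zero b hb)⟩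
  refine ⟨fun l => (p l).1, fun l => (p l).2, hp,
    fun l _ l' _ hlt a b ha hb => hr l l' hlt a b (.inl ha) (.inl hb),
    fun l _ l' _ hlt a b ha hb => hr l l' hlt a b (.inr ha) (.inr hb), fun l l' hne => ?_⟩
  refine pairing_eq_zero_of_disjoint (Finset.disjoint_left.2 fun n hn hn' => ?_)
  rw [Finsupp.mem_support_iff] at hn hn'
  rcases hne.lt_or_gt with hlt | hlt
  · exact (hr l l' hlt n n (.inr hn) (.inl hn')).false
  · exact (hr l' l hlt n n (.inl hn') (.inr hn)).false

end NormedBlocks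

section StrictlySingular

variable {U : Submodule ℝ Space} {ε : ℝ}

lemma arity_mul_weight_pow_le {i j : ℕ} (h : i < j) :
    (arity i * weight i) ^ (2 ^ (j + 1) + 3) ≤ arity (j + 1) := by
  have hbase : arity i * weight i ≤ (2 * arity j) ^ 2 := by
    nlinarith [arity_mono h.le, weight_sq_le_arity i, two_le_weight i]
  have hexp : 2 * (2 ^ (j + 1) + 3) ≤ 2 ^ (j + 3) := by
    have hpow : 2 ^ 2 ≤ 2 ^ (j + 1) := Nat.pow_le_pow_right two_pos (by omega)
    have hsucc : 2 ^ (j + 3) = 4 * 2 ^ (j + 1) := by ring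
    omega
  calc (arity i * weight i) ^ (2 ^ (j + 1) + 3) ≤ ((2 * arity j) ^ 2) ^ (2 ^ (j + 1) + 3) := by
        gcongr
    _ = (2 * arity j) ^ (2 * (2 ^ (j + 1) + 3)) := (pow_mul _ _ _).symm
    _ ≤ (2 * arity j) ^ 2 ^ (j + 3) :=
        Nat.pow_le_pow_right (Nat.mul_pos two_pos (arity_pos j)) hexp
    _ ≤ arity (j + 1) := Nat.le_mul_of_pos_left _ (pow_pos (weight_pos _) _)

lemma isFlatBlock_smul_blockAverage {v : ℕ → FinVec} {N s k : ℕ} (hk : arity N * weight N ≤ k)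
    (hv : IsSuccessiveOn Set.univ v) (hN : ∀ l n, v l n ≠ 0 → N ≤ n)
    (hs : ∀ i, ‖embed (blockAverage v (k ^ s) i)‖ ≤ (2 ^ s)⁻¹) (i : ℕ) :
    IsFlatBlock 4 N ((2 : ℝ) ^ (s + 1) • blockAverage v (k ^ (s + 1)) i) := by
  have hflat := (isFlat_blockAverage hk (hv.blockAverage (k ^ s)) hs i).smul (2 ^ (s + 1))
  have hconst : |(2 : ℝ) ^ (s + 1)| * (2 * (2 ^ s)⁻¹) = 4 := by
    rw [abs_of_pos (by positivity)]
    field_simp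
    ring
  rw [blockAverage_blockAverage, ← pow_succ', hconst] at hflat
  refine ⟨hflat, fun n hn => ?_⟩
  obtain ⟨l, -, hl⟩ := exists_ne_zero_of_blockAverage_ne_zero (right_ne_zero_of_mul hn)
  exact hN _ n hl

/-- The iterated averages of a normalized block sequence lose at least the factor `1/2` with each
iteration as long as no flat vector of norm `1` shows up, which contradicts their lower bound
`1 / (4 m_j)` after `2 ^ j + 3` iterations. -/
lemma exists_isFlatBlock_near (hU : ¬FiniteDimensional ℝ U) (N : ℕ) (hε : 0 < ε) :
    ∃ x, IsFlatBlock 4 N x ∧ 1 ≤ ‖embed x‖ ∧ ∃ u ∈ U, ‖embed x - u‖ ≤ ε := by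
  set k := arity N * weight N
  set j := N + 1
  set t := 2 ^ (2 * j) + 3 with ht
  obtain ⟨v, F, hvF, hv, hF, hdisj⟩ := exists_seq_isNormedBlock hU
    (show 0 < ε / 2 ^ t by positivity) N
  have hlower : (2 ^ t)⁻¹ < ‖embed (blockAverage v (k ^ t) 0)‖ := by
    have hkt : k ^ t ≤ arity (2 * j) := arity_mul_weight_pow_le (by omega : N < 2 * N + 1)
    refine lt_of_lt_of_le ?_ (div_weight_le_norm_embed_blockAverage
      (pow_pos (Nat.mul_pos (arity_pos N) (weight_pos N)) t) hkt (fun l => (hvF l).isNorming) hF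
      (fun l => (hvF l).quarter_le) hdisj 0)
    have hpow : (2 : ℝ) ^ t = 8 * weight (2 * j) := by
      rw [ht, pow_add, weight]
      push_cast
      ring
    rw [hpow, mul_inv, div_eq_mul_inv]
    exact mul_lt_mul_of_pos_right (by norm_num) (inv_pos.2 (cast_weight_pos _))
  obtain ⟨s, hst, hs, i, hi⟩ : ∃ s < t, (∀ i, ‖embed (blockAverage v (k ^ s) i)‖ ≤ (2 ^ s)⁻¹) ∧
      ∃ i, (2 ^ (s + 1))⁻¹ < ‖embed (blockAverage v (k ^ (s + 1)) i)‖ := by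
    by_contra! hhalf
    have hle : ∀ s ≤ t, ∀ i, ‖embed (blockAverage v (k ^ s) i)‖ ≤ (2 ^ s)⁻¹ := by
      intro s
      induction s with
      | zero => simpa [blockAverage_one] using fun l => (hvF l).norm_le
      | succ s ih => exact fun hst => hhalf s hst (ih (Nat.le_of_succ_le hst))
    exact (hle t le_rfl 0).not_gt hlower
  have hpos : (0 : ℝ) < 2 ^ (s + 1) := by positivity
  obtain ⟨u, hu, hnear⟩ := exists_mem_norm_blockAverage_sub_le
    (fun l => (hvF l).exists_mem) (k ^ (s + 1)) i
  refine ⟨_, isFlatBlock_smul_blockAverage le_rfl hv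
    (fun l n hn => (hvF l).le_of_ne_zero n (.inl hn)) hs i, ?_, _, U.smul_mem (2 ^ (s + 1)) hu, ?_⟩
  · rw [map_smul, norm_smul, Real.norm_of_nonneg hpos.le]
    exact (inv_le_iff_one_le_mul₀' hpos).1 hi.le
  · rw [map_smul, ← smul_sub, norm_smul, Real.norm_of_nonneg hpos.le, map_blockAverage]
    calc _ ≤ 2 ^ t * (ε / 2 ^ t) := by
          gcongr
          · norm_num
          · exact hst
      _ = ε := by field_simp

theorem VanishesOnFlatBlocks.strictlySingular {T : Space →L[ℝ] Space}
    (hT : VanishesOnFlatBlocks T) : StrictlySingular T := by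
  rintro U - hU ⟨c, hc, hTU⟩
  obtain ⟨N, hN⟩ := (hT 4 (c / 4) (by positivity)).exists
  obtain ⟨x, hx, hx1, u, hu, hxu⟩ := exists_isFlatBlock_near hU N
    (show 0 < c / (8 * (‖T‖ + c)) by positivity)
  have hxu' : (‖T‖ + c) * ‖embed x - u‖ ≤ c / 8 := by
    rw [le_div_iff₀ (by positivity)] at hxu
    linarith
  have hTu : ‖T u‖ ≤ ‖T (embed x)‖ + ‖T‖ * ‖embed x - u‖ := by
    have := norm_sub_norm_le (T u) (T (embed x))
    rw [norm_sub_rev, ← map_sub] at this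
    linarith [T.le_opNorm (embed x - u)]
  nlinarith [hN x hx, hTU u hu, norm_sub_norm_le (embed x) u]

end StrictlySingular

/-! ### The diagonal algebra -/

section BoundedBelow

variable {E F ι : Type*} [NormedAddCommGroup E] [NormedSpace ℝ E] [NormedAddCommGroup F]
  [NormedSpace ℝ F] {v : ι → E} {x : E}

lemma not_finiteDimensional_of_linearIndependent [Infinite ι] {U : Submodule ℝ E}
    (hv : LinearIndependent ℝ v) (hU : ∀ i, v i ∈ U) : ¬FiniteDimensional ℝ U := fun _ =>
  have hvU : LinearIndependent ℝ fun i => (⟨v i, hU i⟩ : U) := .of_comp U.subtype hv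
  hvU.finite_of_isNoetherian.false

lemma norm_apply_le_of_mem_closure_span [DecidableEq ι] {f : ι → E →L[ℝ] ℝ}
    (hf : ∀ i x, |f i x| ≤ ‖x‖) (hfv : ∀ i j, f i (v j) = if j = i then 1 else 0)
    {R : E →L[ℝ] F} {r : ι → ℝ} {M : ℝ}
    (hR : ∀ i, ‖R (v i)‖ ≤ r i) (hr : HasSum r M)
    (hx : x ∈ (Submodule.span ℝ (Set.range v)).topologicalClosure) : ‖R x‖ ≤ M * ‖x‖ := by
  refine closure_minimal (fun y hy => ?_) (isClosed_le (f := fun y => ‖R y‖)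
    (g := fun y => M * ‖y‖) (by fun_prop) (by fun_prop)) hx
  obtain ⟨g, rfl⟩ := Finsupp.mem_span_range_iff_exists_finsupp.1 hy
  set y := g.sum fun i a => a • v i
  have hcoeff (i : ι) : |g i| ≤ ‖y‖ := by
    have hfy : f i y = g i := by
      simpa [y, Finsupp.sum, hfv] using Eq.symm
    exact hfy ▸ hf i y
  calc ‖R y‖ ≤ ∑ i ∈ g.support, ‖R (g i • v i)‖ := by
        simpa only [y, Finsupp.sum, map_sum] using norm_sum_le _ _
    _ ≤ ∑ i ∈ g.support, ‖y‖ * r i := by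
        gcongr with i
        rw [map_smul, norm_smul]
        exact mul_le_mul (hcoeff i) (hR i) (norm_nonneg _) (norm_nonneg _)
    _ = ‖y‖ * ∑ i ∈ g.support, r i := (Finset.mul_sum _ _ _).symm
    _ ≤ ‖y‖ * M := by
        gcongr
        exact sum_le_hasSum _ (fun i _ => (norm_nonneg _).trans (hR i)) hr
    _ = M * ‖y‖ := mul_comm _ _

lemma apply_eq_smul_of_mem_closure_span {S : E →L[ℝ] E} {c : ℝ} (hS : ∀ i, S (v i) = c • v i)
    (hx : x ∈ (Submodule.span ℝ (Set.range v)).topologicalClosure) : S x = c • x := by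
  refine Set.EqOn.closure (f := S) (g := (c • ContinuousLinearMap.id ℝ E : E →L[ℝ] E))
    (fun y hy => ?_) (by fun_prop) (by fun_prop) hx
  exact LinearMap.eqOn_span (f := S.toLinearMap) (g := (c • LinearMap.id : E →ₗ[ℝ] E))
    (by rintro _ ⟨i, rfl⟩; simpa using hS i) hy

end BoundedBelow

section FlatBlocks

variable {S T : Space →L[ℝ] Space} {a b : EllTwo}

lemma label_pair (s k : ℕ) : label (Nat.pair s k) = s + 1 := by simp [label]

lemma proj_succ_basis (s n : ℕ) :
    proj (s + 1) (basis n) = if label n = s + 1 then basis n else 0 := by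
  simp only [proj_basis, projMultiplier, Pi.single_apply]
  split_ifs <;> simp

lemma diagOp_basis (a : EllTwo) (n : ℕ) : diagOp a (basis n) = (a 0 + a (label n)) • basis n := by
  obtain ⟨s, hs⟩ := Nat.exists_eq_add_of_le' (one_le_label n)
  have hsum : HasSum (fun t => (a t • proj t) (basis n)) (diagOp a (basis n)) := by
    simpa using (hasSum_diagOp a).mapL (ContinuousLinearMap.apply ℝ Space (basis n))
  rw [hs, hsum.unique (hasSum_sum_of_ne_finset_zero (s := {0, s + 1}) ?_)]
  · simp [proj_zero, proj_succ_basis, hs, add_smul]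
  · rintro (_ | t) ht
    · simp at ht
    · simp [proj_succ_basis, hs, Ne.symm (show t ≠ s by simpa using ht)]

lemma eq_zero_of_forall_zero_add_eq_zero (h : ∀ s, a 0 + a (s + 1) = 0) : a = 0 := by
  have hsq : Summable fun s => a s ^ 2 := by
    simpa [sq] using lp.summable_inner (𝕜 := ℝ) a a
  have h0 : a 0 = 0 := by
    have hlim : Tendsto (fun s => a (s + 1) ^ 2) atTop (𝓝 0) :=
      hsq.tendsto_atTop_zero.comp (tendsto_add_atTop_nat 1)
    have hconst (s : ℕ) : a (s + 1) ^ 2 = a 0 ^ 2 := by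
      rw [← neg_eq_of_add_eq_zero_right (h s), neg_sq]
    simpa only [hconst, tendsto_const_nhds_iff, sq_eq_zero_iff] using hlim
  ext (_ | s)
  · exact h0
  · simpa [h0] using h s

namespace VanishesOnFlatBlocks

lemma zero : VanishesOnFlatBlocks 0 := fun _ _ hδ =>
  Eventually.of_forall fun _ _ _ => by simpa using hδ.le

lemma sub (hS : VanishesOnFlatBlocks S) (hT : VanishesOnFlatBlocks T) :
    VanishesOnFlatBlocks (S - T) := fun C δ hδ => by
  filter_upwards [hS C _ (half_pos hδ), hT C _ (half_pos hδ)] with N hSN hTN x hx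
  rw [sub_apply]
  linarith [norm_sub_le (S (embed x)) (T (embed x)), hSN x hx, hTN x hx]

lemma eventually_norm_apply_basis_le (hS : VanishesOnFlatBlocks S) {δ : ℝ} (hδ : 0 < δ) :
    ∀ᶠ n in atTop, ‖S (basis n)‖ ≤ δ := by
  filter_upwards [hS 1 δ hδ] with n hn
  refine hn _ ⟨by simpa only [l1Norm_single] using isFlat_l1Norm (Finsupp.single n 1) n,
    fun k hk => ?_⟩
  exact (Finsupp.single_apply_ne_zero.1 hk).1.ge

lemma eventually_norm_apply_basis_pair_le (hS : VanishesOnFlatBlocks S) (s : ℕ) {δ : ℝ}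
    (hδ : 0 < δ) : ∀ᶠ k in atTop, ‖S (basis (Nat.pair s k))‖ ≤ δ :=
  (tendsto_atTop_mono (Nat.right_le_pair s) tendsto_id).eventually
    (hS.eventually_norm_apply_basis_le hδ)

lemma eq_zero_of_diagOp (h : VanishesOnFlatBlocks (diagOp a)) : a = 0 := by
  refine eq_zero_of_forall_zero_add_eq_zero fun s => ?_
  by_contra hne
  obtain ⟨k, hk⟩ := (h.eventually_norm_apply_basis_pair_le s (half_pos (abs_pos.2 hne))).exists
  rw [diagOp_basis, label_pair, norm_smul, norm_basis, Real.norm_eq_abs, mul_one] at hk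
  linarith [abs_pos.2 hne]

lemma eq_of_sub_diagOp (ha : VanishesOnFlatBlocks (T - diagOp a))
    (hb : VanishesOnFlatBlocks (T - diagOp b)) : a = b := by
  refine sub_eq_zero.1 (eq_zero_of_diagOp ?_)
  simpa [map_sub] using hb.sub ha

end VanishesOnFlatBlocks

lemma linearIndependent_basis : LinearIndependent ℝ basis :=
  .of_pairwise_dual_eq_zero_one _ (fun n => (coord n).toLinearMap)
    (fun _ _ h => by simp [coord_basis, h.symm]) (fun _ => by simp [coord_basis])

lemma zero_add_eq_zero_of_strictlySingular (hT : StrictlySingular T)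
    (h : VanishesOnFlatBlocks (T - diagOp a)) (s : ℕ) : a 0 + a (s + 1) = 0 := by
  set c := a 0 + a (s + 1)
  by_contra hne
  have hc : 0 < |c| := abs_pos.2 hne
  obtain ⟨φ, hφ, hsmall⟩ := extraction_forall_of_eventually fun k =>
    h.eventually_norm_apply_basis_pair_le s (show 0 < |c| / 4 * (1 / 2) ^ k by positivity)
  have hinj : Function.Injective fun k => Nat.pair s (φ k) := fun i j hij =>
    hφ.injective (Nat.pair_eq_pair.1 hij).2
  set v : ℕ → Space := fun k => basis (Nat.pair s (φ k)) with hv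
  refine hT (Submodule.span ℝ (Set.range v)).topologicalClosure
    (Submodule.isClosed_topologicalClosure _) (not_finiteDimensional_of_linearIndependent
    (linearIndependent_basis.comp _ hinj) fun k => Submodule.le_topologicalClosure _
      (Submodule.subset_span ⟨k, rfl⟩)) ⟨|c| / 2, half_pos hc, fun x hx => ?_⟩
  have hdiag : diagOp a x = c • x := apply_eq_smul_of_mem_closure_span (v := v)
    (fun k => by rw [hv, diagOp_basis, label_pair]) hx
  have hpert : ‖(T - diagOp a) x‖ ≤ |c| / 4 * 2 * ‖x‖ :=
    norm_apply_le_of_mem_closure_span (fun k => abs_coord_le (Nat.pair s (φ k)))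
      (fun i j => by simp only [coord_basis, hinj.eq_iff]) hsmall
      (hasSum_geometric_two.mul_left _) hx
  have htri := norm_sub_le (T x) ((T - diagOp a) x)
  rw [sub_apply, sub_sub_cancel, hdiag, norm_smul, Real.norm_eq_abs, ← hdiag] at htri
  rw [sub_apply] at hpert
  linarith

theorem vanishesOnFlatBlocks_of_strictlySingular (hT : StrictlySingular T) :
    VanishesOnFlatBlocks T := by
  obtain ⟨a, -, ha⟩ := exists_vanishesOnFlatBlocks_sub_diagOp T
  rwa [eq_zero_of_forall_zero_add_eq_zero (zero_add_eq_zero_of_strictlySingular hT ha), map_zero,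
    sub_zero] at ha

lemma norm_le_norm_diagOp_add (hS : VanishesOnFlatBlocks S) : ‖a‖ ≤ ‖diagOp a + S‖ := by
  obtain ⟨b, hb, hvan⟩ := exists_vanishesOnFlatBlocks_sub_diagOp (diagOp a + S)
  rwa [hvan.eq_of_sub_diagOp (b := a) (by simpa using hS)] at hb

end FlatBlocks

section DiagonalAlgebra

lemma norm_le_norm_diagOp (a : EllTwo) : ‖a‖ ≤ ‖diagOp a‖ := by
  simpa using norm_le_norm_diagOp_add (a := a) VanishesOnFlatBlocks.zero

lemma isClosedEmbedding_diagOp : IsClosedEmbedding diagOp :=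
  (AddMonoidHomClass.antilipschitz_of_bound (K := 1) diagOp fun a => by
    simpa using norm_le_norm_diagOp a).isClosedEmbedding diagOp.uniformContinuous

lemma topologicalClosure_span_range_proj :
    (Submodule.span ℝ (Set.range proj)).topologicalClosure =
      LinearMap.range diagOp.toLinearMap := by
  apply le_antisymm
  · refine Submodule.topologicalClosure_minimal _ (Submodule.span_le.2 ?_)
      isClosedEmbedding_diagOp.isClosed_range
    rintro _ ⟨s, rfl⟩
    exact ⟨lp.single 2 s 1, by simp [diagOp_single]⟩
  · rintro _ ⟨a, rfl⟩
    exact mem_closure_of_tendsto (hasSum_diagOp a) (Eventually.of_forall fun F =>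
      Submodule.sum_mem _ fun s _ => Submodule.smul_mem _ _ (Submodule.subset_span ⟨s, rfl⟩))

lemma diagOp_sum_single (F : Finset ℕ) (c : ℕ → ℝ) :
    diagOp (∑ s ∈ F, lp.single 2 s (c s)) = ∑ s ∈ F, c s • proj s := by
  simp only [map_sum, diagOp_single]

lemma sum_single_apply (F : Finset ℕ) (c : ℕ → ℝ) (t : ℕ) :
    (∑ s ∈ F, lp.single 2 s (c s) : EllTwo) t = if t ∈ F then c t else 0 := by
  rw [lp.coeFn_sum, Finset.sum_apply]
  simp [Pi.single_apply]

lemma norm_sum_smul_proj_le {F G : Finset ℕ} {b c : ℕ → ℝ} (hFG : F ⊆ G)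
    (h : ∀ s ∈ F, |b s| ≤ |c s|) : ‖∑ s ∈ F, b s • proj s‖ ≤ 2 * ‖∑ s ∈ G, c s • proj s‖ := by
  rw [← diagOp_sum_single, ← diagOp_sum_single]
  refine (norm_diagOp_le _).trans (mul_le_mul_of_nonneg_left ?_ two_pos.le)
  refine (lp.norm_mono two_ne_zero fun s => ?_).trans (norm_le_norm_diagOp _)
  simp only [sum_single_apply, Real.norm_eq_abs]
  split_ifs with hF hG hG
  exacts [h s hF, absurd (hFG hF) hG, by simp, le_rfl]

lemma linearIndependent_proj : LinearIndependent ℝ proj := by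
  have hsingle : LinearIndependent ℝ fun s => (lp.single 2 s (1 : ℝ) : EllTwo) :=
    .of_pairwise_dual_eq_zero_one _ (fun s => (lp.evalCLM ℝ (fun _ => ℝ) 2 s).toLinearMap)
      (fun _ _ h => by simp [lp.evalCLM, h]) (fun _ => by simp [lp.evalCLM])
  simpa [Function.comp_def, diagOp_single] using
    hsingle.map_injOn diagOp.toLinearMap isClosedEmbedding_diagOp.injective.injOn

theorem existsUnique_tendsto_sum_smul_proj {T : Space →L[ℝ] Space}
    (hT : T ∈ (Submodule.span ℝ (Set.range proj)).topologicalClosure) : ∃! a : ℕ → ℝ,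
      Tendsto (fun N => ∑ s ∈ Finset.range N, a s • proj s) atTop (𝓝 T) := by
  rw [topologicalClosure_span_range_proj] at hT
  obtain ⟨a, rfl⟩ := hT
  refine ⟨a, (hasSum_diagOp a).tendsto_sum_nat, fun b hb => funext fun t => ?_⟩
  simp only [← diagOp_sum_single] at hb
  have hcoord := ((lp.evalCLM ℝ (fun _ => ℝ) 2 t).continuous.tendsto a).comp
    (isClosedEmbedding_diagOp.tendsto_nhds_iff.2 hb)
  refine tendsto_nhds_unique_of_eventuallyEq tendsto_const_nhds hcoord ?_
  filter_upwards [eventually_gt_atTop t] with N hN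
  exact ((sum_single_apply _ b t).trans (if_pos (Finset.mem_range.2 hN))).symm

lemma surjective_inclusionInDoubleDual_of_equiv {H E : Type*} [NormedAddCommGroup H]
    [InnerProductSpace ℝ H] [CompleteSpace H] [NormedAddCommGroup E] [NormedSpace ℝ E]
    (e : H ≃L[ℝ] E) : Function.Surjective (NormedSpace.inclusionInDoubleDual ℝ E) := by
  intro Φ
  obtain ⟨h, hh⟩ := (InnerProductSpace.toDual ℝ H).surjective
    (Φ.comp ((e.symm.toContinuousLinearMap.precomp ℝ).comp (innerSL ℝ)))
  refine ⟨e h, ContinuousLinearMap.ext fun f => ?_⟩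
  obtain ⟨k, hk⟩ := (InnerProductSpace.toDual ℝ H).surjective (f.comp e.toContinuousLinearMap)
  have hf : f = (innerSL ℝ k).comp e.symm.toContinuousLinearMap := by
    ext y
    simpa using (congrArg (fun g => g (e.symm y)) hk).symm
  calc f (e h) = ⟪k, h⟫ := (congrArg (fun g => g h) hk).symm
    _ = ⟪h, k⟫ := real_inner_comm _ _
    _ = Φ ((innerSL ℝ k).comp e.symm.toContinuousLinearMap) := congrArg (fun g => g k) hh
    _ = Φ f := by rw [← hf]

theorem surjective_inclusionInDoubleDual_closure_span_proj :
    Function.Surjective (NormedSpace.inclusionInDoubleDual ℝ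
      (Submodule.span ℝ (Set.range proj)).topologicalClosure) := by
  rw [topologicalClosure_span_range_proj]
  exact surjective_inclusionInDoubleDual_of_equiv (ContinuousLinearMap.equivRange
    isClosedEmbedding_diagOp.injective isClosedEmbedding_diagOp.isClosed_range)

theorem existsUnique_eq_add_strictlySingular (T : Space →L[ℝ] Space) :
    ∃! RS : (Space →L[ℝ] Space) × (Space →L[ℝ] Space),
      RS.1 ∈ (Submodule.span ℝ (Set.range proj)).topologicalClosure ∧
      StrictlySingular RS.2 ∧ T = RS.1 + RS.2 := by
  rw [topologicalClosure_span_range_proj]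
  obtain ⟨a, -, ha⟩ := exists_vanishesOnFlatBlocks_sub_diagOp T
  refine ⟨(diagOp a, T - diagOp a), ⟨⟨a, rfl⟩, ha.strictlySingular, by simp⟩, ?_⟩
  rintro ⟨_, S⟩ ⟨⟨b, rfl⟩, hS, rfl⟩
  have hb := vanishesOnFlatBlocks_of_strictlySingular hS
  obtain rfl := ha.eq_of_sub_diagOp (b := b) (by simpa using hb)
  simp

theorem norm_le_of_eq_add_strictlySingular {T R S : Space →L[ℝ] Space}
    (hR : R ∈ (Submodule.span ℝ (Set.range proj)).topologicalClosure) (hS : StrictlySingular S)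
    (hT : T = R + S) : ‖R‖ ≤ 3 * ‖T‖ ∧ ‖S‖ ≤ 3 * ‖T‖ := by
  rw [topologicalClosure_span_range_proj] at hR
  obtain ⟨a, rfl⟩ := hR
  subst hT
  have ha : ‖a‖ ≤ ‖diagOp a + S‖ :=
    norm_le_norm_diagOp_add (vanishesOnFlatBlocks_of_strictlySingular hS)
  have hdiag := norm_diagOp_le a
  have htri := norm_sub_le (diagOp a + S) (diagOp a)
  rw [add_sub_cancel_left] at htri
  constructor <;> simp only [ContinuousLinearMap.coe_coe] <;> linarith [norm_nonneg a]

end DiagonalAlgebra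

section RangeProj

lemma norm_proj_succ (s : ℕ) : ‖proj (s + 1)‖ = 1 := by
  refine le_antisymm (ContinuousLinearMap.opNorm_le_bound _ zero_le_one fun x => ?_) ?_
  · simpa using norm_proj_apply_le (s + 1) x
  · simpa [proj_succ_basis, label_pair, norm_basis] using
      (proj (s + 1)).le_opNorm (basis (Nat.pair s 0))

theorem proj_comp_proj {s t : ℕ} (hs : 1 ≤ s) (ht : 1 ≤ t) :
    (proj s).comp (proj t) = if s = t then proj s else 0 := by
  obtain ⟨s, rfl⟩ := Nat.exists_eq_add_of_le' hs
  obtain ⟨t, rfl⟩ := Nat.exists_eq_add_of_le' ht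
  refine clm_ext_basis fun n => ?_
  rw [ContinuousLinearMap.comp_apply, proj_succ_basis]
  split_ifs <;> simp_all [proj_succ_basis, eq_comm]

lemma range_proj_succ (s : ℕ) : LinearMap.range (proj (s + 1)).toLinearMap =
    (Submodule.span ℝ (Set.range fun k => basis (Nat.pair s k))).topologicalClosure := by
  apply le_antisymm
  · rintro _ ⟨x, rfl⟩
    refine mem_closure_of_tendsto (((proj (s + 1)).continuous.tendsto x).comp
      (tendsto_truncate x)) (Eventually.of_forall fun N => ?_)
    simp only [Function.comp_apply, truncate_eq_sum, map_sum, map_smul, proj_succ_basis]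
    refine Submodule.sum_mem _ fun n _ => Submodule.smul_mem _ _ ?_
    split_ifs with hn
    · obtain rfl : (Nat.unpair n).1 = s := Nat.succ_injective hn
      exact Submodule.subset_span ⟨(Nat.unpair n).2, by simp⟩
    · exact Submodule.zero_mem _
  · intro x hx
    refine ⟨x, ?_⟩
    simpa using apply_eq_smul_of_mem_closure_span (S := proj (s + 1)) (c := 1)
      (fun k => by simp [proj_succ_basis, label_pair]) hx

lemma not_finiteDimensional_range_proj_succ (s : ℕ) :
    ¬FiniteDimensional ℝ (LinearMap.range (proj (s + 1)).toLinearMap) := by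
  rw [range_proj_succ]
  exact not_finiteDimensional_of_linearIndependent
    (linearIndependent_basis.comp (Nat.pair s) fun _ _ h => (Nat.pair_eq_pair.1 h).2) fun k =>
      Submodule.le_topologicalClosure _ (Submodule.subset_span ⟨k, rfl⟩)

end RangeProj

end MixedTsirelson

open MixedTsirelson

/-- **Main theorem.**  There is an infinite-dimensional Banach space `X` with a Schauder
basis `e` such that `L(X)` decomposes as a topological direct sum `V ⊕ SS(X)`, where
`V` is the closed linear span of a sequence `(I_s)_{s=0}^∞` of projections forming an
unconditional basis of `V`: `I_0 = Id_X`, each `I_s` (`s ≥ 1`) is a norm-one projection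
onto an infinite-dimensional subspace spanned by a subsequence of the basis,
`I_s I_t = δ_{st} I_s` for `s, t ≥ 1` (so `V` as a Banach algebra is the unitisation of
the closed span of `{I_s : s ≥ 1}` with pointwise multiplication), and `V` is
infinite-dimensional and reflexive. -/
theorem banach_space_with_reflexive_quotient_LX_mod_SSX :
    ∃ (X : Type) (_ : NormedAddCommGroup X) (_ : NormedSpace ℝ X) (_ : CompleteSpace X)
      (e : ℕ → X) (I : ℕ → (X →L[ℝ] X)),
      -- X is infinite dimensional
      ¬ FiniteDimensional ℝ X ∧
      -- e is a Schauder basis of X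
      (∀ x : X, ∃! a : ℕ → ℝ,
        Filter.Tendsto (fun N => ∑ i ∈ Finset.range N, a i • e i)
          Filter.atTop (nhds x)) ∧
      -- I 0 is the identity of X
      I 0 = ContinuousLinearMap.id ℝ X ∧
      -- each I s (s ≥ 1) is a norm-one projection onto an infinite-dimensional
      -- subspace of X spanned by a subsequence of the basis
      (∀ s : ℕ, 1 ≤ s →
        ‖I s‖ = 1 ∧ (I s).comp (I s) = I s ∧
        ¬ FiniteDimensional ℝ ↥(LinearMap.range (I s).toLinearMap) ∧
        ∃ φ : ℕ → ℕ, StrictMono φ ∧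
          LinearMap.range (I s).toLinearMap =
            (Submodule.span ℝ (Set.range fun n => e (φ n))).topologicalClosure) ∧
      -- pointwise multiplication: I_s I_t = δ_{st} I_s for s, t ≥ 1
      (∀ s t : ℕ, 1 ≤ s → 1 ≤ t → (I s).comp (I t) = if s = t then I s else 0) ∧
      -- (I_s)_{s=0}^∞ is an unconditional basic sequence in L(X)
      (∀ s, I s ≠ 0) ∧
      (∃ C : ℝ, 0 < C ∧ ∀ (a : ℕ → ℝ) (n N : ℕ), n ≤ N →
        ‖∑ s ∈ Finset.range n, a s • I s‖ ≤ C * ‖∑ s ∈ Finset.range N, a s • I s‖) ∧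
      (∃ C : ℝ, 0 < C ∧ ∀ (a ε : ℕ → ℝ) (N : ℕ), (∀ s, |ε s| ≤ 1) →
        ‖∑ s ∈ Finset.range N, (ε s * a s) • I s‖ ≤
          C * ‖∑ s ∈ Finset.range N, a s • I s‖) ∧
      -- (I_s) is a basis of V := closed span {I_s : s ≥ 0}
      (∀ T ∈ (Submodule.span ℝ (Set.range I)).topologicalClosure,
        ∃! a : ℕ → ℝ,
          Filter.Tendsto (fun N => ∑ s ∈ Finset.range N, a s • I s)
            Filter.atTop (nhds T)) ∧
      -- V is infinite dimensional
      ¬ FiniteDimensional ℝ ↥((Submodule.span ℝ (Set.range I)).topologicalClosure) ∧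
      -- V is reflexive
      Function.Surjective
        ⇑(NormedSpace.inclusionInDoubleDual ℝ
            ↥((Submodule.span ℝ (Set.range I)).topologicalClosure)) ∧
      -- L(X) = V ⊕ SS(X): unique decomposition with bounded projections
      (∀ T : X →L[ℝ] X, ∃! RS : (X →L[ℝ] X) × (X →L[ℝ] X),
        RS.1 ∈ (Submodule.span ℝ (Set.range I)).topologicalClosure ∧
        StrictlySingular RS.2 ∧ T = RS.1 + RS.2) ∧
      (∃ C : ℝ, 0 < C ∧ ∀ T R S : X →L[ℝ] X,
        R ∈ (Submodule.span ℝ (Set.range I)).topologicalClosure →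
        StrictlySingular S → T = R + S → ‖R‖ ≤ C * ‖T‖ ∧ ‖S‖ ≤ C * ‖T‖) := by
  refine ⟨Space, inferInstance, inferInstance, inferInstance, basis, proj,
    fun _ => linearIndependent_basis.finite_of_isNoetherian.false,
    existsUnique_tendsto_sum_smul_basis, proj_zero, ?_, fun s t => proj_comp_proj,
    linearIndependent_proj.ne_zero, ⟨2, two_pos, ?_⟩, ⟨2, two_pos, ?_⟩,
    fun T => existsUnique_tendsto_sum_smul_proj, ?_,
    surjective_inclusionInDoubleDual_closure_span_proj,
    existsUnique_eq_add_strictlySingular,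
    ⟨3, three_pos, fun T R S => norm_le_of_eq_add_strictlySingular⟩⟩
  · intro s hs
    obtain ⟨s, rfl⟩ := Nat.exists_eq_add_of_le' hs
    exact ⟨norm_proj_succ s, by simpa using proj_comp_proj hs hs,
      not_finiteDimensional_range_proj_succ s, Nat.pair s,
      fun _ _ => Nat.pair_lt_pair_right s, range_proj_succ s⟩
  · exact fun a n N hn =>
      norm_sum_smul_proj_le (Finset.range_mono hn) fun _ _ => le_rfl
  · refine fun a ε N hε => norm_sum_smul_proj_le subset_rfl fun s _ => ?_
    rw [abs_mul]
    exact mul_le_of_le_one_left (abs_nonneg _) (hε s)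
  · exact not_finiteDimensional_of_linearIndependent linearIndependent_proj fun s =>
      Submodule.le_topologicalClosure _ (Submodule.subset_span ⟨s, rfl⟩)

end
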